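/- Fix d ∈ ℕ and m_1, …, m_d ∈ ℕ. Let (F⃗_n) be a sequence of random vectors with F⃗_n = (P_{n,1}(N^{(n)}), …, P_{n,d}(N^{(n)})), where N^{(n)} ~ γ_{K_n} and each P_{n,i} lies in the finitely generated Wiener chaos span of degree m_i in K_n variables. If the laws of F⃗_n converge weakly to the standard Gaussian N(0, I_d) on ℝ^d, then for every q ≥ 1 there exist N ∈ ℕ and C > 0 such that E[ (det Γ(F⃗_n))^{−q} ] ≤ C for all n ≥ N, where Γ(F⃗_n) is the d×d Malliavin matrix Γ(F⃗_n)_{ij} := Σ_{k=1}^{K_n} ∂_k P_{n,i}(N^{(n)}) ∂_k P_{n,j}(N^{(n)}). -/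

import Mathlib

/-!
For `A` positive definite, `∫ exp (-sᵀ A s) ds` is a multiple of `(det A)^(-1/2)`, and
`sᵀ Γ(F) s = |∇⟨s, F⟩|²`. By Jensen's inequality and Tonelli's theorem, negative moments of `det Γ`
are therefore controlled by the decay in `s` of the Laplace transforms `E exp (-|∇⟨s, F⟩|²)`,
which is obtained uniformly along the sequence as follows.

Weyl differencing bounds `(E exp (-l |∇F|²))^(2^k)`, for `F` of degree at most `k + 1`, by
`E exp (-c l |∇^(k+1) F [w₁, …, w_k, ·]|²)` with independent Gaussian directions `w₁, …, w_k`.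
If the squared norm of that contraction is close in mean square to a constant, its Laplace
transform decays like any prescribed power of `l⁻¹`: since `A` and `Aᵀ` give `|A z|²` and `|Aᵀ y|²`
the same Laplace transform, one may trade the last free slot for several Gaussian vectors
`U₁, …, U_r`, restrict to the event that all their unit combinations keep the contraction close to
constant, and trade back, which removes one direction and multiplies `l` by `|s|²` with `s` Gaussian
in `ℝ^r`.
For a normalized `F` of the chaos of degree `k + 1`, closeness to a constant is the fourth-moment
phenomenon: the error is bounded by `E F⁴ / 3 - 2 E F² + 1`, which tends to `0` by
hypercontractivity and convergence in law.

Components of different degrees are handled by induction on the highest degree: either the top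
degree part of `⟨s, F⟩` is large and the preceding bound applies, or it is a small perturbation of
the lower degree part.
-/

open MeasureTheory ProbabilityTheory MvPolynomial Filter Topology

noncomputable def gaussPi (ι : Type) [Fintype ι] : Measure (ι → ℝ) :=
  Measure.pi fun _ => gaussianReal 0 1

noncomputable def hermiteProd {K : ℕ} (k : Fin K → ℕ) : MvPolynomial (Fin K) ℝ :=
  ∏ i, Polynomial.aeval (MvPolynomial.X i) (Polynomial.hermite (k i))

noncomputable def chaos (K m : ℕ) : Submodule ℝ (MvPolynomial (Fin K) ℝ) :=
  Submodule.span ℝ {P | ∃ k : Fin K → ℕ, ∑ i, k i = m ∧ P = hermiteProd k}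

noncomputable def sqField {ι : Type} [Fintype ι] (P : MvPolynomial ι ℝ) (x : ι → ℝ) : ℝ :=
  ∑ i, (eval x (pderiv i P)) ^ 2

def TendstoInLaw {E : Type} [MeasurableSpace E] [TopologicalSpace E]
    (μs : ℕ → Measure E) (μ : Measure E) : Prop :=
  ∀ f : BoundedContinuousFunction E ℝ,
    Tendsto (fun n => ∫ x, f x ∂μs n) atTop (𝓝 (∫ x, f x ∂μ))

/-- The Malliavin matrix of a vector of polynomial functionals. -/
noncomputable def malMatrix {K d : ℕ} (P : Fin d → MvPolynomial (Fin K) ℝ) (x : Fin K → ℝ) :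
    Matrix (Fin d) (Fin d) ℝ :=
  Matrix.of fun i j => ∑ k, eval x (pderiv k (P i)) * eval x (pderiv k (P j))

open scoped Matrix ENNReal

section GaussianVectors

variable {ι κ : Type} [Fintype ι] [Fintype κ]

lemma dotProduct_self_nonneg {ι R : Type*} [Fintype ι] [Ring R] [LinearOrder R]
    [IsStrictOrderedRing R] (v : ι → R) : 0 ≤ v ⬝ᵥ v :=
  Finset.sum_nonneg fun i _ => mul_self_nonneg (v i)

instance : IsProbabilityMeasure (gaussPi ι) := by
  unfold gaussPi; infer_instance

/-- The law of a family of independent standard Gaussian vectors of `ℝ^ι`, indexed by `κ`;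
equivalently, of a `κ × ι` matrix with independent standard Gaussian entries. -/
noncomputable def gaussTuple (κ ι : Type) [Fintype κ] [Fintype ι] : Measure (κ → ι → ℝ) :=
  Measure.pi fun _ => gaussPi ι

instance : IsProbabilityMeasure (gaussTuple κ ι) := by
  unfold gaussTuple; infer_instance

lemma integral_cexp_dotProduct_gaussPi (a : ι → ℝ) :
    ∫ z, Complex.exp ((a ⬝ᵥ z : ℝ) * Complex.I) ∂gaussPi ι
      = Complex.exp (-(a ⬝ᵥ a : ℝ) / 2) := by
  have h := charFun_stdGaussian (WithLp.toLp 2 a : EuclideanSpace ℝ ι)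
  rw [← map_pi_eq_stdGaussian, charFun_apply, integral_map (by fun_prop) (by fun_prop)] at h
  simpa [gaussPi, EuclideanSpace.inner_eq_star_dotProduct, ← Complex.ofReal_pow,
    EuclideanSpace.real_norm_sq_eq, dotProduct, ← sq] using h

lemma integral_cos_dotProduct_gaussPi (a : ι → ℝ) :
    ∫ z, Real.cos (a ⬝ᵥ z) ∂gaussPi ι = Real.exp (-(a ⬝ᵥ a) / 2) := by
  have hint : Integrable (fun z => Complex.exp ((a ⬝ᵥ z : ℝ) * Complex.I)) (gaussPi ι) :=
    .of_bound (C := 1) (by fun_prop) (.of_forall fun z => (Complex.norm_exp_ofReal_mul_I _).le)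
  have h := integral_re hint
  simp only [RCLike.re_to_complex, Complex.exp_ofReal_mul_I_re,
    integral_cexp_dotProduct_gaussPi] at h
  rw [h, ← Complex.exp_ofReal_re]
  push_cast
  rfl

lemma map_dotProduct_gaussPi (a : ι → ℝ) :
    (gaussPi ι).map (fun z => a ⬝ᵥ z) = gaussianReal 0 (a ⬝ᵥ a).toNNReal := by
  refine Measure.ext_of_charFun (funext fun t => ?_)
  rw [charFun_gaussianReal, charFun_apply_real, integral_map (by fun_prop) (by fun_prop),
    Real.coe_toNNReal _ (dotProduct_self_nonneg a)]
  have h := integral_cexp_dotProduct_gaussPi (t • a)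
  simp only [smul_dotProduct, dotProduct_smul, smul_eq_mul, Complex.ofReal_mul] at h
  rw [h]
  push_cast
  ring_nf

lemma map_sum_smul_gaussTuple {c : κ → ℝ} (hc : c ⬝ᵥ c = 1) :
    (gaussTuple κ ι).map (fun U => ∑ l, c l • U l) = gaussPi ι := by
  classical
  have hm : Measurable fun U : κ → ι → ℝ => ∑ l, c l • U l := by fun_prop
  have := Measure.isProbabilityMeasure_map (μ := gaussTuple κ ι) hm.aemeasurable
  refine Measure.ext_of_charFunDual (funext fun L => ?_)
  set a : ι → ℝ := fun i => L (Pi.single i 1) with ha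
  have hL (x : ι → ℝ) : L x = a ⬝ᵥ x := by
    conv_lhs => rw [pi_eq_sum_univ' x]
    simp [dotProduct, ha, mul_comm]
  have hprod (U : κ → ι → ℝ) : Complex.exp ((a ⬝ᵥ ∑ l, c l • U l : ℝ) * Complex.I)
      = ∏ l, Complex.exp (((c l • a) ⬝ᵥ U l : ℝ) * Complex.I) := by
    rw [← Complex.exp_sum, ← Finset.sum_mul, ← Complex.ofReal_sum]
    simp [dotProduct_sum]
  rw [charFunDual_apply, charFunDual_apply, integral_map hm.aemeasurable (by fun_prop)]
  simp only [hL, integral_cexp_dotProduct_gaussPi, hprod]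
  rw [gaussTuple, integral_fintype_prod_eq_prod
    (f := fun l (u : ι → ℝ) => Complex.exp (((c l • a) ⬝ᵥ u : ℝ) * Complex.I))]
  simp only [integral_cexp_dotProduct_gaussPi, ← Complex.exp_sum]
  congr 1
  rw [← Finset.sum_div, Finset.sum_neg_distrib, ← Complex.ofReal_sum]
  simp only [smul_dotProduct, dotProduct_smul, smul_eq_mul, ← mul_assoc, ← Finset.sum_mul]
  rw [show ∑ l, c l * c l = 1 from hc, one_mul]

end GaussianVectors

section GaussianMoments

variable {ι : Type} [Fintype ι]

lemma integrable_pow_gaussianReal (v : NNReal) (n : ℕ) :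
    Integrable (fun x : ℝ => x ^ n) (gaussianReal 0 v) :=
  (memLp_id_gaussianReal (μ := 0) (v := v) n).integrable_norm_pow'.mono' (by fun_prop)
    (.of_forall fun x => by simp)

lemma hasDerivAt_gaussianPDFReal {v : NNReal} (hv : v ≠ 0) (x : ℝ) :
    HasDerivAt (gaussianPDFReal 0 v) (-(x / v) * gaussianPDFReal 0 v x) x := by
  have h := ((((hasDerivAt_id x).sub_const 0).pow 2).neg.div_const (2 * (v : ℝ))).exp.const_mul
    (√(2 * Real.pi * v))⁻¹
  refine h.congr_deriv ?_
  simp only [gaussianPDFReal, id, sub_zero, Pi.neg_apply, Pi.pow_apply]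
  field_simp
  ring

lemma integrable_pow_mul_gaussianPDFReal {v : NNReal} (hv : v ≠ 0) (n : ℕ) :
    Integrable fun x : ℝ => x ^ n * gaussianPDFReal 0 v x := by
  have h := integrable_pow_gaussianReal v n
  rw [gaussianReal_of_var_ne_zero _ hv, integrable_withDensity_iff (measurable_gaussianPDF 0 v)
    (by simp [gaussianPDF])] at h
  simpa using h

/- Integration by parts against the density `p`, which satisfies `v p' = -x p`. -/
lemma integral_pow_add_two_gaussianReal (v : NNReal) (n : ℕ) :
    ∫ x : ℝ, x ^ (n + 2) ∂gaussianReal 0 v = v * (n + 1) * ∫ x : ℝ, x ^ n ∂gaussianReal 0 v := by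
  rcases eq_or_ne v 0 with rfl | hv
  · simp
  have hi := integrable_pow_mul_gaussianPDFReal hv
  have hparts := integral_mul_deriv_eq_deriv_mul_of_integrable
    (fun x _ => by simpa using hasDerivAt_pow (n + 1) x)
    (fun x _ => hasDerivAt_gaussianPDFReal hv x)
    (((hi (n + 2)).const_mul (-(v : ℝ)⁻¹)).congr (.of_forall fun x => by simp; ring))
    (((hi n).const_mul ((n : ℝ) + 1)).congr (.of_forall fun x => by simp; ring))
    (hi (n + 1))
  simp only [integral_gaussianReal_eq_integral_smul hv, smul_eq_mul]
  calc ∫ x : ℝ, gaussianPDFReal 0 v x * x ^ (n + 2)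
      = ∫ x : ℝ, -v * (x ^ (n + 1) * (-(x / v) * gaussianPDFReal 0 v x)) := by
        congr with x
        field_simp
        ring
    _ = v * ∫ x : ℝ, (n + 1) * x ^ n * gaussianPDFReal 0 v x := by
        rw [integral_const_mul, hparts]; ring
    _ = v * (n + 1) * ∫ x : ℝ, gaussianPDFReal 0 v x * x ^ n := by
        rw [mul_assoc, ← integral_const_mul (n + 1 : ℝ)]
        congr 2 with x
        ring

lemma integral_sq_dotProduct_gaussPi (a : ι → ℝ) :
    ∫ z, (a ⬝ᵥ z) ^ 2 ∂gaussPi ι = a ⬝ᵥ a := by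
  rw [← integral_map (f := fun x : ℝ => x ^ 2) (by fun_prop) (by fun_prop),
    map_dotProduct_gaussPi, integral_pow_add_two_gaussianReal]
  simp [dotProduct_self_nonneg]

lemma integral_pow_four_dotProduct_gaussPi (a : ι → ℝ) :
    ∫ z, (a ⬝ᵥ z) ^ 4 ∂gaussPi ι = 3 * (a ⬝ᵥ a) ^ 2 := by
  rw [← integral_map (f := fun x : ℝ => x ^ 4) (by fun_prop) (by fun_prop),
    map_dotProduct_gaussPi, integral_pow_add_two_gaussianReal, integral_pow_add_two_gaussianReal]
  simp [dotProduct_self_nonneg]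
  ring

end GaussianMoments

section ExponentialWeights

/-- The weight `e^{-t}` in `ℝ≥0∞`, in which all Laplace transforms are computed. -/
noncomputable def expNeg (t : ℝ) : ℝ≥0∞ := ENNReal.ofReal (Real.exp (-t))

@[fun_prop]
lemma measurable_expNeg : Measurable expNeg := by
  unfold expNeg; fun_prop

lemma antitone_expNeg : Antitone expNeg := fun _ _ h =>
  ENNReal.ofReal_le_ofReal (Real.exp_le_exp.mpr (neg_le_neg h))

lemma expNeg_le_one {t : ℝ} (ht : 0 ≤ t) : expNeg t ≤ 1 :=
  (antitone_expNeg ht).trans_eq (by simp [expNeg])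

lemma ofReal_pow_mul_expNeg_le (q : ℕ) {t : ℝ} (ht : 0 ≤ t) :
    ENNReal.ofReal t ^ q * expNeg t ≤ q.factorial := by
  rw [expNeg, ← ENNReal.ofReal_pow ht, ← ENNReal.ofReal_mul (by positivity),
    ← ENNReal.ofReal_natCast]
  refine ENNReal.ofReal_le_ofReal ?_
  have h := Real.pow_div_factorial_le_exp t ht q
  rwa [Real.exp_neg, ← div_eq_mul_inv, div_le_iff₀ (Real.exp_pos t), mul_comm,
    ← div_le_iff₀ (by positivity)]

lemma lintegral_expNeg {Ω : Type*} [MeasurableSpace Ω] (μ : Measure Ω) [IsFiniteMeasure μ]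
    {X : Ω → ℝ} (hX : Measurable X) (h0 : ∀ ω, 0 ≤ X ω) :
    ∫⁻ ω, expNeg (X ω) ∂μ = ENNReal.ofReal (∫ ω, Real.exp (-X ω) ∂μ) := by
  refine (ofReal_integral_eq_lintegral_ofReal ?_ (.of_forall fun ω => (Real.exp_pos _).le)).symm
  refine .of_bound (C := 1) (by fun_prop) (.of_forall fun ω => ?_)
  simpa using h0 ω

/- The tangent line inequality `e^{-X} ≥ e^{-t} (1 + t - X)`, integrated over `G`. -/
lemma expNeg_le_two_mul_setLIntegral {Ω : Type*} [MeasurableSpace Ω] (μ : Measure Ω)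
    {X : Ω → ℝ} (hX : Measurable X) (h0 : ∀ ω, 0 ≤ X ω) {t : ℝ} (ht : 0 ≤ t)
    (hmean : ∫⁻ ω, ENNReal.ofReal (X ω) ∂μ ≤ ENNReal.ofReal (t / 2)) {G : Set Ω}
    (hG : 2⁻¹ ≤ μ G) :
    expNeg t ≤ 2 * ∫⁻ ω in G, expNeg (X ω) ∂μ := by
  have htangent (ω : Ω) : expNeg t * ENNReal.ofReal (1 + t)
      ≤ expNeg (X ω) + expNeg t * ENNReal.ofReal (X ω) := by
    simp only [expNeg]
    rw [← ENNReal.ofReal_mul (by positivity), ← ENNReal.ofReal_mul (by positivity),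
      ← ENNReal.ofReal_add (by positivity) (mul_nonneg (by positivity) (h0 ω))]
    refine ENNReal.ofReal_le_ofReal ?_
    have h := mul_le_mul_of_nonneg_left (Real.add_one_le_exp (t - X ω)) (Real.exp_pos (-t)).le
    rw [← Real.exp_add, show -t + (t - X ω) = -X ω by ring] at h
    linarith
  have hsum : 2⁻¹ * expNeg t + expNeg t * ENNReal.ofReal (t / 2)
      ≤ ∫⁻ ω in G, expNeg (X ω) ∂μ + expNeg t * ENNReal.ofReal (t / 2) := calc
    _ = expNeg t * ENNReal.ofReal (1 + t) * 2⁻¹ := by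
      rw [ENNReal.ofReal_add zero_le_one ht, ENNReal.ofReal_div_of_pos two_pos]
      simp only [ENNReal.ofReal_one, ENNReal.ofReal_ofNat, div_eq_mul_inv]
      ring
    _ ≤ ∫⁻ _ in G, expNeg t * ENNReal.ofReal (1 + t) ∂μ := by rw [setLIntegral_const]; gcongr
    _ ≤ ∫⁻ ω in G, expNeg (X ω) + expNeg t * ENNReal.ofReal (X ω) ∂μ := lintegral_mono htangent
    _ = ∫⁻ ω in G, expNeg (X ω) ∂μ + expNeg t * ∫⁻ ω in G, ENNReal.ofReal (X ω) ∂μ := by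
      rw [lintegral_add_left (by fun_prop), lintegral_const_mul _ (by fun_prop)]
    _ ≤ _ := by gcongr; exact (setLIntegral_le_lintegral G _).trans hmean
  rw [ENNReal.add_le_add_iff_right (by simp [expNeg, ENNReal.mul_eq_top])] at hsum
  rwa [← ENNReal.inv_mul_le_iff (by simp) (by simp)]

end ExponentialWeights

section GaussianMatrices

variable {ι κ : Type} [Fintype ι] [Fintype κ]

/- Both sides equal `E cos (z ⬝ᵥ (A *ᵥ y))` for independent Gaussian vectors `z` and `y`. -/
lemma integral_exp_vecMul_eq_mulVec (A : Matrix ι κ ℝ) :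
    ∫ z, Real.exp (-((z ᵥ* A) ⬝ᵥ (z ᵥ* A)) / 2) ∂gaussPi ι
      = ∫ y, Real.exp (-((A *ᵥ y) ⬝ᵥ (A *ᵥ y)) / 2) ∂gaussPi κ := by
  simp only [← integral_cos_dotProduct_gaussPi]
  rw [integral_integral_swap]
  · congr! with y z
    rw [← Matrix.dotProduct_mulVec, dotProduct_comm]
  · refine .of_bound (C := 1) (Continuous.aestronglyMeasurable ?_)
      (.of_forall fun _ => Real.abs_cos_le_one _)
    simp only [Function.uncurry_def]
    fun_prop

lemma lintegral_expNeg_vecMul_eq_mulVec (A : Matrix ι κ ℝ) {l : ℝ} (hl : 0 ≤ l) :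
    ∫⁻ z, expNeg (l * ((z ᵥ* A) ⬝ᵥ (z ᵥ* A))) ∂gaussPi ι
      = ∫⁻ y, expNeg (l * ((A *ᵥ y) ⬝ᵥ (A *ᵥ y))) ∂gaussPi κ := by
  have hscale (t : ℝ) : -(√(2 * l) * (√(2 * l) * t)) / 2 = -(l * t) := by
    rw [← mul_assoc, Real.mul_self_sqrt (by positivity)]; ring
  have h := integral_exp_vecMul_eq_mulVec (√(2 * l) • A)
  simp only [Matrix.vecMul_smul, Matrix.smul_mulVec, smul_dotProduct, dotProduct_smul,
    smul_eq_mul, hscale] at h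
  rw [lintegral_expNeg _ (by fun_prop) fun _ => mul_nonneg hl (dotProduct_self_nonneg _),
    lintegral_expNeg _ (by fun_prop) fun _ => mul_nonneg hl (dotProduct_self_nonneg _), h]

lemma lintegral_sum_smul_gaussTuple {c : κ → ℝ} (hc : c ⬝ᵥ c = 1) {f : (ι → ℝ) → ℝ≥0∞}
    (hf : Measurable f) :
    ∫⁻ U, f (∑ l, c l • U l) ∂gaussTuple κ ι = ∫⁻ z, f z ∂gaussPi ι := by
  rw [← map_sum_smul_gaussTuple hc, lintegral_map hf (by fun_prop)]

lemma lintegral_sq_dotProduct_gaussPi (a : ι → ℝ) :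
    ∫⁻ z, ENNReal.ofReal ((z ⬝ᵥ a) ^ 2) ∂gaussPi ι = ENNReal.ofReal (a ⬝ᵥ a) := by
  simp only [dotProduct_comm _ a]
  rw [← integral_sq_dotProduct_gaussPi,
    ofReal_integral_eq_lintegral_ofReal _ (.of_forall fun _ => sq_nonneg _)]
  have h := integrable_pow_gaussianReal (a ⬝ᵥ a).toNNReal 2
  rw [← map_dotProduct_gaussPi] at h
  exact h.comp_aemeasurable (by fun_prop)

lemma lintegral_mulVec_gaussTuple (b : ι → ℝ) :
    ∫⁻ U, ENNReal.ofReal ((Matrix.of U *ᵥ b) ⬝ᵥ (Matrix.of U *ᵥ b)) ∂gaussTuple κ ι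
      = ENNReal.ofReal (Fintype.card κ * (b ⬝ᵥ b)) := by
  have hrow (l : κ) : ∫⁻ U, ENNReal.ofReal ((U l ⬝ᵥ b) ^ 2) ∂gaussTuple κ ι
      = ENNReal.ofReal (b ⬝ᵥ b) := by
    rw [← lintegral_sq_dotProduct_gaussPi]
    exact (measurePreserving_eval (fun _ : κ => gaussPi ι) l).lintegral_comp
      (f := fun z => ENNReal.ofReal ((z ⬝ᵥ b) ^ 2)) (by fun_prop)
  have hnorm (U : κ → ι → ℝ) : (Matrix.of U *ᵥ b) ⬝ᵥ (Matrix.of U *ᵥ b)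
      = ∑ l, (U l ⬝ᵥ b) ^ 2 := by
    simp [dotProduct, Matrix.mulVec, sq]
  simp only [hnorm, ENNReal.ofReal_sum_of_nonneg fun _ _ => sq_nonneg _]
  rw [lintegral_finsetSum _ fun _ _ => by fun_prop]
  simp [hrow, ENNReal.ofReal_mul]

lemma lintegral_expNeg_vecMul_le [Nonempty κ] {μ : Type} [Fintype μ] (B : Matrix ι μ ℝ) {l : ℝ}
    (hl : 0 ≤ l) {G : Set (κ → ι → ℝ)} (hG : 2⁻¹ ≤ gaussTuple κ ι G) :
    ∫⁻ z, expNeg (l * ((z ᵥ* B) ⬝ᵥ (z ᵥ* B))) ∂gaussPi ι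
      ≤ 2 * ∫⁻ U in G, ∫⁻ s, expNeg (l / (2 * Fintype.card κ) *
          (((∑ a, s a • U a) ᵥ* B) ⬝ᵥ ((∑ a, s a • U a) ᵥ* B))) ∂gaussPi κ ∂gaussTuple κ ι := by
  set l' := l / (2 * Fintype.card κ) with hl'
  have hl'0 : 0 ≤ l' := by positivity
  have hjensen (b : ι → ℝ) : expNeg (l * (b ⬝ᵥ b))
      ≤ 2 * ∫⁻ U in G, expNeg (l' * ((Matrix.of U *ᵥ b) ⬝ᵥ (Matrix.of U *ᵥ b)))
          ∂gaussTuple κ ι := by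
    refine expNeg_le_two_mul_setLIntegral _ (by fun_prop)
      (fun _ => mul_nonneg hl'0 (dotProduct_self_nonneg _))
      (mul_nonneg hl (dotProduct_self_nonneg b)) (le_of_eq ?_) hG
    simp only [ENNReal.ofReal_mul hl'0]
    rw [lintegral_const_mul _ (by fun_prop), lintegral_mulVec_gaussTuple,
      ← ENNReal.ofReal_mul hl'0, hl']
    congr 1
    field_simp
  have hdual (U : κ → ι → ℝ) :
      ∫⁻ y, expNeg (l' * ((Matrix.of U *ᵥ (B *ᵥ y)) ⬝ᵥ (Matrix.of U *ᵥ (B *ᵥ y)))) ∂gaussPi μ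
        = ∫⁻ s, expNeg (l' * (((∑ a, s a • U a) ᵥ* B) ⬝ᵥ ((∑ a, s a • U a) ᵥ* B)))
            ∂gaussPi κ := by
    simp only [Matrix.mulVec_mulVec, ← lintegral_expNeg_vecMul_eq_mulVec _ hl'0,
      ← Matrix.vecMul_vecMul, Matrix.vecMul_eq_sum _ (Matrix.of U)]
    rfl
  have hmeas : Measurable fun p : (μ → ℝ) × (κ → ι → ℝ) =>
      expNeg (l' * ((Matrix.of p.2 *ᵥ (B *ᵥ p.1)) ⬝ᵥ (Matrix.of p.2 *ᵥ (B *ᵥ p.1)))) := by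
    fun_prop
  calc ∫⁻ z, expNeg (l * ((z ᵥ* B) ⬝ᵥ (z ᵥ* B))) ∂gaussPi ι
      ≤ ∫⁻ y, 2 * ∫⁻ U in G, expNeg (l' * ((Matrix.of U *ᵥ (B *ᵥ y)) ⬝ᵥ
          (Matrix.of U *ᵥ (B *ᵥ y)))) ∂gaussTuple κ ι ∂gaussPi μ := by
        rw [lintegral_expNeg_vecMul_eq_mulVec _ hl]
        exact lintegral_mono fun y => hjensen (B *ᵥ y)
    _ = _ := by
        rw [lintegral_const_mul _ hmeas.lintegral_prod_right',
          lintegral_lintegral_swap hmeas.aemeasurable]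
        simp only [hdual]

end GaussianMatrices

section NegativeMoments

lemma integrable_abs_rpow_neg_half_gaussianReal :
    Integrable (fun x : ℝ => |x| ^ (-(1 / 2 : ℝ))) (gaussianReal 0 1) := by
  have hpos : IntegrableOn (fun x : ℝ => |x| ^ (-(1 / 2 : ℝ)) * Real.exp (-(1 / 2) * x ^ 2))
      (Set.Ioi 0) :=
    (integrableOn_rpow_mul_exp_neg_mul_sq (s := -(1 / 2)) one_half_pos (by norm_num)).congr_fun
      (fun x hx => by simp only [abs_of_pos (Set.mem_Ioi.mp hx)]) measurableSet_Ioi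
  have hneg : IntegrableOn (fun x : ℝ => |x| ^ (-(1 / 2 : ℝ)) * Real.exp (-(1 / 2) * x ^ 2))
      (Set.Iio 0) := by
    rw [← (Measure.measurePreserving_neg (volume : Measure ℝ)).integrableOn_comp_preimage
      (Homeomorph.neg ℝ).measurableEmbedding]
    simpa [Function.comp_def] using hpos
  have hall := hneg.union (integrableOn_Ici_iff_integrableOn_Ioi (by finiteness) |>.mpr hpos)
  rw [Set.Iio_union_Ici, integrableOn_univ] at hall
  rw [gaussianReal_of_var_ne_zero _ one_ne_zero, integrable_withDensity_iff
    (measurable_gaussianPDF 0 1) (by simp [gaussianPDF])]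
  refine (hall.const_mul (√(2 * Real.pi))⁻¹).congr (.of_forall fun x => ?_)
  simp only [toReal_gaussianPDF, gaussianPDFReal, NNReal.coe_one, sub_zero, mul_one]
  ring_nf

lemma sq_le_dotProduct_self {ι : Type*} [Fintype ι] (s : ι → ℝ) (i : ι) : s i ^ 2 ≤ s ⬝ᵥ s := by
  simpa [dotProduct, sq] using
    Finset.single_le_sum (f := fun j => s j * s j) (fun j _ => mul_self_nonneg _)
      (Finset.mem_univ i)

variable {ι : Type} [Fintype ι]

lemma ae_forall_ne_zero : ∀ᵐ s ∂gaussPi ι, ∀ i, s i ≠ 0 := by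
  have := nullSingletonClass_gaussianReal (μ := 0) one_ne_zero
  exact ae_all_iff.mpr fun i =>
    (Measure.quasiMeasurePreserving_eval (fun _ => gaussianReal 0 1) i).ae (Measure.ae_ne _ 0)

lemma ae_dotProduct_self_pos [Nonempty ι] : ∀ᵐ s ∂gaussPi ι, 0 < s ⬝ᵥ s := by
  obtain ⟨i⟩ := ‹Nonempty ι›
  filter_upwards [ae_forall_ne_zero] with s hs
  exact (sq_pos_of_ne_zero (hs i)).trans_le (sq_le_dotProduct_self s i)

-- Each of the `4q` factors `|s|^{-1/2}` of `|s|^{-2q}` is at most `|s_l|^{-1/2}`.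
lemma lintegral_inv_pow_dotProduct_gaussPi_lt_top (q : ℕ) :
    ∫⁻ s, (ENNReal.ofReal (s ⬝ᵥ s) ^ q)⁻¹ ∂gaussPi (Fin (4 * q)) < ⊤ := by
  have hint : Integrable (fun s => ∏ l, |s l| ^ (-(1 / 2 : ℝ))) (gaussPi (Fin (4 * q))) :=
    Integrable.fintype_prod (f := fun _ (x : ℝ) => |x| ^ (-(1 / 2 : ℝ)))
      fun _ => integrable_abs_rpow_neg_half_gaussianReal
  refine (lintegral_mono_ae ?_).trans_lt hint.2
  filter_upwards [ae_forall_ne_zero] with s hs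
  rcases Nat.eq_zero_or_pos q with rfl | hq
  · simp
  have hle (l : Fin (4 * q)) : s l ^ 2 ≤ s ⬝ᵥ s := sq_le_dotProduct_self s l
  have hpos : 0 < s ⬝ᵥ s := (sq_pos_of_ne_zero (hs ⟨0, by omega⟩)).trans_le (hle _)
  rw [Real.enorm_eq_ofReal (by positivity), ← ENNReal.ofReal_pow hpos.le,
    ← ENNReal.ofReal_inv_of_pos (by positivity)]
  refine ENNReal.ofReal_le_ofReal ?_
  calc ((s ⬝ᵥ s) ^ q)⁻¹ = ∏ _l : Fin (4 * q), √(s ⬝ᵥ s) ^ (-(1 / 2 : ℝ)) := by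
        rw [Finset.prod_const, Finset.card_univ, Fintype.card_fin, Real.sqrt_eq_rpow,
          ← Real.rpow_mul hpos.le, ← Real.rpow_natCast, ← Real.rpow_natCast,
          ← Real.rpow_mul hpos.le, ← Real.rpow_neg hpos.le]
        push_cast
        ring_nf
    _ ≤ ∏ l, |s l| ^ (-(1 / 2 : ℝ)) := by
        refine Finset.prod_le_prod (fun l _ => by positivity) fun l _ => ?_
        refine Real.rpow_le_rpow_of_nonpos (abs_pos.mpr (hs l)) ?_ (by norm_num)
        exact Real.abs_le_sqrt (hle l)

end NegativeMoments

section PolynomialDegree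

variable {σ R : Type*} [CommRing R]

lemma totalDegree_le_succ_iff_forall_pderiv [IsDomain R] [CharZero R] {P : MvPolynomial σ R}
    {k : ℕ} : P.totalDegree ≤ k + 1 ↔ ∀ i, (pderiv i P).totalDegree ≤ k := by
  have hsum (s : σ →₀ ℕ) (i : σ) : (s + Finsupp.single i 1).sum (fun _ e => e)
      = s.sum (fun _ e => e) + 1 := by
    rw [Finsupp.sum_add_index' (fun _ => rfl) (fun _ _ _ => rfl), Finsupp.sum_single_index rfl]
  simp only [totalDegree, Finset.sup_le_iff, mem_support_iff, coeff_pderiv]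
  constructor
  · intro h i s hs
    have := h _ (left_ne_zero_of_mul hs)
    rw [hsum] at this
    omega
  · intro h s hs
    by_cases hs0 : s = 0
    · simp [hs0]
    · obtain ⟨i, hi⟩ := Finsupp.ne_iff.mp hs0
      have hadd : s - Finsupp.single i 1 + Finsupp.single i 1 = s :=
        tsub_add_cancel_of_le (Finsupp.single_le_iff.mpr (Nat.one_le_iff_ne_zero.mpr hi))
      have := h i (s - Finsupp.single i 1)
        (by rw [hadd]; exact mul_ne_zero hs (Nat.cast_add_one_ne_zero _))
      rw [← hadd, hsum]
      omega

lemma pderiv_eq_zero_of_totalDegree_eq_zero {P : MvPolynomial σ R} (h : P.totalDegree = 0)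
    (i : σ) : pderiv i P = 0 := by
  rw [totalDegree_eq_zero_iff_eq_C.mp h, pderiv_C]

lemma pderiv_pderiv_comm (i j : σ) (P : MvPolynomial σ R) :
    pderiv i (pderiv j P) = pderiv j (pderiv i P) := by
  classical
  have h : ⁅(pderiv i : Derivation R (MvPolynomial σ R) _), pderiv j⁆ = 0 :=
    derivation_ext fun k => by
      rw [Derivation.commutator_apply]
      simp [Pi.single_apply, apply_ite]
  exact sub_eq_zero.mp (by rw [← Derivation.commutator_apply, h, Derivation.zero_apply])

end PolynomialDegree

section NumberOperator

variable {ι R : Type*} [Fintype ι] [CommRing R]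

/-- The number operator `∑ᵢ (xᵢ ∂ᵢ - ∂ᵢ²)`, that is, minus the Ornstein–Uhlenbeck generator. -/
noncomputable def numberOp : MvPolynomial ι R →ₗ[R] MvPolynomial ι R :=
  ∑ i, (LinearMap.mulLeft R (X i) - (pderiv i).toLinearMap) ∘ₗ (pderiv i).toLinearMap

/-- The carré du champ `|∇P|²`, as a polynomial. -/
noncomputable def gradSq (P : MvPolynomial ι R) : MvPolynomial ι R := ∑ i, pderiv i P ^ 2

lemma numberOp_apply (P : MvPolynomial ι R) :
    numberOp P = ∑ i, (X i * pderiv i P - pderiv i (pderiv i P)) := by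
  simp [numberOp]

lemma pderiv_numberOp (i : ι) (P : MvPolynomial ι R) :
    pderiv i (numberOp P) = numberOp (pderiv i P) + pderiv i P := by
  classical
  have h (j : ι) : pderiv i (X j * pderiv j P - pderiv j (pderiv j P))
      = X j * pderiv j (pderiv i P) - pderiv j (pderiv j (pderiv i P))
        + if j = i then pderiv j P else 0 := by
    rw [map_sub, pderiv_mul, pderiv_X, Pi.single_apply, pderiv_pderiv_comm i j,
      pderiv_pderiv_comm i j (pderiv j P), pderiv_pderiv_comm i j P, ite_mul, one_mul, zero_mul]
    ring
  simp only [numberOp_apply, map_sum, h, Finset.sum_add_distrib, Finset.sum_ite_eq',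
    Finset.mem_univ, if_true]

lemma numberOp_sq (P : MvPolynomial ι R) :
    numberOp (P ^ 2) = (2 : R) • (P * numberOp P) - (2 : R) • gradSq P := by
  simp only [numberOp_apply, gradSq, Finset.mul_sum, Finset.smul_sum, ← Finset.sum_sub_distrib]
  refine Finset.sum_congr rfl fun i _ => ?_
  simp only [sq, pderiv_mul, map_add, smul_eq_C_mul, map_ofNat]
  ring

end NumberOperator

section GaussianExpectation

variable {ι : Type} [Fintype ι]

lemma eval_monomial_eq_prod {R : Type*} [CommSemiring R] (s : ι →₀ ℕ) (a : R) (x : ι → R) :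
    eval x (monomial s a) = a * ∏ i, x i ^ s i := by
  rw [eval_monomial, Finsupp.prod_fintype _ _ (by simp)]

lemma integrable_eval_gaussPi (P : MvPolynomial ι ℝ) :
    Integrable (fun x => eval x P) (gaussPi ι) := by
  induction P using MvPolynomial.induction_on' with
  | monomial s a =>
    simp only [eval_monomial_eq_prod]
    exact (Integrable.fintype_prod (f := fun i (x : ℝ) => x ^ s i)
      fun i => integrable_pow_gaussianReal 1 (s i)).const_mul a
  | add p q hp hq => simp only [map_add]; exact hp.add hq

/-- The expectation of a polynomial in independent standard Gaussian variables. -/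
noncomputable def gaussE : MvPolynomial ι ℝ →ₗ[ℝ] ℝ where
  toFun P := ∫ x, eval x P ∂gaussPi ι
  map_add' P Q := by
    simp only [map_add]
    exact integral_add (integrable_eval_gaussPi P) (integrable_eval_gaussPi Q)
  map_smul' c P := by simp only [smul_eval]; exact integral_const_mul c _

lemma gaussE_apply (P : MvPolynomial ι ℝ) : gaussE P = ∫ x, eval x P ∂gaussPi ι := rfl

lemma gaussE_mono {P Q : MvPolynomial ι ℝ} (h : ∀ x, eval x P ≤ eval x Q) :
    gaussE P ≤ gaussE Q :=
  integral_mono (integrable_eval_gaussPi P) (integrable_eval_gaussPi Q) h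

lemma gaussE_pow_nonneg {n : ℕ} (hn : Even n) (P : MvPolynomial ι ℝ) : 0 ≤ gaussE (P ^ n) :=
  integral_nonneg fun x => by simp only [map_pow]; exact hn.pow_nonneg _

lemma gaussE_sq_nonneg (P : MvPolynomial ι ℝ) : 0 ≤ gaussE (P ^ 2) := gaussE_pow_nonneg even_two P

lemma gaussE_monomial (s : ι →₀ ℕ) (a : ℝ) :
    gaussE (monomial s a) = a * ∏ i, ∫ x : ℝ, x ^ s i ∂gaussianReal 0 1 := by
  simp only [gaussE_apply, eval_monomial_eq_prod, integral_const_mul]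
  rw [gaussPi, integral_fintype_prod_eq_prod (f := fun i (x : ℝ) => x ^ s i)]

lemma gaussE_pderiv (i : ι) (P : MvPolynomial ι ℝ) :
    gaussE (pderiv i P) = gaussE (X i * P) := by
  classical
  induction P using MvPolynomial.induction_on' with
  | add p q hp hq => rw [map_add, map_add, mul_add, map_add, hp, hq]
  | monomial s a =>
    have hoff : ∀ j ∈ Finset.univ.erase i,
        ∫ x : ℝ, x ^ (s - Finsupp.single i 1 : ι →₀ ℕ) j ∂gaussianReal 0 1
          = ∫ x : ℝ, x ^ (Finsupp.single i 1 + s : ι →₀ ℕ) j ∂gaussianReal 0 1 := fun j hj => by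
      simp [Finsupp.single_eq_of_ne (Finset.ne_of_mem_erase hj)]
    have hrec : (s i : ℝ) * ∫ x : ℝ, x ^ (s - Finsupp.single i 1 : ι →₀ ℕ) i ∂gaussianReal 0 1
        = ∫ x : ℝ, x ^ (Finsupp.single i 1 + s : ι →₀ ℕ) i ∂gaussianReal 0 1 := by
      rcases hs : s i with _ | n
      · simp [hs]
      · simp [hs, add_comm 1, integral_pow_add_two_gaussianReal]
    rw [pderiv_monomial, X, monomial_mul, gaussE_monomial, gaussE_monomial, one_mul,
      ← Finset.mul_prod_erase _ _ (Finset.mem_univ i), Finset.prod_congr rfl hoff,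
      ← Finset.mul_prod_erase _ (fun j => ∫ x : ℝ, x ^ (Finsupp.single i 1 + s : ι →₀ ℕ) j
        ∂gaussianReal 0 1) (Finset.mem_univ i), ← hrec]
    ring

lemma gaussE_mul_numberOp (P Q : MvPolynomial ι ℝ) :
    gaussE (P * numberOp Q) = ∑ i, gaussE (pderiv i P * pderiv i Q) := by
  rw [numberOp_apply, Finset.mul_sum, map_sum]
  refine Finset.sum_congr rfl fun i _ => ?_
  have h := gaussE_pderiv i (P * pderiv i Q)
  rw [pderiv_mul, map_add, mul_left_comm] at h
  rw [mul_sub, map_sub, ← h]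
  ring

lemma gaussE_gradSq (P : MvPolynomial ι ℝ) : gaussE (gradSq P) = gaussE (P * numberOp P) := by
  simp only [gaussE_mul_numberOp, gradSq, map_sum, sq]

lemma gaussE_gradSq_nonneg (P : MvPolynomial ι ℝ) : 0 ≤ gaussE (gradSq P) := by
  rw [gradSq, map_sum]
  exact Finset.sum_nonneg fun i _ => gaussE_sq_nonneg _

lemma gaussE_mul_sq_le (P Q : MvPolynomial ι ℝ) :
    gaussE (P * Q) ^ 2 ≤ gaussE (P ^ 2) * gaussE (Q ^ 2) := by
  have hquad (t : ℝ) :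
      0 ≤ gaussE (Q ^ 2) * (t * t) + (2 * gaussE (P * Q)) * t + gaussE (P ^ 2) := by
    have hexpand : (P + t • Q) ^ 2 = P ^ 2 + (2 * t) • (P * Q) + (t * t) • Q ^ 2 := by
      simp only [smul_eq_C_mul, map_mul, map_ofNat]; ring
    have h := gaussE_sq_nonneg (P + t • Q)
    simp only [hexpand, map_add, map_smul, smul_eq_mul] at h
    linarith
  have h := discrim_le_zero hquad
  rw [discrim] at h
  linarith

lemma gaussE_numberOp_sq (P : MvPolynomial ι ℝ) :
    gaussE (numberOp P ^ 2) = gaussE (gradSq P) + ∑ i, gaussE (gradSq (pderiv i P)) := by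
  rw [sq, gaussE_mul_numberOp, gradSq, map_sum, ← Finset.sum_add_distrib]
  refine Finset.sum_congr rfl fun i _ => ?_
  rw [pderiv_numberOp, add_mul, map_add, mul_comm, gaussE_gradSq, sq, add_comm]

-- If `E|∇Q|² ≤ k E Q²` for the partial derivatives `Q` of `P`, then
-- `E (LP)² ≤ (k + 1) E (P LP)`, and Cauchy–Schwarz applied to `E (P LP) = E|∇P|²` closes the
-- induction.
lemma gaussE_gradSq_le {k : ℕ} {P : MvPolynomial ι ℝ} (h : P.totalDegree ≤ k) :
    gaussE (gradSq P) ≤ k * gaussE (P ^ 2) ∧ gaussE (numberOp P ^ 2) ≤ k * gaussE (gradSq P) := by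
  induction k generalizing P with
  | zero =>
    have h0 := pderiv_eq_zero_of_totalDegree_eq_zero (Nat.le_zero.mp h)
    simp [gradSq, numberOp_apply, h0]
  | succ k ih =>
    have hderiv : ∑ i, gaussE (gradSq (pderiv i P)) ≤ k * gaussE (gradSq P) := by
      rw [gradSq, map_sum, Finset.mul_sum]
      exact Finset.sum_le_sum fun i _ => (ih (totalDegree_le_succ_iff_forall_pderiv.mp h i)).1
    have hL : gaussE (numberOp P ^ 2) ≤ (k + 1 : ℕ) * gaussE (gradSq P) := by
      rw [gaussE_numberOp_sq]
      push_cast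
      linarith
    refine ⟨?_, hL⟩
    have hcs : gaussE (gradSq P) * gaussE (gradSq P)
        ≤ (k + 1 : ℕ) * gaussE (P ^ 2) * gaussE (gradSq P) := calc
      _ ≤ gaussE (P ^ 2) * gaussE (numberOp P ^ 2) := by
        rw [← sq, gaussE_gradSq]; exact gaussE_mul_sq_le P (numberOp P)
      _ ≤ gaussE (P ^ 2) * ((k + 1 : ℕ) * gaussE (gradSq P)) :=
        mul_le_mul_of_nonneg_left hL (gaussE_sq_nonneg P)
      _ = _ := by ring
    rcases (gaussE_gradSq_nonneg P).eq_or_lt with h0 | h0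
    · rw [← h0]
      exact mul_nonneg (by positivity) (gaussE_sq_nonneg P)
    · exact le_of_mul_le_mul_right hcs h0

section Eigenfunctions

variable {m : ℕ} {P : MvPolynomial ι ℝ}

lemma gaussE_gradSq_of_eigen (hL : numberOp P = (m : ℝ) • P) :
    gaussE (gradSq P) = m * gaussE (P ^ 2) := by
  rw [gaussE_gradSq, hL, mul_smul_comm, map_smul, smul_eq_mul, sq]

lemma three_mul_gaussE_sq_mul_gradSq (hL : numberOp P = (m : ℝ) • P) :
    3 * gaussE (P ^ 2 * gradSq P) = m * gaussE (P ^ 4) := by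
  have h := gaussE_mul_numberOp (P ^ 3) P
  have hpow : P ^ 3 * (m : ℝ) • P = (m : ℝ) • P ^ 4 := by rw [mul_smul_comm, ← pow_succ]
  rw [hL, hpow, map_smul, smul_eq_mul] at h
  rw [h, gradSq, Finset.mul_sum, map_sum, Finset.mul_sum]
  refine Finset.sum_congr rfl fun i _ => ?_
  rw [← smul_eq_mul, ← map_smul, pderiv_pow, smul_eq_C_mul, map_ofNat]
  push_cast
  ring_nf

-- The spectrum of `L` on polynomials of degree `2m` lies in `[0, 2m]`; apply this to
-- `L (P²) = 2m P² - 2|∇P|²`.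
lemma three_mul_gaussE_gradSq_sq_le (hd : P.totalDegree ≤ m) (hL : numberOp P = (m : ℝ) • P) :
    3 * gaussE (gradSq P ^ 2) ≤ (m : ℝ) ^ 2 * gaussE (P ^ 4) := by
  have hsq : numberOp (P ^ 2) = (2 * m : ℝ) • P ^ 2 - (2 : ℝ) • gradSq P := by
    rw [numberOp_sq, hL]
    simp only [smul_eq_C_mul, map_mul, map_ofNat]; ring
  have hsqsq : numberOp (P ^ 2) ^ 2 = (4 * (m : ℝ) ^ 2) • P ^ 4
      - (8 * m : ℝ) • (P ^ 2 * gradSq P) + (4 : ℝ) • gradSq P ^ 2 := by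
    rw [hsq]; simp only [smul_eq_C_mul, map_mul, map_ofNat, map_pow]; ring
  have hmul : P ^ 2 * numberOp (P ^ 2)
      = (2 * m : ℝ) • P ^ 4 - (2 : ℝ) • (P ^ 2 * gradSq P) := by
    rw [hsq]; simp only [smul_eq_C_mul, map_mul, map_ofNat]; ring
  have hspec := (gaussE_gradSq_le ((totalDegree_pow P 2).trans (Nat.mul_le_mul_left 2 hd))).2
  rw [gaussE_gradSq, hsqsq, hmul] at hspec
  simp only [map_add, map_sub, map_smul, smul_eq_mul] at hspec
  push_cast at hspec
  linear_combination hspec / 4 * 3 + (m : ℝ) * three_mul_gaussE_sq_mul_gradSq hL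

end Eigenfunctions

end GaussianExpectation

section Chaos

open Polynomial in
lemma derivative_hermite (n : ℕ) : derivative (hermite n) = n * hermite (n - 1) := by
  induction n with
  | zero => simp
  | succ n ih =>
    rcases n with _ | n
    · simp
    · rw [hermite_succ (n + 1), derivative_sub, derivative_mul, derivative_X, ih,
        Nat.add_sub_cancel, Nat.add_sub_cancel, derivative_mul, derivative_natCast, hermite_succ n]
      push_cast
      ring

open Polynomial in
lemma X_mul_derivative_hermite_sub (n : ℕ) :
    Polynomial.X * derivative (hermite n) - derivative (derivative (hermite n))
      = (n : ℤ[X]) * hermite n := by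
  rcases n with _ | n
  · simp
  · rw [derivative_hermite, Nat.add_sub_cancel, derivative_mul, derivative_natCast, hermite_succ n]
    ring

lemma totalDegree_aeval_X_le {σ S R : Type*} [CommSemiring S] [CommSemiring R] [Algebra S R]
    (i : σ) (p : Polynomial S) :
    (Polynomial.aeval (X i : MvPolynomial σ R) p).totalDegree ≤ p.natDegree := by
  rcases subsingleton_or_nontrivial R with _ | _
  · simp [Subsingleton.elim (Polynomial.aeval _ p) (0 : MvPolynomial σ R)]
  rw [Polynomial.aeval_eq_sum_range]
  refine totalDegree_finsetSum_le fun n hn => ?_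
  exact (totalDegree_smul_le _ _).trans
    ((totalDegree_X_pow i n).trans_le (Finset.mem_range_succ_iff.mp hn))

lemma pderiv_aeval_X {ι R : Type*} [DecidableEq ι] [CommRing R] (i j : ι) (p : Polynomial ℤ) :
    pderiv i (Polynomial.aeval (X j : MvPolynomial ι R) p)
      = if j = i then Polynomial.aeval (X j) (Polynomial.derivative p) else 0 := by
  have h := ((pderiv i : Derivation R (MvPolynomial ι R) _).restrictScalars ℤ).map_aeval p (X j)
  rw [Derivation.restrictScalars_apply, Derivation.restrictScalars_apply, pderiv_X,
    Pi.single_apply] at h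
  rw [h]
  split_ifs <;> simp

section ProductPolynomials

variable {ι R : Type*} [Fintype ι] [DecidableEq ι] [CommRing R]

lemma prod_aeval_X_update (i : ι) (p : ι → Polynomial ℤ) (q : Polynomial ℤ) :
    ∏ j, Polynomial.aeval (X j : MvPolynomial ι R) (Function.update p i q j)
      = Polynomial.aeval (X i : MvPolynomial ι R) q
        * ∏ j ∈ Finset.univ.erase i, Polynomial.aeval (X j : MvPolynomial ι R) (p j) := by
  rw [← Finset.mul_prod_erase _ _ (Finset.mem_univ i), Function.update_self]
  exact congrArg _ (Finset.prod_congr rfl fun j hj => by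
    rw [Function.update_of_ne (Finset.ne_of_mem_erase hj)])

lemma pderiv_prod_aeval_X (i : ι) (p : ι → Polynomial ℤ) :
    pderiv i (∏ j, Polynomial.aeval (X j : MvPolynomial ι R) (p j))
      = ∏ j, Polynomial.aeval (X j : MvPolynomial ι R)
          (Function.update p i (Polynomial.derivative (p i)) j) := by
  have hrest (s : Finset ι) (hs : i ∉ s) :
      pderiv i (∏ j ∈ s, Polynomial.aeval (X j : MvPolynomial ι R) (p j)) = 0 := by
    induction s using Finset.induction_on with
    | empty => simp
    | insert a s ha ih =>
      rw [Finset.mem_insert, not_or] at hs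
      rw [Finset.prod_insert ha, pderiv_mul, ih hs.2, pderiv_aeval_X, if_neg (Ne.symm hs.1)]
      simp
  rw [prod_aeval_X_update, ← Finset.mul_prod_erase _ _ (Finset.mem_univ i), pderiv_mul,
    hrest _ (Finset.notMem_erase i _), pderiv_aeval_X, if_pos rfl, mul_zero, add_zero]

end ProductPolynomials

variable {K m : ℕ} {P : MvPolynomial (Fin K) ℝ}

lemma pderiv_hermiteProd (i : Fin K) (k : Fin K → ℕ) :
    pderiv i (hermiteProd k) = (k i : ℝ) • hermiteProd (Function.update k i (k i - 1)) := by
  have hcomp (j : Fin K) : Polynomial.hermite (Function.update k i (k i - 1) j)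
      = Function.update (fun j => Polynomial.hermite (k j)) i (Polynomial.hermite (k i - 1)) j :=
    Function.apply_update (fun _ => Polynomial.hermite) k i (k i - 1) j
  simp only [hermiteProd, pderiv_prod_aeval_X, hcomp, prod_aeval_X_update, derivative_hermite,
    map_mul, map_natCast, smul_eq_C_mul, mul_assoc]

lemma numberOp_hermiteProd (k : Fin K → ℕ) :
    numberOp (hermiteProd k) = ((∑ i, k i : ℕ) : ℝ) • hermiteProd k := by
  rw [numberOp_apply, Nat.cast_sum, Finset.sum_smul]
  refine Finset.sum_congr rfl fun i _ => ?_
  have hode := congrArg (Polynomial.aeval (X i : MvPolynomial (Fin K) ℝ))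
    (X_mul_derivative_hermite_sub (k i))
  simp only [map_sub, map_mul, map_natCast, Polynomial.aeval_X] at hode
  rw [hermiteProd, pderiv_prod_aeval_X, pderiv_prod_aeval_X]
  simp only [Function.update_self, Function.update_idem, prod_aeval_X_update]
  rw [← mul_assoc, ← sub_mul, hode, smul_eq_C_mul, map_natCast, mul_assoc,
    Finset.mul_prod_erase _ (fun j => Polynomial.aeval (X j) (Polynomial.hermite (k j)))
      (Finset.mem_univ i)]

lemma numberOp_eq_smul_of_mem_chaos (h : P ∈ chaos K m) : numberOp P = (m : ℝ) • P := by
  induction h using Submodule.span_induction with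
  | mem Q hQ => obtain ⟨k, rfl, rfl⟩ := hQ; exact numberOp_hermiteProd k
  | zero => simp
  | add Q R _ _ hQ hR => rw [map_add, hQ, hR, smul_add]
  | smul a Q _ hQ => rw [map_smul, hQ, smul_comm]

lemma pderiv_mem_chaos (h : P ∈ chaos K m) (i : Fin K) : pderiv i P ∈ chaos K (m - 1) := by
  suffices hle : chaos K m ≤ (chaos K (m - 1)).comap (pderiv i).toLinearMap from hle h
  refine Submodule.span_le.mpr ?_
  rintro _ ⟨k, hk, rfl⟩
  change pderiv i (hermiteProd k) ∈ chaos K (m - 1)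
  rw [pderiv_hermiteProd]
  rcases Nat.eq_zero_or_pos (k i) with h0 | hpos
  · simp [h0]
  · refine Submodule.smul_mem _ _ (Submodule.subset_span ⟨_, ?_, rfl⟩)
    rw [← Finset.add_sum_erase _ _ (Finset.mem_univ i)] at hk
    rw [Finset.sum_update_of_mem (Finset.mem_univ i), Finset.sdiff_singleton_eq_erase]
    omega

lemma totalDegree_le_of_mem_chaos (h : P ∈ chaos K m) : P.totalDegree ≤ m := by
  suffices hle : chaos K m ≤ restrictTotalDegree (Fin K) ℝ m from
    (mem_restrictTotalDegree _ _ _).mp (hle h)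
  refine Submodule.span_le.mpr ?_
  rintro _ ⟨k, rfl, rfl⟩
  refine (mem_restrictTotalDegree _ _ _).mpr ((totalDegree_finsetProd _ _).trans ?_)
  exact Finset.sum_le_sum fun i _ => (totalDegree_aeval_X_le i _).trans_eq
    Polynomial.natDegree_hermite

end Chaos

section Contraction

section Algebra

variable {ι R : Type*} [CommSemiring R]

/-- The gradient of a polynomial at a point. -/
noncomputable def polyGrad (x : ι → R) : MvPolynomial ι R →ₗ[R] (ι → R) :=
  LinearMap.pi fun i => (aeval x).toLinearMap ∘ₗ (pderiv i).toLinearMap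

lemma polyGrad_apply (x : ι → R) (P : MvPolynomial ι R) (i : ι) :
    polyGrad x P i = eval x (pderiv i P) := by
  simp [polyGrad]

variable [Fintype ι]

/-- The derivative of a polynomial in a constant direction, bilinear in both arguments. -/
noncomputable def dirDeriv : (ι → R) →ₗ[R] MvPolynomial ι R →ₗ[R] MvPolynomial ι R :=
  Fintype.linearCombination R fun i => (pderiv i).toLinearMap

/-- The contracted derivative `∇ʲ⁺¹P(0)[w₀, …, wⱼ₋₁, ·]`, where the `wₗ` are directions. -/
noncomputable def contractDeriv : {j : ℕ} → (Fin j → ι → R) → MvPolynomial ι R →ₗ[R] (ι → R)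
  | 0, _ => polyGrad 0
  | _ + 1, w => contractDeriv (Fin.tail w) ∘ₗ dirDeriv (w 0)

/-- The matrix `∇ʲ⁺²P(0)[w₀, …, wⱼ₋₁, ·, ·]`. -/
noncomputable def contractMatrix {j : ℕ} (w : Fin j → ι → R) (P : MvPolynomial ι R) :
    Matrix ι ι R :=
  Matrix.of fun i => contractDeriv w (pderiv i P)

lemma dirDeriv_apply (z : ι → R) (P : MvPolynomial ι R) :
    dirDeriv z P = ∑ i, z i • pderiv i P := by
  simp [dirDeriv, Fintype.linearCombination_apply]

lemma contractDeriv_cons {j : ℕ} (z : ι → R) (w : Fin j → ι → R) (P : MvPolynomial ι R) :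
    contractDeriv (Fin.cons z w : Fin (j + 1) → ι → R) P = contractDeriv w (dirDeriv z P) := rfl

lemma contractDeriv_dirDeriv {j : ℕ} (w : Fin j → ι → R) (z : ι → R) (P : MvPolynomial ι R) :
    contractDeriv w (dirDeriv z P) = z ᵥ* contractMatrix w P := by
  rw [dirDeriv_apply, map_sum, Matrix.vecMul_eq_sum]
  simp only [map_smul]
  rfl

variable [TopologicalSpace R] [IsTopologicalSemiring R] {X : Type*} [TopologicalSpace X]

lemma continuous_contractDeriv {j : ℕ} {w : X → Fin j → ι → R} (hw : Continuous w)
    (P : MvPolynomial ι R) : Continuous fun x => contractDeriv (w x) P := by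
  induction j generalizing P with
  | zero => exact continuous_const
  | succ j ih =>
    have htail (i : ι) : Continuous fun x => contractDeriv (Fin.tail (w x)) (pderiv i P) :=
      ih (by unfold Fin.tail; fun_prop) (pderiv i P)
    have hsum (x : X) : contractDeriv (w x) P
        = ∑ i, w x 0 i • contractDeriv (Fin.tail (w x)) (pderiv i P) := by
      rw [contractDeriv, LinearMap.comp_apply, dirDeriv_apply, map_sum]
      simp only [map_smul]
    simp only [hsum]
    fun_prop

lemma continuous_contractDeriv_dirDeriv {j : ℕ} {w : X → Fin j → ι → R} {z : X → ι → R}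
    (hw : Continuous w) (hz : Continuous z) (P : MvPolynomial ι R) :
    Continuous fun x => contractDeriv (w x) (dirDeriv (z x) P) :=
  continuous_contractDeriv (w := fun x => Fin.cons (z x) (w x)) (by fun_prop) P

end Algebra

variable {ι κ : Type} [Fintype ι] [Fintype κ] {j : ℕ}

lemma lintegral_gaussTuple_succ {f : (Fin (j + 1) → ι → ℝ) → ℝ≥0∞} (hf : Measurable f) :
    ∫⁻ w, f w ∂gaussTuple (Fin (j + 1)) ι
      = ∫⁻ z, ∫⁻ w, f (Fin.cons z w) ∂gaussTuple (Fin j) ι ∂gaussPi ι := by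
  have h := (measurePreserving_piFinSuccAbove (fun _ : Fin (j + 1) => gaussPi ι) 0).symm
  have hmeas := (hf.comp h.measurable).aemeasurable (μ := (gaussPi ι).prod (gaussTuple (Fin j) ι))
  refine (h.lintegral_comp hf).symm.trans ((lintegral_prod _ hmeas).trans ?_)
  simp only [MeasurableEquiv.piFinSuccAbove_symm_apply, Fin.insertNthEquiv, Fin.insertNth_zero',
    Equiv.coe_fn_mk, Function.comp_apply]

/-- The mean square deviation from `c` of the inner product of two decoupled contractions,
taken along independent standard Gaussian directions. -/
noncomputable def contractDefect (j : ℕ) (P Q : MvPolynomial ι ℝ) (c : ℝ) : ℝ≥0∞ :=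
  ∫⁻ w, ENNReal.ofReal ((contractDeriv w P ⬝ᵥ contractDeriv w Q - c) ^ 2) ∂gaussTuple (Fin j) ι

/-- The Laplace transform of the squared norm of a decoupled contraction along independent
standard Gaussian directions. -/
noncomputable def contractLaplace (j : ℕ) (P : MvPolynomial ι ℝ) (l : ℝ) : ℝ≥0∞ :=
  ∫⁻ w, expNeg (l * (contractDeriv w P ⬝ᵥ contractDeriv w P)) ∂gaussTuple (Fin j) ι

section Defect

lemma continuous_contractDeriv_dotProduct (P Q : MvPolynomial ι ℝ) :
    Continuous fun w : Fin j → ι → ℝ => contractDeriv w P ⬝ᵥ contractDeriv w Q :=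
  (continuous_contractDeriv continuous_id P).dotProduct (continuous_contractDeriv continuous_id Q)

lemma measurable_sq_contractDeriv_dotProduct_sub (P Q : MvPolynomial ι ℝ) (c : ℝ) :
    Measurable fun w : Fin j → ι → ℝ =>
      ENNReal.ofReal ((contractDeriv w P ⬝ᵥ contractDeriv w Q - c) ^ 2) := by
  have := (continuous_contractDeriv_dotProduct (j := j) P Q).measurable
  fun_prop

lemma contractDefect_succ (P Q : MvPolynomial ι ℝ) (c : ℝ) :
    contractDefect (j + 1) P Q c
      = ∫⁻ z, contractDefect j (dirDeriv z P) (dirDeriv z Q) c ∂gaussPi ι := by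
  rw [contractDefect, lintegral_gaussTuple_succ (measurable_sq_contractDeriv_dotProduct_sub P Q c)]
  simp only [contractDeriv_cons, contractDefect]

lemma measurable_contractDefect_dirDeriv {E : Type*} [TopologicalSpace E] [MeasurableSpace E]
    [OpensMeasurableSpace E] {y z : E → ι → ℝ} (hy : Continuous y)
    (hz : Continuous z) (P Q : MvPolynomial ι ℝ) (c : ℝ) :
    Measurable fun e => contractDefect j (dirDeriv (y e) P) (dirDeriv (z e) Q) c := by
  have hcont : Continuous fun p : E × (Fin j → ι → ℝ) =>
      contractDeriv p.2 (dirDeriv (y p.1) P) ⬝ᵥ contractDeriv p.2 (dirDeriv (z p.1) Q) :=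
    (continuous_contractDeriv_dirDeriv continuous_snd (hy.comp continuous_fst) P).dotProduct
      (continuous_contractDeriv_dirDeriv continuous_snd (hz.comp continuous_fst) Q)
  have hmeas := hcont.measurable
  exact Measurable.lintegral_prod_right' (f := fun p : E × (Fin j → ι → ℝ) => ENNReal.ofReal
    ((contractDeriv p.2 (dirDeriv (y p.1) P) ⬝ᵥ contractDeriv p.2 (dirDeriv (z p.1) Q) - c) ^ 2))
    (by fun_prop)

lemma lintegral_contractDefect_sum_smul {c : κ → ℝ} (hc : c ⬝ᵥ c = 1) (P : MvPolynomial ι ℝ) :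
    ∫⁻ U, contractDefect j (dirDeriv (∑ l, c l • U l) P) (dirDeriv (∑ l, c l • U l) P) 1
      ∂gaussTuple κ ι = contractDefect (j + 1) P P 1 := by
  rw [contractDefect_succ]
  exact lintegral_sum_smul_gaussTuple hc
    (measurable_contractDefect_dirDeriv continuous_id continuous_id P P 1)

lemma sq_dotProduct_mulVec_le {κ : Type*} [Fintype κ] (A : Matrix κ κ ℝ) (s : κ → ℝ) :
    (s ⬝ᵥ A *ᵥ s) ^ 2 ≤ (s ⬝ᵥ s) ^ 2 * ∑ l, ∑ l', A l l' ^ 2 := by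
  calc (s ⬝ᵥ A *ᵥ s) ^ 2
      = (∑ p : κ × κ, (s p.1 * s p.2) * A p.1 p.2) ^ 2 := by
        rw [Fintype.sum_prod_type]
        simp only [dotProduct, Matrix.mulVec, Finset.mul_sum]
        congr! 3
        ring
    _ ≤ (∑ p : κ × κ, (s p.1 * s p.2) ^ 2) * ∑ p : κ × κ, A p.1 p.2 ^ 2 :=
        Finset.sum_mul_sq_le_sq_mul_sq _ _ _
    _ = _ := by
        simp only [Fintype.sum_prod_type, mul_pow, ← Finset.mul_sum, ← Finset.sum_mul, dotProduct,
          ← sq]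

lemma contractDefect_sum_smul_le [DecidableEq κ] {s : κ → ℝ} (hs : s ⬝ᵥ s = 1)
    (f : κ → MvPolynomial ι ℝ) :
    contractDefect j (∑ l, s l • f l) (∑ l, s l • f l) 1
      ≤ ∑ l, ∑ l', contractDefect j (f l) (f l') ((1 : Matrix κ κ ℝ) l l') := by
  have hmeas (l l' : κ) := measurable_sq_contractDeriv_dotProduct_sub (j := j) (f l) (f l')
    ((1 : Matrix κ κ ℝ) l l')
  simp only [contractDefect]
  simp only [← lintegral_finsetSum Finset.univ fun l' _ => hmeas _ l']
  rw [← lintegral_finsetSum _ fun l _ => Finset.measurable_fun_sum _ fun l' _ => hmeas l l']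
  refine lintegral_mono fun w => ?_
  simp only [← ENNReal.ofReal_sum_of_nonneg fun _ _ => sq_nonneg _]
  rw [← ENNReal.ofReal_sum_of_nonneg fun l _ => Finset.sum_nonneg fun l' _ => sq_nonneg _]
  refine ENNReal.ofReal_le_ofReal ?_
  set A : Matrix κ κ ℝ := Matrix.of fun l l' => contractDeriv w (f l) ⬝ᵥ contractDeriv w (f l')
  have hgram : contractDeriv w (∑ l, s l • f l) ⬝ᵥ contractDeriv w (∑ l, s l • f l)
      = s ⬝ᵥ A *ᵥ s := by
    simp only [map_sum, map_smul, sum_dotProduct, dotProduct_sum, smul_dotProduct, dotProduct_smul,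
      smul_eq_mul]
    change _ = ∑ l, s l * ∑ l', (contractDeriv w (f l) ⬝ᵥ contractDeriv w (f l')) * s l'
    simp only [Finset.mul_sum]
    refine Finset.sum_congr rfl fun l _ => Finset.sum_congr rfl fun l' _ => ?_
    rw [dotProduct_comm]
    ring
  have hquad := sq_dotProduct_mulVec_le (A - 1) s
  rw [Matrix.sub_mulVec, Matrix.one_mulVec, dotProduct_sub, hs, one_pow, one_mul] at hquad
  rw [hgram]
  exact hquad

lemma contractDefect_zero_le {a : ℝ} (ha : a ^ 2 = 2⁻¹) (P Q : MvPolynomial ι ℝ) :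
    contractDefect j P Q 0 ≤ contractDefect j (a • P + a • Q) (a • P + a • Q) 1
      + contractDefect j (a • P + (-a) • Q) (a • P + (-a) • Q) 1 := by
  simp only [contractDefect]
  rw [← lintegral_add_left (measurable_sq_contractDeriv_dotProduct_sub _ _ _)]
  refine lintegral_mono fun w => ?_
  rw [← ENNReal.ofReal_add (sq_nonneg _) (sq_nonneg _)]
  refine ENNReal.ofReal_le_ofReal ?_
  simp only [map_add, map_smul, add_dotProduct, dotProduct_add, smul_dotProduct, dotProduct_smul,
    smul_eq_mul, dotProduct_comm (contractDeriv w Q) (contractDeriv w P)]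
  generalize contractDeriv w P ⬝ᵥ contractDeriv w P = x
  generalize contractDeriv w Q ⬝ᵥ contractDeriv w Q = y
  generalize contractDeriv w P ⬝ᵥ contractDeriv w Q = t
  have hplus : a * (a * x) + a * (a * t) + (a * (a * t) + a * (a * y)) - 1
      = ((x + y) / 2 - 1) + t := by linear_combination (x + 2 * t + y) * ha
  have hminus : a * (a * x) + -a * (a * t) + (a * (-a * t) + -a * (-a * y)) - 1
      = ((x + y) / 2 - 1) - t := by linear_combination (x - 2 * t + y) * ha
  rw [sub_zero]
  nlinarith [sq_nonneg ((x + y) / 2 - 1), sq_nonneg t]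

lemma lintegral_contractDefect_pair {l l' : κ} (hne : l ≠ l') {a b : ℝ}
    (hab : a ^ 2 + b ^ 2 = 1) (P : MvPolynomial ι ℝ) :
    ∫⁻ U, contractDefect j (a • dirDeriv (U l) P + b • dirDeriv (U l') P)
      (a • dirDeriv (U l) P + b • dirDeriv (U l') P) 1 ∂gaussTuple κ ι
      = contractDefect (j + 1) P P 1 := by
  classical
  set c : κ → ℝ := Pi.single l a + Pi.single l' b with hc
  have hunit : c ⬝ᵥ c = 1 := by simp [hc, hne, hne.symm, ← sq, hab]
  have hsum (U : κ → ι → ℝ) : ∑ i, c i • U i = a • U l + b • U l' := by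
    simp [hc, add_smul, Finset.sum_add_distrib, Pi.single_apply, ite_smul]
  rw [← lintegral_contractDefect_sum_smul hunit P]
  simp only [hsum, map_add, map_smul, LinearMap.add_apply, LinearMap.smul_apply]

lemma lintegral_contractDefect_le [DecidableEq κ] (l l' : κ) (P : MvPolynomial ι ℝ) :
    ∫⁻ U, contractDefect j (dirDeriv (U l) P) (dirDeriv (U l') P) ((1 : Matrix κ κ ℝ) l l')
      ∂gaussTuple κ ι ≤ 2 * contractDefect (j + 1) P P 1 := by
  rcases eq_or_ne l l' with rfl | hne
  · have h := lintegral_contractDefect_sum_smul (j := j) (c := Pi.single l 1) (by simp) P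
    simp only [Pi.single_apply, ite_smul, one_smul, zero_smul, Finset.sum_ite_eq',
      Finset.mem_univ, if_true] at h
    rw [Matrix.one_apply_eq, h]
    exact le_mul_of_one_le_left' one_le_two
  · have ha : (√2)⁻¹ ^ 2 = (2⁻¹ : ℝ) := by rw [inv_pow, Real.sq_sqrt zero_le_two]
    rw [Matrix.one_apply_ne hne]
    calc _ ≤ ∫⁻ U, (_ + _) ∂gaussTuple κ ι := lintegral_mono fun U =>
          contractDefect_zero_le ha (dirDeriv (U l) P) (dirDeriv (U l') P)
      _ = _ := by
        have hmeas : Measurable fun U : κ → ι → ℝ => contractDefect j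
            ((√2)⁻¹ • dirDeriv (U l) P + (√2)⁻¹ • dirDeriv (U l') P)
            ((√2)⁻¹ • dirDeriv (U l) P + (√2)⁻¹ • dirDeriv (U l') P) 1 := by
          have := measurable_contractDefect_dirDeriv (j := j)
            (y := fun U : κ → ι → ℝ => (√2)⁻¹ • U l + (√2)⁻¹ • U l')
            (z := fun U => (√2)⁻¹ • U l + (√2)⁻¹ • U l') (by fun_prop) (by fun_prop) P P 1
          simpa only [map_add, map_smul, LinearMap.add_apply, LinearMap.smul_apply] using this
        rw [lintegral_add_left hmeas,
          lintegral_contractDefect_pair hne (by rw [ha]; norm_num) P,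
          lintegral_contractDefect_pair hne (by rw [neg_sq, ha]; norm_num) P, two_mul]

end Defect

end Contraction

section NegativeMomentsOfContractions

variable {ι κ : Type} [Fintype ι] [Fintype κ] {j : ℕ}

lemma half_le_measure_lt {Ω : Type*} [MeasurableSpace Ω] {μ : Measure Ω} [IsProbabilityMeasure μ]
    {f : Ω → ℝ≥0∞} (hf : Measurable f) {a : ℝ≥0∞} (ha₀ : a ≠ 0) (ha : a ≠ ⊤)
    (h : 2 * ∫⁻ x, f x ∂μ ≤ a) : 2⁻¹ ≤ μ {x | f x < a} := by
  have hcompl : {x | f x < a} = {x | a ≤ f x}ᶜ := by ext x; simp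
  have hmarkov : μ {x | a ≤ f x} ≤ 2⁻¹ := by
    refine (meas_ge_le_lintegral_div hf.aemeasurable ha₀ ha).trans ?_
    rw [ENNReal.div_le_iff ha₀ ha, ← ENNReal.div_eq_inv_mul,
      ENNReal.le_div_iff_mul_le (.inl two_ne_zero) (.inl ENNReal.ofNat_ne_top), mul_comm]
    exact h
  rw [hcompl, prob_compl_eq_one_sub (measurableSet_le measurable_const hf),
    ← ENNReal.one_sub_inv_two]
  exact tsub_le_tsub_left hmarkov 1

lemma exists_forall_unit_contractDefect_le (P : MvPolynomial ι ℝ) {δ : ℝ≥0∞} (hδ₀ : δ ≠ 0)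
    (hδ : δ ≠ ⊤)
    (h : 4 * (Fintype.card κ : ℝ≥0∞) ^ 2 * contractDefect (j + 1) P P 1 ≤ δ) :
    ∃ G : Set (κ → ι → ℝ), MeasurableSet G ∧ 2⁻¹ ≤ gaussTuple κ ι G ∧
      ∀ U ∈ G, ∀ s : κ → ℝ, s ⬝ᵥ s = 1 →
        contractDefect j (dirDeriv (∑ l, s l • U l) P) (dirDeriv (∑ l, s l • U l) P) 1 ≤ δ := by
  classical
  set S : (κ → ι → ℝ) → ℝ≥0∞ := fun U => ∑ l, ∑ l',
    contractDefect j (dirDeriv (U l) P) (dirDeriv (U l') P) ((1 : Matrix κ κ ℝ) l l')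
  have hmeas (l l' : κ) : Measurable fun U : κ → ι → ℝ =>
      contractDefect j (dirDeriv (U l) P) (dirDeriv (U l') P) ((1 : Matrix κ κ ℝ) l l') :=
    measurable_contractDefect_dirDeriv (continuous_apply l) (continuous_apply l') P P _
  have hmeasRow (l : κ) := Finset.measurable_fun_sum Finset.univ fun l' _ => hmeas l l'
  have hSmeas : Measurable S := Finset.measurable_fun_sum _ fun l _ => hmeasRow l
  have hint : 2 * ∫⁻ U, S U ∂gaussTuple κ ι ≤ δ := by
    rw [lintegral_finsetSum _ fun l _ => hmeasRow l]
    simp only [lintegral_finsetSum _ fun l' _ => hmeas _ l']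
    calc _ ≤ 2 * ∑ _l : κ, ∑ _l' : κ, 2 * contractDefect (j + 1) P P 1 := by
          gcongr with l _ l' _
          exact lintegral_contractDefect_le l l' P
      _ = 4 * (Fintype.card κ : ℝ≥0∞) ^ 2 * contractDefect (j + 1) P P 1 := by
          simp only [Finset.sum_const, Finset.card_univ, nsmul_eq_mul]
          ring
      _ ≤ δ := h
  refine ⟨{U | S U < δ}, measurableSet_lt hSmeas measurable_const,
    half_le_measure_lt hSmeas hδ₀ hδ hint, fun U hU s hs => ?_⟩
  simp only [map_sum, map_smul, LinearMap.sum_apply, LinearMap.smul_apply]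
  exact (contractDefect_sum_smul_le hs _).trans (le_of_lt hU)

lemma contractLaplace_le_one (P : MvPolynomial ι ℝ) {l : ℝ} (hl : 0 ≤ l) :
    contractLaplace j P l ≤ 1 :=
  (lintegral_mono fun _ => expNeg_le_one (mul_nonneg hl (dotProduct_self_nonneg _))).trans_eq
    (by simp)

lemma contractLaplace_smul (c : ℝ) (P : MvPolynomial ι ℝ) (l : ℝ) :
    contractLaplace j (c • P) l = contractLaplace j P (c ^ 2 * l) := by
  refine lintegral_congr fun w => congrArg expNeg ?_
  simp only [map_smul, smul_dotProduct, dotProduct_smul, smul_eq_mul]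
  ring

lemma measurable_expNeg_contractDeriv_dirDeriv {E : Type*} [TopologicalSpace E]
    [MeasurableSpace E] [OpensMeasurableSpace E] {w : E → Fin j → ι → ℝ}
    {z : E → ι → ℝ} (hw : Continuous w) (hz : Continuous z) (P : MvPolynomial ι ℝ) (l : ℝ) :
    Measurable fun e => expNeg
      (l * (contractDeriv (w e) (dirDeriv (z e) P) ⬝ᵥ contractDeriv (w e) (dirDeriv (z e) P))) := by
  have hcont := continuous_contractDeriv_dirDeriv hw hz P
  have hmeas := (hcont.dotProduct hcont).measurable
  fun_prop

lemma contractLaplace_succ (P : MvPolynomial ι ℝ) (l : ℝ) :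
    contractLaplace (j + 1) P l = ∫⁻ z, contractLaplace j (dirDeriv z P) l ∂gaussPi ι := by
  have hmeas := (continuous_contractDeriv_dotProduct (j := j + 1) P P).measurable
  rw [contractLaplace, lintegral_gaussTuple_succ (by fun_prop)]
  simp only [contractDeriv_cons, contractLaplace]

lemma contractLaplace_succ_le [Nonempty κ] (P : MvPolynomial ι ℝ) {l : ℝ} (hl : 0 ≤ l)
    {G : Set (κ → ι → ℝ)} (hG : 2⁻¹ ≤ gaussTuple κ ι G) :
    contractLaplace (j + 1) P l
      ≤ 2 * ∫⁻ U in G, ∫⁻ s, contractLaplace j (dirDeriv (∑ a, s a • U a) P)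
          (l / (2 * Fintype.card κ)) ∂gaussPi κ ∂gaussTuple κ ι := by
  set l' := l / (2 * Fintype.card κ)
  set g : (Fin j → ι → ℝ) → (κ → ι → ℝ) → (κ → ℝ) → ℝ≥0∞ := fun w U s =>
    expNeg (l' * (contractDeriv w (dirDeriv (∑ a, s a • U a) P) ⬝ᵥ
      contractDeriv w (dirDeriv (∑ a, s a • U a) P))) with hg
  have hgmeas : Measurable fun p : ((Fin j → ι → ℝ) × (κ → ι → ℝ)) × (κ → ℝ) =>
      g p.1.1 p.1.2 p.2 :=
    measurable_expNeg_contractDeriv_dirDeriv (by fun_prop) (by fun_prop) P l'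
  have hgint := hgmeas.lintegral_prod_right' (ν := gaussPi κ)
  calc contractLaplace (j + 1) P l
      = ∫⁻ w, ∫⁻ z, expNeg (l * (contractDeriv w (dirDeriv z P) ⬝ᵥ
          contractDeriv w (dirDeriv z P))) ∂gaussPi ι ∂gaussTuple (Fin j) ι := by
        rw [contractLaplace_succ]
        exact lintegral_lintegral_swap (measurable_expNeg_contractDeriv_dirDeriv
          continuous_snd continuous_fst P l).aemeasurable
    _ ≤ ∫⁻ w, 2 * ∫⁻ U in G, ∫⁻ s, g w U s ∂gaussPi κ ∂gaussTuple κ ι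
          ∂gaussTuple (Fin j) ι := by
        refine lintegral_mono fun w => ?_
        simp only [hg, contractDeriv_dirDeriv]
        exact lintegral_expNeg_vecMul_le (contractMatrix w P) hl hG
    _ = 2 * ∫⁻ U in G, ∫⁻ w, ∫⁻ s, g w U s ∂gaussPi κ ∂gaussTuple (Fin j) ι
          ∂gaussTuple κ ι := by
        rw [lintegral_const_mul _ hgint.lintegral_prod_right',
          lintegral_lintegral_swap hgint.aemeasurable]
    _ = _ := by
        refine congrArg _ (lintegral_congr fun U => lintegral_lintegral_swap ?_)
        exact (measurable_expNeg_contractDeriv_dirDeriv (by fun_prop) (by fun_prop) P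
          l').aemeasurable

lemma pow_mul_contractLaplace_sum_smul_le {q : ℕ} {δ C : ℝ≥0∞} {P : MvPolynomial ι ℝ}
    (hC : ∀ Q : MvPolynomial ι ℝ, contractDefect j Q Q 1 ≤ δ → ∀ l : ℝ, 0 ≤ l →
      ENNReal.ofReal l ^ q * contractLaplace j Q l ≤ C)
    {U : κ → ι → ℝ}
    (hU : ∀ s : κ → ℝ, s ⬝ᵥ s = 1 →
      contractDefect j (dirDeriv (∑ a, s a • U a) P) (dirDeriv (∑ a, s a • U a) P) 1 ≤ δ)
    {s : κ → ℝ} (hs : 0 < s ⬝ᵥ s) {l : ℝ} (hl : 0 ≤ l) :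
    ENNReal.ofReal l ^ q * contractLaplace j (dirDeriv (∑ a, s a • U a) P) l
      ≤ C * (ENNReal.ofReal (s ⬝ᵥ s) ^ q)⁻¹ := by
  set t := √(s ⬝ᵥ s)
  have ht : t ≠ 0 := (Real.sqrt_pos.mpr hs).ne'
  have htsq : t ^ 2 = s ⬝ᵥ s := Real.sq_sqrt hs.le
  have hunit : (t⁻¹ • s) ⬝ᵥ (t⁻¹ • s) = 1 := by
    rw [smul_dotProduct, dotProduct_smul, ← htsq, smul_eq_mul, smul_eq_mul]
    field_simp
  have hscale : ∑ a, s a • U a = t • ∑ a, (t⁻¹ • s) a • U a := by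
    simp only [Finset.smul_sum, Pi.smul_apply, smul_eq_mul, smul_smul, mul_inv_cancel_left₀ ht]
  have hpow : ENNReal.ofReal (s ⬝ᵥ s) ^ q ≠ 0 := pow_ne_zero _ (ENNReal.ofReal_pos.mpr hs).ne'
  rw [hscale, map_smul, LinearMap.smul_apply, contractLaplace_smul, htsq, ← div_eq_mul_inv,
    ENNReal.le_div_iff_mul_le (.inl hpow) (.inl (by finiteness)), mul_right_comm, ← mul_pow,
    mul_comm (ENNReal.ofReal l), ← ENNReal.ofReal_mul hs.le]
  exact hC _ (hU _ hunit) _ (mul_nonneg hs.le hl)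

lemma pow_mul_contractLaplace_succ_le {q : ℕ} (hq : 0 < q) {δ C : ℝ≥0∞} (hδ₀ : δ ≠ 0)
    (hδ : δ ≠ ⊤) {P : MvPolynomial ι ℝ}
    (hC : ∀ Q : MvPolynomial ι ℝ, contractDefect j Q Q 1 ≤ δ → ∀ l : ℝ, 0 ≤ l →
      ENNReal.ofReal l ^ q * contractLaplace j Q l ≤ C)
    (hP : 4 * ((4 * q : ℕ) : ℝ≥0∞) ^ 2 * contractDefect (j + 1) P P 1 ≤ δ) {l : ℝ} (hl : 0 ≤ l) :
    ENNReal.ofReal l ^ q * contractLaplace (j + 1) P l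
      ≤ ((8 * q : ℕ) : ℝ≥0∞) ^ q * (2 * (C *
        ∫⁻ s, (ENNReal.ofReal (s ⬝ᵥ s) ^ q)⁻¹ ∂gaussPi (Fin (4 * q)))) := by
  set M := ∫⁻ s, (ENNReal.ofReal (s ⬝ᵥ s) ^ q)⁻¹ ∂gaussPi (Fin (4 * q))
  have : Nonempty (Fin (4 * q)) := ⟨⟨0, by omega⟩⟩
  rw [← Fintype.card_fin (4 * q)] at hP
  obtain ⟨G, hGmeas, hG, hdefect⟩ := exists_forall_unit_contractDefect_le P hδ₀ hδ hP
  set l' := l / (8 * q : ℕ) with hl'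
  have hl'₀ : 0 ≤ l' := by positivity
  have hlaplace : contractLaplace (j + 1) P l ≤ 2 * ∫⁻ U in G, ∫⁻ s,
      contractLaplace j (dirDeriv (∑ a, s a • U a) P) l' ∂gaussPi (Fin (4 * q))
        ∂gaussTuple (Fin (4 * q)) ι := by
    refine (contractLaplace_succ_le P hl hG).trans_eq ?_
    rw [Fintype.card_fin, hl']
    congr! 7
    push_cast
    ring
  have hinner (U : Fin (4 * q) → ι → ℝ) (hU : U ∈ G) : ENNReal.ofReal l' ^ q * ∫⁻ s,
      contractLaplace j (dirDeriv (∑ a, s a • U a) P) l' ∂gaussPi (Fin (4 * q)) ≤ C * M := by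
    rw [← lintegral_const_mul' _ _ (by finiteness), ← lintegral_const_mul C (by fun_prop)]
    exact lintegral_mono_ae (ae_dotProduct_self_pos.mono fun s hs =>
      pow_mul_contractLaplace_sum_smul_le hC (hdefect U hU) hs hl'₀)
  have hscale : ENNReal.ofReal l = (8 * q : ℕ) * ENNReal.ofReal l' := by
    rw [← ENNReal.ofReal_natCast, ← ENNReal.ofReal_mul (by positivity),
      mul_div_cancel₀ _ (by positivity)]
  calc ENNReal.ofReal l ^ q * contractLaplace (j + 1) P l
      ≤ ENNReal.ofReal l ^ q * (2 * ∫⁻ U in G, ∫⁻ s, contractLaplace j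
          (dirDeriv (∑ a, s a • U a) P) l' ∂gaussPi (Fin (4 * q))
            ∂gaussTuple (Fin (4 * q)) ι) := by gcongr
    _ = ((8 * q : ℕ) : ℝ≥0∞) ^ q * (2 * ∫⁻ U in G, ENNReal.ofReal l' ^ q *
          ∫⁻ s, contractLaplace j (dirDeriv (∑ a, s a • U a) P) l' ∂gaussPi (Fin (4 * q))
            ∂gaussTuple (Fin (4 * q)) ι) := by
        rw [lintegral_const_mul' _ _ (by finiteness), hscale, mul_pow]
        ring
    _ ≤ ((8 * q : ℕ) : ℝ≥0∞) ^ q * (2 * ∫⁻ _ in G, C * M ∂gaussTuple (Fin (4 * q)) ι) := by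
        gcongr _ * (2 * ?_)
        exact setLIntegral_mono' hGmeas hinner
    _ ≤ _ := by
        rw [setLIntegral_const]
        gcongr _ * (2 * ?_)
        exact mul_le_of_le_one_right' prob_le_one

lemma pow_mul_contractLaplace_zero_le (q : ℕ) {P : MvPolynomial ι ℝ}
    (hP : contractDefect 0 P P 1 ≤ ENNReal.ofReal (1 / 4)) {l : ℝ} (hl : 0 ≤ l) :
    ENNReal.ofReal l ^ q * contractLaplace 0 P l ≤ 2 ^ q * q.factorial := by
  set t := polyGrad 0 P ⬝ᵥ polyGrad 0 P
  have hlaplace : contractLaplace 0 P l = expNeg (l * t) := by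
    simp [contractLaplace, contractDeriv, t]
  have hdefect : contractDefect 0 P P 1 = ENNReal.ofReal ((t - 1) ^ 2) := by
    simp [contractDefect, contractDeriv, t]
  rw [hdefect, ENNReal.ofReal_le_ofReal_iff (by norm_num)] at hP
  have ht : 1 / 2 ≤ t := by nlinarith
  have hscale : ENNReal.ofReal l = 2 * ENNReal.ofReal (l / 2) := by
    rw [← ENNReal.ofReal_ofNat, ← ENNReal.ofReal_mul zero_le_two, mul_div_cancel₀ _ two_ne_zero]
  calc ENNReal.ofReal l ^ q * contractLaplace 0 P l
      ≤ (2 * ENNReal.ofReal (l / 2)) ^ q * expNeg (l / 2) := by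
        rw [hlaplace, hscale]
        gcongr
        exact antitone_expNeg (by nlinarith)
    _ ≤ 2 ^ q * q.factorial := by
        rw [mul_pow, mul_assoc]
        gcongr
        exact ofReal_pow_mul_expNeg_le q (by positivity)

theorem exists_pow_mul_contractLaplace_le (j q : ℕ) :
    ∃ δ C : NNReal, 0 < δ ∧ ∀ (ι : Type) [Fintype ι] (P : MvPolynomial ι ℝ),
      contractDefect j P P 1 ≤ δ → ∀ l : ℝ, 0 ≤ l →
        ENNReal.ofReal l ^ q * contractLaplace j P l ≤ C := by
  rcases q.eq_zero_or_pos with rfl | hq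
  · exact ⟨1, 1, one_pos, fun ι _ P _ l hl => by simpa using contractLaplace_le_one P hl⟩
  induction j with
  | zero =>
    refine ⟨(1 / 4 : ℝ).toNNReal, 2 ^ q * q.factorial, by simp, fun ι _ P hP l hl => ?_⟩
    exact (pow_mul_contractLaplace_zero_le q hP hl).trans_eq (by push_cast; rfl)
  | succ j ih =>
    obtain ⟨δ, C, hδ, hC⟩ := ih
    set M := ∫⁻ s, (ENNReal.ofReal (s ⬝ᵥ s) ^ q)⁻¹ ∂gaussPi (Fin (4 * q))
    have hM : M ≠ ⊤ := (lintegral_inv_pow_dotProduct_gaussPi_lt_top q).ne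
    refine ⟨δ / (4 * (4 * q : ℕ) ^ 2), (8 * q : ℕ) ^ q * (2 * (C * M.toNNReal)), by positivity,
      fun ι _ P hP l hl => ?_⟩
    refine (pow_mul_contractLaplace_succ_le hq (by exact_mod_cast hδ.ne') ENNReal.coe_ne_top
      (hC ι) ?_ hl).trans_eq ?_
    · rw [ENNReal.coe_div (by positivity),
        ENNReal.le_div_iff_mul_le (.inl ?_) (.inl (by finiteness)),
        mul_comm] at hP
      · exact_mod_cast hP
      · norm_cast; positivity
    · push_cast [ENNReal.coe_toNNReal hM]
      rfl

end NegativeMomentsOfContractions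

section CauchySchwarz

variable {Ω ι : Type*} [MeasurableSpace Ω] [Fintype ι]

lemma lintegral_pow_succ_le (μ : Measure Ω) {f : Ω → ℝ≥0∞}
    (hf : AEMeasurable f μ) (n : ℕ) :
    (∫⁻ x, f x ∂μ) ^ (n + 1) ≤ μ Set.univ ^ n * ∫⁻ x, f x ^ (n + 1) ∂μ := by
  have hn : ((n + 1 : ℕ) : ℝ) ≠ 0 := by positivity
  have h := eLpNorm'_le_eLpNorm'_mul_rpow_measure_univ (μ := μ) (f := f) one_pos
    (Nat.one_le_cast.mpr n.succ_pos) hf.aestronglyMeasurable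
  simp only [eLpNorm'_eq_lintegral_enorm, enorm_eq_self, ENNReal.rpow_one, div_one,
    ENNReal.rpow_natCast] at h
  calc (∫⁻ x, f x ∂μ) ^ (n + 1)
      ≤ ((∫⁻ x, f x ^ (n + 1) ∂μ) ^ (1 / ((n + 1 : ℕ) : ℝ))
          * μ Set.univ ^ (1 - 1 / ((n + 1 : ℕ) : ℝ))) ^ (n + 1) := by gcongr
    _ = μ Set.univ ^ n * ∫⁻ x, f x ^ (n + 1) ∂μ := by
        rw [mul_pow, ← ENNReal.rpow_mul_natCast, ← ENNReal.rpow_mul_natCast, sub_mul,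
          one_div_mul_cancel hn, ENNReal.rpow_one, mul_comm]
        simp

lemma exp_neg_mul_exp_neg_add_le (a b : ι → ℝ) :
    Real.exp (-(a ⬝ᵥ a)) * Real.exp (-(b ⬝ᵥ b))
        + 2 * ∑ i, Real.exp (-(a ⬝ᵥ a)) * a i * (Real.exp (-(b ⬝ᵥ b)) * b i)
      ≤ Real.exp (-((a - b) ⬝ᵥ (a - b))) := by
  have hsum : ∑ i, Real.exp (-(a ⬝ᵥ a)) * a i * (Real.exp (-(b ⬝ᵥ b)) * b i)
      = Real.exp (-(a ⬝ᵥ a)) * Real.exp (-(b ⬝ᵥ b)) * (a ⬝ᵥ b) := by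
    simp only [dotProduct, Finset.mul_sum]
    exact Finset.sum_congr rfl fun i _ => by ring
  have hexp : Real.exp (-((a - b) ⬝ᵥ (a - b)))
      = Real.exp (-(a ⬝ᵥ a)) * Real.exp (-(b ⬝ᵥ b)) * Real.exp (2 * (a ⬝ᵥ b)) := by
    rw [← Real.exp_add, ← Real.exp_add, sub_dotProduct, dotProduct_sub, dotProduct_sub,
      dotProduct_comm b]
    ring_nf
  rw [hsum, hexp, mul_left_comm, ← mul_one_add, add_comm]
  gcongr
  exact Real.add_one_le_exp _

lemma abs_exp_neg_dotProduct_mul_le_one (a : ι → ℝ) (i : ι) :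
    |Real.exp (-(a ⬝ᵥ a)) * a i| ≤ 1 := by
  rw [abs_mul, abs_of_pos (Real.exp_pos _), Real.exp_neg, inv_mul_le_iff₀ (Real.exp_pos _)]
  nlinarith [sq_le_dotProduct_self a i, Real.add_one_le_exp (a ⬝ᵥ a), sq_abs (a i),
    sq_nonneg (a i), sq_nonneg (|a i| - 1)]

variable (μ : Measure Ω) [IsProbabilityMeasure μ]

-- Since `exp (2 a·b) ≥ 1 + 2 a·b`, the double integral dominates
-- `(∫ exp (-|h|²))² + 2 |∫ h exp (-|h|²)|²`.
lemma sq_integral_exp_neg_dotProduct_le {h : Ω → ι → ℝ} (hh : Measurable h) :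
    (∫ v, Real.exp (-(h v ⬝ᵥ h v)) ∂μ) ^ 2
      ≤ ∫ p, Real.exp (-((h p.1 - h p.2) ⬝ᵥ (h p.1 - h p.2))) ∂μ.prod μ := by
  set g : Ω → ℝ := fun v => Real.exp (-(h v ⬝ᵥ h v))
  have hgmeas : Measurable g := by fun_prop
  have hg : Integrable g μ :=
    .of_bound (C := 1) hgmeas.aestronglyMeasurable <| .of_forall fun v => by
      simpa [g] using dotProduct_self_nonneg (h v)
  have hgh (i : ι) : Integrable (fun v => g v * h v i) μ :=
    .of_bound (C := 1) (by fun_prop) (.of_forall fun v =>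
      abs_exp_neg_dotProduct_mul_le_one (h v) i)
  calc (∫ v, g v ∂μ) ^ 2
      ≤ (∫ v, g v ∂μ) ^ 2 + 2 * ∑ i, (∫ v, g v * h v i ∂μ) ^ 2 :=
        le_add_of_nonneg_right (by positivity)
    _ = ∫ p, (g p.1 * g p.2 + 2 * ∑ i, g p.1 * h p.1 i * (g p.2 * h p.2 i)) ∂μ.prod μ := by
        rw [integral_add (hg.mul_prod hg) ((integrable_finsetSum _ fun i _ =>
          (hgh i).mul_prod (hgh i)).const_mul 2), integral_const_mul,
          integral_finsetSum _ fun i _ => (hgh i).mul_prod (hgh i)]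
        simp only [sq]
        rw [integral_prod_mul]
        congr! 3 with i
        exact (integral_prod_mul (fun v => g v * h v i) fun v => g v * h v i).symm
    _ ≤ _ := by
        refine integral_mono ((hg.mul_prod hg).add ((integrable_finsetSum _ fun i _ =>
          (hgh i).mul_prod (hgh i)).const_mul 2)) ?_ fun p =>
            exp_neg_mul_exp_neg_add_le (h p.1) (h p.2)
        refine .of_bound (C := 1) (by fun_prop) (.of_forall fun p => ?_)
        simpa using dotProduct_self_nonneg (h p.1 - h p.2)

lemma sq_lintegral_expNeg_dotProduct_le {h : Ω → ι → ℝ} (hh : Measurable h) {l : ℝ} (hl : 0 ≤ l) :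
    (∫⁻ v, expNeg (l * (h v ⬝ᵥ h v)) ∂μ) ^ 2
      ≤ ∫⁻ p, expNeg (l * ((h p.1 - h p.2) ⬝ᵥ (h p.1 - h p.2))) ∂μ.prod μ := by
  have hscale (a : ι → ℝ) : l * (a ⬝ᵥ a) = (√l • a) ⬝ᵥ (√l • a) := by
    simp only [smul_dotProduct, dotProduct_smul, smul_eq_mul, ← mul_assoc, Real.mul_self_sqrt hl]
  simp only [hscale, smul_sub]
  rw [
    lintegral_expNeg (μ.prod μ) (X := fun p => (√l • h p.1 - √l • h p.2) ⬝ᵥ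
      (√l • h p.1 - √l • h p.2)) (by fun_prop) fun _ => dotProduct_self_nonneg _,
    lintegral_expNeg μ (X := fun v => (√l • h v) ⬝ᵥ (√l • h v)) (by fun_prop)
      fun _ => dotProduct_self_nonneg _,
    ← ENNReal.ofReal_pow (integral_nonneg fun v => (Real.exp_pos _).le)]
  exact ENNReal.ofReal_le_ofReal (sq_integral_exp_neg_dotProduct_le μ (by fun_prop))

lemma sq_lintegral_lintegral_expNeg_dotProduct_le {Ω' : Type*} [MeasurableSpace Ω']
    (ν : Measure Ω') [IsProbabilityMeasure ν] {h : Ω' → Ω → ι → ℝ}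
    (hh : Measurable (Function.uncurry h)) {l : ℝ} (hl : 0 ≤ l) :
    (∫⁻ u, ∫⁻ v, expNeg (l * (h u v ⬝ᵥ h u v)) ∂μ ∂ν) ^ 2
      ≤ ∫⁻ p, ∫⁻ u, expNeg (l * ((h u p.1 - h u p.2) ⬝ᵥ (h u p.1 - h u p.2))) ∂ν ∂μ.prod μ := by
  have hmeas : Measurable fun p : Ω' × Ω => expNeg (l * (h p.1 p.2 ⬝ᵥ h p.1 p.2)) := by fun_prop
  calc (∫⁻ u, ∫⁻ v, expNeg (l * (h u v ⬝ᵥ h u v)) ∂μ ∂ν) ^ 2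
      ≤ ∫⁻ u, (∫⁻ v, expNeg (l * (h u v ⬝ᵥ h u v)) ∂μ) ^ 2 ∂ν :=
        (lintegral_pow_succ_le ν hmeas.lintegral_prod_right'.aemeasurable 1).trans_eq (by simp)
    _ ≤ ∫⁻ u, ∫⁻ p, expNeg (l * ((h u p.1 - h u p.2) ⬝ᵥ (h u p.1 - h u p.2))) ∂μ.prod μ ∂ν :=
        lintegral_mono fun u => sq_lintegral_expNeg_dotProduct_le μ
          (hh.comp measurable_prodMk_left) hl
    _ = _ := by
        refine lintegral_lintegral_swap (Measurable.aemeasurable ?_)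
        simp only [Function.uncurry_def]
        fun_prop

end CauchySchwarz

section AffineSubstitution

variable {ι : Type*}

/-- The substitution `x ↦ α x + b` in a polynomial. -/
noncomputable def affineSubst {R : Type*} [CommSemiring R] (α : R) (b : ι → R) :
    MvPolynomial ι R →ₐ[R] MvPolynomial ι R :=
  aeval fun i => C α * X i + C (b i)

lemma eval_affineSubst (α : ℝ) (b u : ι → ℝ) (F : MvPolynomial ι ℝ) :
    eval u (affineSubst α b F) = eval (α • u + b) F := by
  have h : (aeval u).comp (affineSubst α b) = aeval (R := ℝ) (α • u + b) := by
    ext i; simp [affineSubst]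
  simpa using DFunLike.congr_fun h F

lemma pderiv_affineSubst (α : ℝ) (b : ι → ℝ) (i : ι) (F : MvPolynomial ι ℝ) :
    pderiv i (affineSubst α b F) = α • affineSubst α b (pderiv i F) := by
  classical
  induction F using MvPolynomial.induction_on with
  | C a => simp [affineSubst]
  | add p q hp hq => simp [map_add, hp, hq]
  | mul_X p k hp =>
    have hX : pderiv i (affineSubst α b (X k)) = α • affineSubst α b (pderiv i (X k)) := by
      rcases eq_or_ne k i with rfl | h
      · simp [affineSubst, smul_eq_C_mul]
      · simp [affineSubst, pderiv_X_of_ne h]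
    rw [map_mul, pderiv_mul, pderiv_mul, hp, hX, map_add, map_mul, map_mul, smul_add,
      smul_mul_assoc, mul_smul_comm]

lemma polyGrad_affineSubst (α : ℝ) (b u : ι → ℝ) (F : MvPolynomial ι ℝ) :
    polyGrad u (affineSubst α b F) = α • polyGrad (α • u + b) F := by
  ext i
  simp [polyGrad_apply, pderiv_affineSubst, eval_affineSubst]

variable [Fintype ι]

lemma pderiv_dirDeriv (i : ι) (z : ι → ℝ) (F : MvPolynomial ι ℝ) :
    pderiv i (dirDeriv z F) = dirDeriv z (pderiv i F) := by
  simp only [dirDeriv_apply, map_sum, Derivation.map_smul, pderiv_pderiv_comm i]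

lemma dirDeriv_comm (y z : ι → ℝ) (F : MvPolynomial ι ℝ) :
    dirDeriv y (dirDeriv z F) = dirDeriv z (dirDeriv y F) := by
  rw [dirDeriv_apply y, dirDeriv_apply y F, map_sum]
  simp only [pderiv_dirDeriv, map_smul]

lemma totalDegree_dirDeriv_le {k : ℕ} {F : MvPolynomial ι ℝ} (h : F.totalDegree ≤ k + 1)
    (z : ι → ℝ) : (dirDeriv z F).totalDegree ≤ k := by
  rw [dirDeriv_apply]
  exact totalDegree_finsetSum_le fun i _ =>
    (totalDegree_smul_le _ _).trans (totalDegree_le_succ_iff_forall_pderiv.mp h i)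

lemma dirDeriv_affineSubst (α : ℝ) (b z : ι → ℝ) (F : MvPolynomial ι ℝ) :
    dirDeriv z (affineSubst α b F) = α • affineSubst α b (dirDeriv z F) := by
  simp only [dirDeriv_apply, pderiv_affineSubst, map_sum, map_smul, Finset.smul_sum, smul_comm α]

lemma affineSubst_sub_of_totalDegree_le_one {F : MvPolynomial ι ℝ} (h : F.totalDegree ≤ 1)
    (α : ℝ) (b b' : ι → ℝ) :
    affineSubst α b F - affineSubst α b' F = C (eval 0 (dirDeriv (b - b') F)) := by
  classical
  have hmonomial : ∀ s ∈ F.support, ∀ c : ℝ,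
      affineSubst α b (monomial s c) - affineSubst α b' (monomial s c)
        = C (eval 0 (dirDeriv (b - b') (monomial s c))) := by
    intro s hs c
    rcases eq_or_ne s 0 with rfl | hs0
    · simp [affineSubst, dirDeriv_apply]
    · obtain ⟨i, hi⟩ := Finsupp.ne_iff.mp hs0
      obtain ⟨t, rfl⟩ := exists_add_of_le
        (Finsupp.single_le_iff.mpr (Nat.one_le_iff_ne_zero.mpr hi))
      have hdeg : (Finsupp.single i 1 + t).degree ≤ 1 := (le_totalDegree hs).trans h
      have ht : t = 0 := by
        rw [map_add, Finsupp.degree_single] at hdeg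
        exact (Finsupp.degree_eq_zero_iff t).mp (by omega)
      have hsubst (a : ι → ℝ) : affineSubst α a (C c * X i) = C c * (C α * X i + C (a i)) := by
        simp [affineSubst]
      have hderiv : dirDeriv (b - b') (C c * X i) = C ((b i - b' i) * c) := by
        simp [dirDeriv_apply, pderiv_X, Pi.single_apply, smul_eq_C_mul, sub_mul]
      rw [ht, add_zero, ← C_mul_X_eq_monomial, hsubst, hsubst, hderiv, eval_C, C_mul, C_sub]
      ring
  conv_lhs => rw [F.as_sum, map_sum, map_sum, ← Finset.sum_sub_distrib]
  conv_rhs => rw [F.as_sum, map_sum, map_sum, map_sum]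
  exact Finset.sum_congr rfl fun s hs => hmonomial s hs _

lemma totalDegree_affineSubst_sub_le {ι : Type*} [Finite ι] {k : ℕ} {F : MvPolynomial ι ℝ}
    (h : F.totalDegree ≤ k + 1) (α : ℝ) (b b' : ι → ℝ) :
    (affineSubst α b F - affineSubst α b' F).totalDegree ≤ k := by
  have := Fintype.ofFinite ι
  induction k generalizing F with
  | zero => rw [affineSubst_sub_of_totalDegree_le_one h, totalDegree_C]
  | succ k ih =>
    refine totalDegree_le_succ_iff_forall_pderiv.mpr fun i => ?_
    rw [map_sub, pderiv_affineSubst, pderiv_affineSubst, ← smul_sub]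
    exact (totalDegree_smul_le _ _).trans (ih (totalDegree_le_succ_iff_forall_pderiv.mp h i))

lemma contractDeriv_affineSubst_sub {k : ℕ} {F : MvPolynomial ι ℝ} (h : F.totalDegree ≤ k + 2)
    (w : Fin k → ι → ℝ) (α : ℝ) (b b' : ι → ℝ) :
    contractDeriv w (affineSubst α b F - affineSubst α b' F)
      = α ^ (k + 1) • contractDeriv w (dirDeriv (b - b') F) := by
  induction k generalizing F with
  | zero =>
    ext i
    have hi := totalDegree_le_succ_iff_forall_pderiv.mp h i
    simp only [contractDeriv, polyGrad_apply, Pi.smul_apply, map_sub, pderiv_affineSubst,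
      ← smul_sub, affineSubst_sub_of_totalDegree_le_one hi]
    simp [pderiv_dirDeriv]
  | succ k ih =>
    simp only [contractDeriv, LinearMap.comp_apply]
    rw [map_sub, dirDeriv_affineSubst, dirDeriv_affineSubst, ← smul_sub, map_smul,
      ih (totalDegree_dirDeriv_le h _), smul_smul, dirDeriv_comm, pow_succ' α (k + 1)]

end AffineSubstitution

section Weyl

@[fun_prop]
lemma continuous_polyGrad {ι X : Type*} [TopologicalSpace X] {x : X → ι → ℝ}
    (hx : Continuous x) (F : MvPolynomial ι ℝ) : Continuous fun t => polyGrad (x t) F := by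
  refine continuous_pi fun i => ?_
  simp only [polyGrad_apply]
  exact (MvPolynomial.continuous_eval _).comp hx

lemma polyGrad_eq_of_totalDegree_le_one {ι : Type*} {F : MvPolynomial ι ℝ}
    (h : F.totalDegree ≤ 1) (x y : ι → ℝ) : polyGrad x F = polyGrad y F := by
  ext i
  have hi := totalDegree_le_succ_iff_forall_pderiv.mp h i
  rw [polyGrad_apply, polyGrad_apply, totalDegree_eq_zero_iff_eq_C.mp (Nat.le_zero.mp hi), eval_C,
    eval_C]

variable {ι : Type} [Fintype ι]

/-- The Laplace transform of the squared norm of the gradient of a polynomial in independent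
standard Gaussian variables. -/
noncomputable def gradLaplace (l : ℝ) (F : MvPolynomial ι ℝ) : ℝ≥0∞ :=
  ∫⁻ x, expNeg (l * sqField F x) ∂gaussPi ι

lemma sqField_eq_dotProduct (F : MvPolynomial ι ℝ) (x : ι → ℝ) :
    sqField F x = polyGrad x F ⬝ᵥ polyGrad x F := by
  simp only [sqField, dotProduct, polyGrad_apply, sq]

lemma sqField_nonneg (F : MvPolynomial ι ℝ) (x : ι → ℝ) : 0 ≤ sqField F x := by
  unfold sqField; positivity

lemma sqField_affineSubst_sub (α : ℝ) (b b' u : ι → ℝ) (F : MvPolynomial ι ℝ) :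
    sqField (affineSubst α b F - affineSubst α b' F) u
      = α ^ 2 * ((polyGrad (α • u + b) F - polyGrad (α • u + b') F) ⬝ᵥ
          (polyGrad (α • u + b) F - polyGrad (α • u + b') F)) := by
  rw [sqField_eq_dotProduct, map_sub, polyGrad_affineSubst, polyGrad_affineSubst, ← smul_sub,
    smul_dotProduct, dotProduct_smul, smul_eq_mul, smul_eq_mul, sq, mul_assoc]

lemma lintegral_prod_smul_add_smul {α β : ℝ} (h : α ^ 2 + β ^ 2 = 1) {f : (ι → ℝ) → ℝ≥0∞}
    (hf : Measurable f) :
    ∫⁻ p, f (α • p.1 + β • p.2) ∂(gaussPi ι).prod (gaussPi ι) = ∫⁻ z, f z ∂gaussPi ι := by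
  have hunit : ![α, β] ⬝ᵥ ![α, β] = 1 := by simpa [← sq] using h
  rw [← lintegral_sum_smul_gaussTuple hunit hf]
  simp only [Fin.sum_univ_two, Matrix.cons_val_zero, Matrix.cons_val_one]
  exact ((measurePreserving_finTwoArrow (gaussPi ι)).lintegral_comp
    (f := fun p => f (α • p.1 + β • p.2)) (by fun_prop)).symm

lemma gradLaplace_sq_le {α : ℝ} (hα : α ^ 2 = 2⁻¹) {l : ℝ} (hl : 0 ≤ l) (F : MvPolynomial ι ℝ) :
    gradLaplace l F ^ 2 ≤ ∫⁻ p, gradLaplace (2 * l)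
      (affineSubst α (α • p.1) F - affineSubst α (α • p.2) F) ∂(gaussPi ι).prod (gaussPi ι) := by
  have hgrad := (continuous_polyGrad continuous_id F).measurable
  have hrotate : gradLaplace l F = ∫⁻ u, ∫⁻ v, expNeg (l *
      (polyGrad (α • u + α • v) F ⬝ᵥ polyGrad (α • u + α • v) F)) ∂gaussPi ι ∂gaussPi ι := by
    simp only [gradLaplace, sqField_eq_dotProduct]
    rw [← lintegral_prod_smul_add_smul (α := α) (β := α) (by rw [hα]; norm_num) (by fun_prop),
      lintegral_prod _ (by fun_prop)]
  rw [hrotate]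
  refine (sq_lintegral_lintegral_expNeg_dotProduct_le (gaussPi ι) (gaussPi ι)
    (h := fun u v => polyGrad (α • u + α • v) F)
    (continuous_polyGrad (by fun_prop) F).measurable hl).trans_eq ?_
  refine lintegral_congr fun p => lintegral_congr fun u => congrArg expNeg ?_
  rw [sqField_affineSubst_sub, hα]
  ring

lemma measurable_gradLaplace_affineSubst_sub (α l : ℝ) (F : MvPolynomial ι ℝ) :
    Measurable fun p : (ι → ℝ) × (ι → ℝ) =>
      gradLaplace l (affineSubst α (α • p.1) F - affineSubst α (α • p.2) F) := by
  have hfst : Measurable fun z : ((ι → ℝ) × (ι → ℝ)) × (ι → ℝ) =>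
      polyGrad (α • z.2 + α • z.1.1) F := (continuous_polyGrad (by fun_prop) F).measurable
  have hsnd : Measurable fun z : ((ι → ℝ) × (ι → ℝ)) × (ι → ℝ) =>
      polyGrad (α • z.2 + α • z.1.2) F := (continuous_polyGrad (by fun_prop) F).measurable
  simp only [gradLaplace, sqField_affineSubst_sub]
  exact Measurable.lintegral_prod_right' (f := fun z : ((ι → ℝ) × (ι → ℝ)) × (ι → ℝ) =>
    expNeg (l * (α ^ 2 * ((polyGrad (α • z.2 + α • z.1.1) F - polyGrad (α • z.2 + α • z.1.2) F) ⬝ᵥ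
      (polyGrad (α • z.2 + α • z.1.1) F - polyGrad (α • z.2 + α • z.1.2) F))))) (by fun_prop)

lemma contractLaplace_affineSubst_sub {k : ℕ} {F : MvPolynomial ι ℝ} (hF : F.totalDegree ≤ k + 2)
    {α : ℝ} (hα : α ^ 2 = 2⁻¹) (x y : ι → ℝ) (l : ℝ) :
    contractLaplace k (affineSubst α (α • x) F - affineSubst α (α • y) F) l
      = contractLaplace k (dirDeriv (α • x + (-α) • y) F) (l * (1 / 2) ^ (k + 1)) := by
  refine lintegral_congr fun w => congrArg expNeg ?_
  have hpow : α ^ (k + 1) * α ^ (k + 1) = (1 / 2) ^ (k + 1) := by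
    rw [← mul_pow, ← sq, hα, one_div]
  rw [contractDeriv_affineSubst_sub hF, smul_dotProduct, dotProduct_smul, smul_eq_mul,
    smul_eq_mul, ← mul_assoc (α ^ _), hpow, neg_smul, ← sub_eq_add_neg]
  ring

-- Each differencing step squares the Laplace transform and lowers the degree by one.
theorem exists_gradLaplace_pow_le (k : ℕ) : ∃ c : ℝ, 0 < c ∧
    ∀ (ι : Type) [Fintype ι] (F : MvPolynomial ι ℝ), F.totalDegree ≤ k + 1 → ∀ l : ℝ, 0 ≤ l →
      gradLaplace l F ^ (2 ^ k) ≤ contractLaplace k F (l * c) := by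
  induction k with
  | zero =>
    refine ⟨1, one_pos, fun ι _ F hF l _ => ?_⟩
    have hconst (x : ι → ℝ) : polyGrad x F = polyGrad 0 F :=
      polyGrad_eq_of_totalDegree_le_one hF x 0
    simp [gradLaplace, contractLaplace, contractDeriv, sqField_eq_dotProduct, hconst]
  | succ k ih =>
    obtain ⟨c, hc, hweyl⟩ := ih
    refine ⟨c * (1 / 2) ^ k, by positivity, fun ι _ F hF l hl => ?_⟩
    obtain ⟨α, hα⟩ : ∃ α : ℝ, α ^ 2 = 2⁻¹ := ⟨√2⁻¹, Real.sq_sqrt (by norm_num)⟩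
    set D : (ι → ℝ) × (ι → ℝ) → MvPolynomial ι ℝ := fun p =>
      affineSubst α (α • p.1) F - affineSubst α (α • p.2) F
    have hcontract (p : (ι → ℝ) × (ι → ℝ)) : contractLaplace k (D p) (2 * l * c)
        = contractLaplace k (dirDeriv (α • p.1 + (-α) • p.2) F) (l * (c * (1 / 2) ^ k)) := by
      rw [contractLaplace_affineSubst_sub hF hα]
      ring_nf
    calc gradLaplace l F ^ (2 ^ (k + 1))
        ≤ (∫⁻ p, gradLaplace (2 * l) (D p) ∂(gaussPi ι).prod (gaussPi ι)) ^ (2 ^ k) := by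
          rw [pow_succ', pow_mul]
          gcongr
          exact gradLaplace_sq_le hα hl F
      _ ≤ ∫⁻ p, gradLaplace (2 * l) (D p) ^ (2 ^ k) ∂(gaussPi ι).prod (gaussPi ι) := by
          have hjensen := lintegral_pow_succ_le ((gaussPi ι).prod (gaussPi ι))
            (measurable_gradLaplace_affineSubst_sub α (2 * l) F).aemeasurable (2 ^ k - 1)
          simpa [Nat.sub_add_cancel Nat.one_le_two_pow] using hjensen
      _ ≤ ∫⁻ p, contractLaplace k (dirDeriv (α • p.1 + (-α) • p.2) F) (l * (c * (1 / 2) ^ k))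
            ∂(gaussPi ι).prod (gaussPi ι) :=
          lintegral_mono fun p => (hweyl ι (D p) (totalDegree_affineSubst_sub_le hF _ _ _) (2 * l)
            (by positivity)).trans_eq (hcontract p)
      _ = contractLaplace (k + 1) F (l * (c * (1 / 2) ^ k)) := by
          rw [contractLaplace_succ]
          refine lintegral_prod_smul_add_smul (f := fun z => contractLaplace k (dirDeriv z F) _)
            (by rw [neg_sq, hα]; norm_num) ?_
          exact (measurable_expNeg_contractDeriv_dirDeriv (E := (ι → ℝ) × (Fin k → ι → ℝ))
            continuous_snd continuous_fst F _).lintegral_prod_right'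

end Weyl

section ContractionMoments

section DirectionalMoments

variable {ι : Type} [Fintype ι]

lemma ofReal_gaussE {G : MvPolynomial ι ℝ} (h : ∀ x, 0 ≤ eval x G) :
    ENNReal.ofReal (gaussE G) = ∫⁻ x, ENNReal.ofReal (eval x G) ∂gaussPi ι :=
  ofReal_integral_eq_lintegral_ofReal (integrable_eval_gaussPi G) (.of_forall h)

lemma eval_gradSq (F : MvPolynomial ι ℝ) (x : ι → ℝ) : eval x (gradSq F) = sqField F x := by
  simp [gradSq, sqField]

lemma eval_dirDeriv (z x : ι → ℝ) (F : MvPolynomial ι ℝ) :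
    eval x (dirDeriv z F) = polyGrad x F ⬝ᵥ z := by
  simp [dirDeriv_apply, smul_eval, dotProduct, polyGrad_apply, mul_comm]

lemma lintegral_gaussE_dirDeriv_pow {n : ℕ} (hn : Even n) (F : MvPolynomial ι ℝ) :
    ∫⁻ z, ENNReal.ofReal (gaussE (dirDeriv z F ^ n)) ∂gaussPi ι
      = ∫⁻ x, ENNReal.ofReal (∫ z, (polyGrad x F ⬝ᵥ z) ^ n ∂gaussPi ι) ∂gaussPi ι := by
  have hgrad (z : ι → ℝ) : ENNReal.ofReal (gaussE (dirDeriv z F ^ n))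
      = ∫⁻ x, ENNReal.ofReal ((polyGrad x F ⬝ᵥ z) ^ n) ∂gaussPi ι := by
    rw [ofReal_gaussE fun x => by rw [map_pow]; exact hn.pow_nonneg _]
    simp only [map_pow, eval_dirDeriv]
  have hint (a : ι → ℝ) : Integrable (fun z => (a ⬝ᵥ z) ^ n) (gaussPi ι) := by
    have h := integrable_eval_gaussPi ((∑ i, C (a i) * X i) ^ n)
    simpa only [map_pow, map_sum, map_mul, eval_C, eval_X, dotProduct] using h
  simp only [hgrad]
  have hcont : Continuous fun p : (ι → ℝ) × (ι → ℝ) => polyGrad p.2 F ⬝ᵥ p.1 :=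
    (continuous_polyGrad continuous_snd F).dotProduct continuous_fst
  rw [lintegral_lintegral_swap (hcont.pow n).measurable.ennreal_ofReal.aemeasurable]
  exact lintegral_congr fun x => (ofReal_integral_eq_lintegral_ofReal (hint _)
    (.of_forall fun z => hn.pow_nonneg _)).symm

lemma lintegral_gaussE_dirDeriv_sq (F : MvPolynomial ι ℝ) :
    ∫⁻ z, ENNReal.ofReal (gaussE (dirDeriv z F ^ 2)) ∂gaussPi ι
      = ENNReal.ofReal (gaussE (gradSq F)) := by
  rw [lintegral_gaussE_dirDeriv_pow even_two,
    ofReal_gaussE fun x => by rw [eval_gradSq]; exact sqField_nonneg F x]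
  simp only [integral_sq_dotProduct_gaussPi, eval_gradSq, sqField_eq_dotProduct]

lemma lintegral_gaussE_dirDeriv_pow_four (F : MvPolynomial ι ℝ) :
    ∫⁻ z, ENNReal.ofReal (gaussE (dirDeriv z F ^ 4)) ∂gaussPi ι
      = ENNReal.ofReal (3 * gaussE (gradSq F ^ 2)) := by
  rw [lintegral_gaussE_dirDeriv_pow (by decide), ← smul_eq_mul, ← map_smul,
    ofReal_gaussE fun x => by rw [smul_eval, map_pow]; positivity]
  simp only [integral_pow_four_dotProduct_gaussPi, smul_eval, map_pow, eval_gradSq,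
    sqField_eq_dotProduct]

lemma lintegral_comp_sqField_of_totalDegree_le_one {F : MvPolynomial ι ℝ} (h : F.totalDegree ≤ 1)
    (g : ℝ → ℝ≥0∞) :
    ∫⁻ x, g (sqField F x) ∂gaussPi ι
      = ∫⁻ w, g (contractDeriv w F ⬝ᵥ contractDeriv w F) ∂gaussTuple (Fin 0) ι := by
  have hconst (x : ι → ℝ) : polyGrad x F = polyGrad 0 F := polyGrad_eq_of_totalDegree_le_one h x 0
  simp [contractDeriv, sqField_eq_dotProduct, hconst]

end DirectionalMoments

variable {K j : ℕ} {F : MvPolynomial (Fin K) ℝ}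

lemma dirDeriv_mem_chaos (h : F ∈ chaos K (j + 1)) (z : Fin K → ℝ) : dirDeriv z F ∈ chaos K j := by
  rw [dirDeriv_apply]
  exact Submodule.sum_mem _ fun i _ => Submodule.smul_mem _ _ (pderiv_mem_chaos h i)

lemma lintegral_contractDeriv_dotProduct (h : F ∈ chaos K (j + 1)) :
    ∫⁻ w, ENNReal.ofReal (contractDeriv w F ⬝ᵥ contractDeriv w F) ∂gaussTuple (Fin j) (Fin K)
      = ENNReal.ofReal ((j + 1).factorial * gaussE (F ^ 2)) := by
  induction j generalizing F with
  | zero =>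
    rw [← lintegral_comp_sqField_of_totalDegree_le_one (totalDegree_le_of_mem_chaos h)]
    simp only [← eval_gradSq]
    rw [← ofReal_gaussE fun x => by rw [eval_gradSq]; exact sqField_nonneg F x,
      gaussE_gradSq_of_eigen (numberOp_eq_smul_of_mem_chaos h)]
    simp
  | succ j ih =>
    rw [lintegral_gaussTuple_succ
      (continuous_contractDeriv_dotProduct F F).measurable.ennreal_ofReal]
    simp only [contractDeriv_cons, ih (dirDeriv_mem_chaos h _),
      ENNReal.ofReal_mul (Nat.cast_nonneg (α := ℝ) (j + 1).factorial)]
    rw [lintegral_const_mul' _ _ ENNReal.ofReal_ne_top, lintegral_gaussE_dirDeriv_sq,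
      gaussE_gradSq_of_eigen (numberOp_eq_smul_of_mem_chaos h),
      ← ENNReal.ofReal_mul (by positivity), Nat.factorial_succ (j + 1)]
    congr 1
    push_cast
    ring

lemma lintegral_sq_contractDeriv_dotProduct_le (h : F ∈ chaos K (j + 1)) :
    ∫⁻ w, ENNReal.ofReal ((contractDeriv w F ⬝ᵥ contractDeriv w F) ^ 2)
        ∂gaussTuple (Fin j) (Fin K)
      ≤ ENNReal.ofReal (((j + 1).factorial ^ 2 / 3 : ℝ) * gaussE (F ^ 4)) := by
  induction j generalizing F with
  | zero =>
    have hfourth := three_mul_gaussE_gradSq_sq_le (totalDegree_le_of_mem_chaos h)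
      (numberOp_eq_smul_of_mem_chaos h)
    rw [← lintegral_comp_sqField_of_totalDegree_le_one (totalDegree_le_of_mem_chaos h)
      fun t => ENNReal.ofReal (t ^ 2)]
    simp only [← eval_gradSq, ← map_pow]
    rw [← ofReal_gaussE fun x => by rw [map_pow]; positivity]
    refine ENNReal.ofReal_le_ofReal ?_
    simp only [zero_add, Nat.factorial_one, Nat.cast_one, one_pow, one_mul] at hfourth ⊢
    linarith
  | succ j ih =>
    have hfourth := three_mul_gaussE_gradSq_sq_le (totalDegree_le_of_mem_chaos h)
      (numberOp_eq_smul_of_mem_chaos h)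
    have hfac : (0 : ℝ) ≤ (j + 1).factorial ^ 2 / 3 := by positivity
    rw [lintegral_gaussTuple_succ
      ((continuous_contractDeriv_dotProduct F F).measurable.pow_const 2).ennreal_ofReal]
    simp only [contractDeriv_cons]
    refine (lintegral_mono fun z => ih (dirDeriv_mem_chaos h z)).trans ?_
    simp only [ENNReal.ofReal_mul hfac]
    rw [lintegral_const_mul' _ _ ENNReal.ofReal_ne_top, lintegral_gaussE_dirDeriv_pow_four,
      ← ENNReal.ofReal_mul hfac]
    refine ENNReal.ofReal_le_ofReal ((mul_le_mul_of_nonneg_left hfourth hfac).trans_eq ?_)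
    rw [Nat.factorial_succ (j + 1)]
    push_cast
    ring

-- Expand the square of `|∇ʲ⁺¹F|² / (j+1)! - 1`.
lemma contractDefect_le_moments (h : F ∈ chaos K (j + 1)) {c : ℝ}
    (hc : c ^ 2 = ((j + 1).factorial : ℝ)⁻¹) :
    contractDefect j (c • F) (c • F) 1
      ≤ ENNReal.ofReal (gaussE (F ^ 4) / 3 - 2 * gaussE (F ^ 2) + 1) := by
  set N : (Fin j → Fin K → ℝ) → ℝ := fun w => contractDeriv w F ⬝ᵥ contractDeriv w F with hN
  have hNmeas : Measurable N := (continuous_contractDeriv_dotProduct F F).measurable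
  have hf : ((j + 1).factorial : ℝ) ≠ 0 := by positivity
  have hsq (w : Fin j → Fin K → ℝ) :
      ENNReal.ofReal ((contractDeriv w (c • F) ⬝ᵥ contractDeriv w (c • F) - 1) ^ 2)
          + ENNReal.ofReal (2 * c ^ 2) * ENNReal.ofReal (N w)
        = ENNReal.ofReal ((c ^ 2) ^ 2) * ENNReal.ofReal (N w ^ 2) + 1 := by
    have hNw : 0 ≤ N w := dotProduct_self_nonneg _
    rw [← ENNReal.ofReal_mul (by positivity), ← ENNReal.ofReal_mul (by positivity),
      ← ENNReal.ofReal_one, ← ENNReal.ofReal_add (by positivity) (by positivity),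
      ← ENNReal.ofReal_add (by positivity) zero_le_one]
    simp only [map_smul, smul_dotProduct, dotProduct_smul, smul_eq_mul, hN]
    ring_nf
  have htotal := lintegral_congr (μ := gaussTuple (Fin j) (Fin K)) hsq
  rw [lintegral_add_right _ (by fun_prop), lintegral_add_right _ measurable_const,
    lintegral_const_mul _ (by fun_prop), lintegral_const_mul _ (by fun_prop),
    lintegral_contractDeriv_dotProduct h, lintegral_one, measure_univ,
    ← ENNReal.ofReal_mul (by positivity)] at htotal
  have hmean : 2 * c ^ 2 * ((j + 1).factorial * gaussE (F ^ 2)) = 2 * gaussE (F ^ 2) := by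
    rw [hc]; field_simp
  have hsecond : ENNReal.ofReal ((c ^ 2) ^ 2) * ∫⁻ w, ENNReal.ofReal (N w ^ 2)
      ∂gaussTuple (Fin j) (Fin K) ≤ ENNReal.ofReal (gaussE (F ^ 4) / 3) := by
    refine (mul_le_mul_right (lintegral_sq_contractDeriv_dotProduct_le h) _).trans_eq ?_
    rw [← ENNReal.ofReal_mul (by positivity), hc]
    congr 1
    field_simp
  have hF := gaussE_pow_nonneg (n := 4) (by decide) F
  rw [sub_add_eq_add_sub, ENNReal.ofReal_sub _ (mul_nonneg zero_le_two (gaussE_sq_nonneg F))]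
  refine ENNReal.le_sub_of_add_le_right ENNReal.ofReal_ne_top ?_
  rw [ENNReal.ofReal_add (by positivity) zero_le_one, ENNReal.ofReal_one, ← hmean]
  exact htotal.trans_le (by gcongr)

end ContractionMoments

section Hypercontractivity

lemma lintegral_sum_pow_succ_le {α κ : Type*} [MeasurableSpace α] [Fintype κ] {μ : Measure α}
    {f : κ → α → ℝ≥0∞} (hf : ∀ i, Measurable (f i)) {n : ℕ} {C : ℝ≥0∞}
    (h : ∀ i, ∫⁻ x, f i x ^ (n + 1) ∂μ ≤ C * (∫⁻ x, f i x ∂μ) ^ (n + 1)) :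
    ∫⁻ x, (∑ i, f i x) ^ (n + 1) ∂μ ≤ C * (∫⁻ x, ∑ i, f i x ∂μ) ^ (n + 1) := by
  have hn : ((n + 1 : ℕ) : ℝ) ≠ 0 := by positivity
  have hnorm (g : α → ℝ≥0∞) : eLpNorm' g (n + 1 : ℕ) μ ^ (n + 1) = ∫⁻ x, g x ^ (n + 1) ∂μ := by
    simp only [eLpNorm'_eq_lintegral_enorm, enorm_eq_self, ENNReal.rpow_natCast]
    rw [← ENNReal.rpow_mul_natCast, one_div_mul_cancel hn, ENNReal.rpow_one]
  have hterm (i : κ) : eLpNorm' (f i) (n + 1 : ℕ) μ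
      ≤ C ^ (1 / ((n + 1 : ℕ) : ℝ)) * ∫⁻ x, f i x ∂μ := by
    simp only [eLpNorm'_eq_lintegral_enorm, enorm_eq_self, ENNReal.rpow_natCast]
    refine (ENNReal.rpow_le_rpow (h i) (by positivity)).trans_eq ?_
    rw [ENNReal.mul_rpow_of_nonneg _ _ (by positivity), one_div,
      ENNReal.pow_rpow_inv_natCast n.succ_ne_zero]
  calc ∫⁻ x, (∑ i, f i x) ^ (n + 1) ∂μ
      = eLpNorm' (∑ i, f i) (n + 1 : ℕ) μ ^ (n + 1) := by simp only [hnorm, Finset.sum_apply]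
    _ ≤ (∑ i, C ^ (1 / ((n + 1 : ℕ) : ℝ)) * ∫⁻ x, f i x ∂μ) ^ (n + 1) := by
        gcongr
        exact (eLpNorm'_sum_le (fun i _ => (hf i).aestronglyMeasurable)
          (Nat.one_le_cast.2 n.succ_pos)).trans (Finset.sum_le_sum fun i _ => hterm i)
    _ = C * (∫⁻ x, ∑ i, f i x ∂μ) ^ (n + 1) := by
        rw [← Finset.mul_sum, mul_pow, ← ENNReal.rpow_mul_natCast, one_div_mul_cancel hn,
          ENNReal.rpow_one, lintegral_finsetSum _ fun i _ => hf i]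

variable {ι : Type} [Fintype ι]

lemma gaussE_gradSq_pow_le {n : ℕ} {C : ℝ} (hC : 0 ≤ C) {F : MvPolynomial ι ℝ}
    (h : ∀ i, gaussE (pderiv i F ^ (2 * (n + 1))) ≤ C * gaussE (pderiv i F ^ 2) ^ (n + 1)) :
    gaussE (gradSq F ^ (n + 1)) ≤ C * gaussE (gradSq F) ^ (n + 1) := by
  have hsum (x : ι → ℝ) : ENNReal.ofReal (eval x (gradSq F))
      = ∑ i, ENNReal.ofReal (eval x (pderiv i F ^ 2)) := by
    rw [gradSq, map_sum, ENNReal.ofReal_sum_of_nonneg fun i _ => by rw [map_pow]; positivity]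
  have hgrad (x : ι → ℝ) : 0 ≤ eval x (gradSq F) := by rw [eval_gradSq]; exact sqField_nonneg F x
  refine (ENNReal.ofReal_le_ofReal_iff (by have := gaussE_gradSq_nonneg F; positivity)).1 ?_
  rw [ENNReal.ofReal_mul hC, ENNReal.ofReal_pow (gaussE_gradSq_nonneg F), ofReal_gaussE hgrad,
    ofReal_gaussE fun x => by rw [map_pow]; exact pow_nonneg (hgrad x) _]
  simp only [map_pow (eval _) (gradSq F), ENNReal.ofReal_pow (hgrad _), hsum]
  refine lintegral_sum_pow_succ_le
    (fun i => (continuous_eval (pderiv i F ^ 2)).measurable.ennreal_ofReal) fun i => ?_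
  have hsq (x : ι → ℝ) : 0 ≤ eval x (pderiv i F ^ 2) := by rw [map_pow]; positivity
  simp only [← ENNReal.ofReal_pow (hsq _), ← map_pow (eval _) (pderiv i F ^ 2), ← pow_mul]
  rw [← ofReal_gaussE hsq,
    ← ofReal_gaussE fun x => by rw [pow_mul, map_pow]; exact pow_nonneg (hsq x) _,
    ← ENNReal.ofReal_pow (gaussE_sq_nonneg _), ← ENNReal.ofReal_mul hC]
  exact ENNReal.ofReal_le_ofReal (h i)

lemma gaussE_pow_add_two_of_eigen {F : MvPolynomial ι ℝ} {m : ℝ} (hL : numberOp F = m • F)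
    (n : ℕ) : m * gaussE (F ^ (n + 2)) = (n + 1) * gaussE (F ^ n * gradSq F) := by
  have h := gaussE_mul_numberOp (F ^ (n + 1)) F
  rw [hL, mul_smul_comm, map_smul, smul_eq_mul, ← pow_succ] at h
  rw [h, ← smul_eq_mul, ← map_smul, gradSq, Finset.mul_sum, Finset.smul_sum, map_sum]
  refine Finset.sum_congr rfl fun i _ => congrArg gaussE ?_
  rw [pderiv_pow, Nat.add_sub_cancel, smul_eq_C_mul]
  push_cast [map_add, map_natCast, map_one]
  ring

lemma pow_mul_le_pow_succ_add_pow_succ {a b : ℝ} (ha : 0 ≤ a) (hb : 0 ≤ b) (n : ℕ) :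
    a ^ n * b ≤ a ^ (n + 1) + b ^ (n + 1) := by
  have hmax : a ^ n * b ≤ max a b ^ (n + 1) := by
    rw [pow_succ]
    gcongr <;> simp
  refine hmax.trans ?_
  rcases max_choice a b with h | h <;> rw [h]
  exacts [le_add_of_nonneg_right (by positivity), le_add_of_nonneg_left (by positivity)]

lemma gaussE_pow_le_of_eigen {F : MvPolynomial ι ℝ} {m : ℝ} (hL : numberOp F = m • F)
    (hm : 1 ≤ m) (n : ℕ) :
    gaussE (F ^ (2 * (n + 1)))
      ≤ (2 * (2 * n + 1)) ^ (n + 1) * gaussE (gradSq F ^ (n + 1)) := by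
  set T : ℝ := 2 * (2 * n + 1) with hT
  have hibp := gaussE_pow_add_two_of_eigen hL (2 * n)
  have hyoung : T * gaussE (F ^ (2 * n) * gradSq F)
      ≤ gaussE (F ^ (2 * (n + 1))) + T ^ (n + 1) * gaussE (gradSq F ^ (n + 1)) := by
    simp only [← smul_eq_mul (a := T), ← smul_eq_mul (a := T ^ (n + 1)), ← map_smul, ← map_add]
    refine gaussE_mono fun x => ?_
    have hgrad : 0 ≤ T * eval x (gradSq F) := by
      rw [eval_gradSq]; have := sqField_nonneg F x; positivity
    have h := pow_mul_le_pow_succ_add_pow_succ (sq_nonneg (eval x F)) hgrad n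
    rw [← pow_mul, ← pow_mul, mul_pow] at h
    simp only [smul_eval, map_add, map_mul, map_pow]
    linarith
  have hpos := gaussE_pow_nonneg (even_two_mul (n + 1)) F
  rw [← mul_add_one] at hibp
  push_cast at hibp
  have hle := le_mul_of_one_le_left hpos hm
  rw [hT] at hyoung ⊢
  linarith

lemma exists_eq_C_of_mem_chaos_zero {K : ℕ} {F : MvPolynomial (Fin K) ℝ} (h : F ∈ chaos K 0) :
    ∃ a, F = C a :=
  ⟨_, totalDegree_eq_zero_iff_eq_C.1 (Nat.le_zero.1 (totalDegree_le_of_mem_chaos h))⟩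

lemma gaussE_C (a : ℝ) : gaussE (C a : MvPolynomial ι ℝ) = a := by simp [gaussE_apply]

theorem exists_gaussE_pow_le (m n : ℕ) : ∃ A : ℝ, 0 < A ∧
    ∀ (K : ℕ) (F : MvPolynomial (Fin K) ℝ), F ∈ chaos K m →
      gaussE (F ^ (2 * (n + 1))) ≤ A * gaussE (F ^ 2) ^ (n + 1)
        ∧ gaussE (gradSq F ^ (n + 1)) ≤ A * gaussE (F ^ 2) ^ (n + 1) := by
  induction m with
  | zero =>
    refine ⟨1, one_pos, fun K F hF => ?_⟩
    obtain ⟨a, rfl⟩ := exists_eq_C_of_mem_chaos_zero hF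
    simp only [← map_pow, gaussE_C, gradSq, pderiv_C]
    simp only [ne_eq, OfNat.ofNat_ne_zero, not_false_eq_true, zero_pow, Finset.sum_const_zero,
      Nat.add_eq_zero_iff, one_ne_zero, and_false, map_zero, one_mul, ← pow_mul]
    exact ⟨le_rfl, (even_two_mul _).pow_nonneg a⟩
  | succ m ih =>
    obtain ⟨A, hA, ih⟩ := ih
    set T : ℝ := (2 * (2 * n + 1)) ^ (n + 1)
    set B : ℝ := A * (m + 1) ^ (n + 1) with hB
    have hT : 1 ≤ T := one_le_pow₀ (by linarith [n.cast_nonneg (α := ℝ)])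
    refine ⟨T * B, by positivity, fun K F hF => ?_⟩
    have hL := numberOp_eq_smul_of_mem_chaos hF
    have hgrad : gaussE (gradSq F ^ (n + 1)) ≤ B * gaussE (F ^ 2) ^ (n + 1) := by
      refine (gaussE_gradSq_pow_le hA.le fun i => (ih K _ (pderiv_mem_chaos hF i)).1).trans_eq ?_
      rw [gaussE_gradSq_of_eigen hL, hB, mul_pow]
      push_cast
      ring
    have hnonneg : 0 ≤ B * gaussE (F ^ 2) ^ (n + 1) := by
      have := gaussE_sq_nonneg F
      positivity
    rw [mul_assoc]
    exact ⟨(gaussE_pow_le_of_eigen hL (by simp) n).trans (by gcongr),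
      hgrad.trans (le_mul_of_one_le_left hnonneg hT)⟩

end Hypercontractivity

section WeakConvergence

section Truncation

variable {E : Type*} [MeasurableSpace E] {μ : Measure E} [IsFiniteMeasure μ] {g : E → ℝ}

lemma le_min_add_sq_div (x : ℝ) {R : ℝ} (hR : 0 < R) : x ≤ min x R + x ^ 2 / (4 * R) := by
  rcases le_total x R with h | h
  · rw [min_eq_left h]
    exact le_add_of_nonneg_right (by positivity)
  · rw [min_eq_right h, ← sub_le_iff_le_add', le_div_iff₀ (by positivity)]
    nlinarith [sq_nonneg (x - 2 * R)]

lemma integral_le_integral_min_add (hg : MemLp g 2 μ) {R : ℝ} (hR : 0 < R) :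
    ∫ x, g x ∂μ ≤ ∫ x, min (g x) R ∂μ + (∫ x, g x ^ 2 ∂μ) / (4 * R) := by
  have hint := hg.integrable one_le_two
  have hmin : Integrable (fun x => min (g x) R) μ := hint.inf (integrable_const R)
  rw [← integral_div, ← integral_add hmin (hg.integrable_sq.div_const _)]
  exact integral_mono hint (hmin.add (hg.integrable_sq.div_const _)) fun x =>
    le_min_add_sq_div (g x) hR

lemma dist_integral_min_le (hg : MemLp g 2 μ) {R : ℝ} (hR : 0 < R) :
    dist (∫ x, g x ∂μ) (∫ x, min (g x) R ∂μ) ≤ (∫ x, g x ^ 2 ∂μ) / (4 * R) := by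
  have hint := hg.integrable one_le_two
  have hmin : ∫ x, min (g x) R ∂μ ≤ ∫ x, g x ∂μ :=
    integral_mono (hint.inf (integrable_const R)) hint fun x => min_le_left _ _
  rw [Real.dist_eq, abs_of_nonneg (sub_nonneg.2 hmin)]
  linarith [integral_le_integral_min_add hg hR]

-- Truncating at the level `C ∫ g` costs at most a quarter of `∫ g`; passing from that level to
-- the fixed level `R` costs a factor `1 + C ∫ g / R`.
lemma integral_le_of_integral_sq_le (hg : MemLp g 2 μ) (h0 : ∀ x, 0 ≤ g x) {B C : ℝ} (hB : 0 < B)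
    (hC : 0 < C) (hsq : ∫ x, g x ^ 2 ∂μ ≤ C * (∫ x, g x ∂μ) ^ 2)
    (hmin : ∫ x, min (g x) (4 * C * B) ∂μ ≤ B) : ∫ x, g x ∂μ ≤ 2 * B := by
  set v := ∫ x, g x ∂μ
  rcases (integral_nonneg h0 : 0 ≤ v).eq_or_lt with hv | hv
  · linarith
  have hint (R : ℝ) : Integrable (fun x => min (g x) R) μ :=
    (hg.integrable one_le_two).inf (integrable_const R)
  have hlevel : ∫ x, min (g x) (C * v) ∂μ ≤ (1 + v / (4 * B)) * B := by
    refine le_trans ?_ (mul_le_mul_of_nonneg_left hmin (by positivity))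
    rw [← integral_const_mul (1 + v / (4 * B))]
    refine integral_mono (hint _) ((hint _).const_mul _) fun x => ?_
    rcases le_total (g x) (4 * C * B) with h | h
    · rw [min_eq_left h]
      refine (min_le_left _ _).trans (le_mul_of_one_le_left (h0 x) ?_)
      exact le_add_of_nonneg_right (by positivity)
    · rw [min_eq_right h]
      refine (min_le_right _ _).trans (le_of_sub_nonneg ?_)
      field_simp
      nlinarith
  have htail : (∫ x, g x ^ 2 ∂μ) / (4 * (C * v)) ≤ v / 4 := by
    rw [div_le_iff₀ (by positivity)]
    linarith
  have hsplit := integral_le_integral_min_add hg (mul_pos hC hv)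
  have hfactor : (1 + v / (4 * B)) * B = B + v / 4 := by field_simp
  linarith

end Truncation

section Moments

variable {E : Type} [MeasurableSpace E] [TopologicalSpace E] {ν : ℕ → Measure E}
  {μ : Measure E} {g : E → ℝ}

lemma TendstoInLaw.tendsto_integral_min (h : TendstoInLaw ν μ) (hg : Continuous g)
    (h0 : ∀ x, 0 ≤ g x) {R : ℝ} (hR : 0 ≤ R) :
    Tendsto (fun n => ∫ x, min (g x) R ∂ν n) atTop (𝓝 (∫ x, min (g x) R ∂μ)) :=
  h <| .ofNormedAddCommGroup (fun x => min (g x) R) (by fun_prop) R fun x => by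
    rw [Real.norm_of_nonneg (le_min (h0 x) hR)]
    exact min_le_right _ _

variable [∀ n, IsFiniteMeasure (ν n)] [IsFiniteMeasure μ]

lemma TendstoInLaw.exists_eventually_integral_le (h : TendstoInLaw ν μ) (hg : Continuous g)
    (h0 : ∀ x, 0 ≤ g x) (hν : ∀ n, MemLp g 2 (ν n)) (hμ : MemLp g 2 μ) {C : ℝ} (hC : 0 < C)
    (hsq : ∀ n, ∫ x, g x ^ 2 ∂ν n ≤ C * (∫ x, g x ∂ν n) ^ 2) :
    ∃ B, ∀ᶠ n in atTop, ∫ x, g x ∂ν n ≤ B := by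
  set B := ∫ x, g x ∂μ + 1
  have hB0 : 0 < B := add_pos_of_nonneg_of_pos (integral_nonneg h0) one_pos
  have hint := hμ.integrable one_le_two
  have hmin : ∫ x, min (g x) (4 * C * B) ∂μ < B :=
    (integral_mono (hint.inf (integrable_const _)) hint fun x => min_le_left _ _).trans_lt
      (lt_add_one _)
  refine ⟨2 * B, ?_⟩
  filter_upwards [(h.tendsto_integral_min hg h0 (by positivity)).eventually_le_const hmin] with n hn
  exact integral_le_of_integral_sq_le (hν n) h0 hB0 hC (hsq n) hn

theorem TendstoInLaw.tendsto_integral (h : TendstoInLaw ν μ) (hg : Continuous g)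
    (h0 : ∀ x, 0 ≤ g x) (hν : ∀ n, MemLp g 2 (ν n)) (hμ : MemLp g 2 μ) {C : ℝ} (hC : 0 < C)
    (hsq : ∀ n, ∫ x, g x ^ 2 ∂ν n ≤ C * (∫ x, g x ∂ν n) ^ 2) :
    Tendsto (fun n => ∫ x, g x ∂ν n) atTop (𝓝 (∫ x, g x ∂μ)) := by
  obtain ⟨B, hB⟩ := h.exists_eventually_integral_le hg h0 hν hμ hC hsq
  have hvanish (M : ℝ) : Tendsto (fun R : ℝ => M / (4 * R)) atTop (𝓝 0) :=
    tendsto_const_nhds.div_atTop (tendsto_id.const_mul_atTop four_pos)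
  have hunif : TendstoUniformlyOnFilter (fun R n => ∫ x, min (g x) R ∂ν n)
      (fun n => ∫ x, g x ∂ν n) atTop atTop := by
    refine Metric.tendstoUniformlyOnFilter_iff.2 fun ε hε => ?_
    filter_upwards [((eventually_gt_atTop 0).and
      ((hvanish (C * B ^ 2)).eventually_lt_const hε)).prod_mk hB] with p hp
    obtain ⟨⟨hR, hlt⟩, hle⟩ := hp
    refine ((dist_integral_min_le (hν p.2) hR).trans ?_).trans_lt hlt
    have := integral_nonneg (μ := ν p.2) (f := g) h0
    gcongr
    exact (hsq p.2).trans (by gcongr)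
  refine hunif.tendsto_of_eventually_tendsto
    ((eventually_ge_atTop 0).mono fun R hR => h.tendsto_integral_min hg h0 hR) ?_
  refine tendsto_iff_dist_tendsto_zero.2 (squeeze_zero' (.of_forall fun R => dist_nonneg) ?_
    (hvanish (∫ x, g x ^ 2 ∂μ)))
  filter_upwards [eventually_gt_atTop 0] with R hR
  rw [dist_comm]
  exact dist_integral_min_le hμ hR

end Moments

end WeakConvergence

section NormalConvergence

section LinearCombinations

variable {ι κ : Type}

lemma measurable_eval_pi [Countable ι] (P : κ → MvPolynomial ι ℝ) :
    Measurable fun (x : ι → ℝ) i => eval x (P i) :=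
  measurable_pi_lambda _ fun i => (continuous_eval (P i)).measurable

variable [Fintype κ]

lemma eval_linearCombination (P : κ → MvPolynomial ι ℝ) (s : κ → ℝ) (x : ι → ℝ) :
    eval x (Fintype.linearCombination ℝ P s) = s ⬝ᵥ fun i => eval x (P i) := by
  simp [Fintype.linearCombination_apply, dotProduct, smul_eval]

lemma linearCombination_mem_chaos {K m : ℕ} {P : κ → MvPolynomial (Fin K) ℝ} {s : κ → ℝ}
    (h : ∀ i, s i ≠ 0 → P i ∈ chaos K m) : Fintype.linearCombination ℝ P s ∈ chaos K m := by
  rw [Fintype.linearCombination_apply]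
  refine Submodule.sum_mem _ fun i _ => ?_
  rcases eq_or_ne (s i) 0 with hi | hi
  · simp [hi]
  · exact Submodule.smul_mem _ _ (h i hi)

variable [Fintype ι]

lemma continuous_dotProduct_pow (a : κ → ℝ) (n : ℕ) : Continuous fun z => (a ⬝ᵥ z) ^ n :=
  (continuous_const.dotProduct continuous_id).pow n

lemma integral_dotProduct_pow_map (P : κ → MvPolynomial ι ℝ) (a : κ → ℝ) (n : ℕ) :
    ∫ z, (a ⬝ᵥ z) ^ n ∂(gaussPi ι).map (fun x i => eval x (P i))
      = gaussE (Fintype.linearCombination ℝ P a ^ n) := by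
  rw [integral_map (measurable_eval_pi P).aemeasurable
    (continuous_dotProduct_pow a n).aestronglyMeasurable, gaussE_apply]
  simp only [map_pow, eval_linearCombination]

lemma memLp_dotProduct_pow_map (P : κ → MvPolynomial ι ℝ) (a : κ → ℝ) (n : ℕ) :
    MemLp (fun z => (a ⬝ᵥ z) ^ n) 2 ((gaussPi ι).map fun x i => eval x (P i)) := by
  have hcont := continuous_dotProduct_pow a n
  refine (memLp_two_iff_integrable_sq hcont.aestronglyMeasurable).2 ?_
  refine (integrable_map_measure (hcont.pow 2).aestronglyMeasurable
    (measurable_eval_pi P).aemeasurable).2 ?_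
  have h := integrable_eval_gaussPi ((Fintype.linearCombination ℝ P a ^ n) ^ 2)
  simp only [map_pow, eval_linearCombination] at h
  exact h

end LinearCombinations

section MomentConvergence

lemma gaussE_pow_le_gaussE_pow {ι : Type} [Fintype ι] {G : MvPolynomial ι ℝ}
    (hG : ∀ x, 0 ≤ eval x G) (n : ℕ) : gaussE G ^ (n + 1) ≤ gaussE (G ^ (n + 1)) := by
  have hpow (x : ι → ℝ) : 0 ≤ eval x (G ^ (n + 1)) := by
    rw [map_pow]; exact pow_nonneg (hG x) _
  have hE (Q : MvPolynomial ι ℝ) (hQ : ∀ x, 0 ≤ eval x Q) : 0 ≤ gaussE Q := integral_nonneg hQ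
  refine (ENNReal.ofReal_le_ofReal_iff (hE _ hpow)).1 ?_
  rw [ENNReal.ofReal_pow (hE G hG), ofReal_gaussE hG, ofReal_gaussE hpow]
  simp only [map_pow, ENNReal.ofReal_pow (hG _)]
  simpa using lintegral_pow_succ_le (gaussPi ι)
    (continuous_eval G).measurable.ennreal_ofReal.aemeasurable n

lemma exists_gaussE_pow_sq_le (m n : ℕ) : ∃ A : ℝ, 0 < A ∧
    ∀ (K : ℕ) (F : MvPolynomial (Fin K) ℝ), F ∈ chaos K m →
      gaussE ((F ^ (2 * (n + 1))) ^ 2) ≤ A * gaussE (F ^ (2 * (n + 1))) ^ 2 := by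
  obtain ⟨A, hA, hbound⟩ := exists_gaussE_pow_le m (2 * n + 1)
  refine ⟨A, hA, fun K F hF => ?_⟩
  have hexp : 2 * n + 1 + 1 = (n + 1) * 2 := by ring
  have h := (hbound K F hF).1
  rw [hexp, ← mul_assoc, pow_mul F, pow_mul (gaussE _)] at h
  refine h.trans ?_
  have hsq := gaussE_sq_nonneg F
  have hmono := gaussE_pow_le_gaussE_pow (G := F ^ 2) (fun x => by rw [map_pow]; positivity) n
  rw [← pow_mul] at hmono
  gcongr

variable {κ : Type} [Fintype κ] {K : ℕ → ℕ} {P : (n : ℕ) → κ → MvPolynomial (Fin (K n)) ℝ}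
  {m k : ℕ} {a : κ → ℝ}

theorem tendsto_gaussE_linearCombination_pow (hlaw : TendstoInLaw
      (fun n => Measure.map (fun x i => eval x (P n i)) (gaussPi (Fin (K n)))) (gaussPi κ))
    (ha : ∀ n i, a i ≠ 0 → P n i ∈ chaos (K n) m) (r : ℕ) :
    Tendsto (fun n => gaussE (Fintype.linearCombination ℝ (P n) a ^ (2 * (r + 1)))) atTop
      (𝓝 (∫ z, (a ⬝ᵥ z) ^ (2 * (r + 1)) ∂gaussPi κ)) := by
  obtain ⟨C, hC, hbound⟩ := exists_gaussE_pow_sq_le m r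
  have hlim : MemLp (fun z => (a ⬝ᵥ z) ^ (2 * (r + 1))) 2 (gaussPi κ) := by
    have h := memLp_dotProduct_pow_map X a (2 * (r + 1))
    simp only [eval_X, Measure.map_id'] at h
    exact h
  have h := hlaw.tendsto_integral (continuous_dotProduct_pow a _)
    (fun z => (even_two_mul _).pow_nonneg _) (fun n => memLp_dotProduct_pow_map (P n) a _) hlim hC
    fun n => by
      simp only [← pow_mul, integral_dotProduct_pow_map]
      simp only [pow_mul _ _ 2]
      exact hbound _ _ (linearCombination_mem_chaos (ha n))
  simpa only [integral_dotProduct_pow_map] using h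

variable (hlaw : TendstoInLaw
    (fun n => Measure.map (fun x i => eval x (P n i)) (gaussPi (Fin (K n)))) (gaussPi κ))
include hlaw

lemma tendsto_gaussE_linearCombination_sq (ha : ∀ n i, a i ≠ 0 → P n i ∈ chaos (K n) m) :
    Tendsto (fun n => gaussE (Fintype.linearCombination ℝ (P n) a ^ 2)) atTop (𝓝 (a ⬝ᵥ a)) := by
  simpa only [← integral_sq_dotProduct_gaussPi] using
    tendsto_gaussE_linearCombination_pow hlaw ha 0

lemma tendsto_gaussE_linearCombination_pow_four
    (ha : ∀ n i, a i ≠ 0 → P n i ∈ chaos (K n) m) :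
    Tendsto (fun n => gaussE (Fintype.linearCombination ℝ (P n) a ^ 4)) atTop
      (𝓝 (3 * (a ⬝ᵥ a) ^ 2)) := by
  simpa only [← integral_pow_four_dotProduct_gaussPi] using
    tendsto_gaussE_linearCombination_pow hlaw ha 1

-- A constant has `E F⁴ = (E F²)²`, whereas the Gaussian limit requires `E F⁴ = 3 (E F²)²`.
lemma chaos_degree_ne_zero {i : κ} (hi : ∀ n, P n i ∈ chaos (K n) m) : m ≠ 0 := by
  classical
  rintro rfl
  have ha (n : ℕ) (l : κ) (hl : (Pi.single i 1 : κ → ℝ) l ≠ 0) : P n l ∈ chaos (K n) 0 := by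
    obtain rfl : l = i := by_contra fun h => hl (Pi.single_eq_of_ne h _)
    exact hi n
  have hsq := tendsto_gaussE_linearCombination_sq hlaw ha
  have hfour := tendsto_gaussE_linearCombination_pow_four hlaw ha
  have hconst (n : ℕ) : gaussE (Fintype.linearCombination ℝ (P n) (Pi.single i 1) ^ 4)
      = gaussE (Fintype.linearCombination ℝ (P n) (Pi.single i 1) ^ 2) ^ 2 := by
    obtain ⟨a, h⟩ := exists_eq_C_of_mem_chaos_zero (linearCombination_mem_chaos (ha n))
    rw [h, ← C_pow, ← C_pow, gaussE_C, gaussE_C, ← pow_mul]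
  simp only [hconst] at hfour
  have h := tendsto_nhds_unique hfour (hsq.pow 2)
  norm_num at h

lemma tendsto_contractDefect_linearCombination
    (ha : ∀ n i, a i ≠ 0 → P n i ∈ chaos (K n) (k + 1)) (hunit : a ⬝ᵥ a = 1) {c : ℝ}
    (hc : c ^ 2 = ((k + 1).factorial : ℝ)⁻¹) :
    Tendsto (fun n => contractDefect k (c • Fintype.linearCombination ℝ (P n) a)
      (c • Fintype.linearCombination ℝ (P n) a) 1) atTop (𝓝 0) := by
  have hmoments := (((tendsto_gaussE_linearCombination_pow_four hlaw ha).div_const 3).sub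
    ((tendsto_gaussE_linearCombination_sq hlaw ha).const_mul 2)).add_const 1
  have hvanish := ENNReal.tendsto_ofReal hmoments
  norm_num [hunit] at hvanish
  exact tendsto_of_tendsto_of_tendsto_of_le_of_le tendsto_const_nhds hvanish (fun n => zero_le)
    fun n => contractDefect_le_moments (linearCombination_mem_chaos (ha n)) hc

end MomentConvergence

section UniformDefect

variable {κ : Type} [Fintype κ] {K : ℕ → ℕ} {P : (n : ℕ) → κ → MvPolynomial (Fin (K n)) ℝ}
  {m : κ → ℕ} (hchaos : ∀ n i, P n i ∈ chaos (K n) (m i))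
  (hlaw : TendstoInLaw
    (fun n => Measure.map (fun x i => eval x (P n i)) (gaussPi (Fin (K n)))) (gaussPi κ))
include hchaos hlaw

lemma tendsto_contractDefect_single {k : ℕ} {i : κ} (hi : m i = k + 1) {c : ℝ}
    (hc : c ^ 2 = ((k + 1).factorial : ℝ)⁻¹) :
    Tendsto (fun n => contractDefect k (c • P n i) (c • P n i) 1) atTop (𝓝 0) := by
  classical
  have hmem (n : ℕ) (l : κ) (hl : (Pi.single i 1 : κ → ℝ) l ≠ 0) : P n l ∈ chaos (K n) (k + 1) := by
    obtain rfl : l = i := by_contra fun h => hl (Pi.single_eq_of_ne h _)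
    exact hi ▸ hchaos n l
  simpa using tendsto_contractDefect_linearCombination hlaw hmem (by simp) hc

lemma tendsto_contractDefect_pair {k : ℕ} {i j : κ} (hij : i ≠ j)
    (hi : m i = k + 1) (hj : m j = k + 1) {c : ℝ} (hc : c ^ 2 = ((k + 1).factorial : ℝ)⁻¹)
    {a b : ℝ} (hab : a ^ 2 + b ^ 2 = 1) :
    Tendsto (fun n => contractDefect k (a • c • P n i + b • c • P n j)
      (a • c • P n i + b • c • P n j) 1) atTop (𝓝 0) := by
  classical
  have hmem (n : ℕ) (l : κ) (hl : (Pi.single i a + Pi.single j b : κ → ℝ) l ≠ 0) :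
      P n l ∈ chaos (K n) (k + 1) := by
    have hm : m l = k + 1 := by
      by_contra h
      have hli : l ≠ i := by rintro rfl; exact h hi
      have hlj : l ≠ j := by rintro rfl; exact h hj
      simp [hli, hlj] at hl
    exact hm ▸ hchaos n l
  have hunit : (Pi.single i a + Pi.single j b) ⬝ᵥ (Pi.single i a + Pi.single j b : κ → ℝ) = 1 := by
    simp [dotProduct_add, hij, hij.symm, ← hab, sq]
  have h := tendsto_contractDefect_linearCombination hlaw hmem hunit hc
  simpa only [map_add, Fintype.linearCombination_apply_single, smul_add, smul_comm c] using h

-- Polarization: the cross defects are controlled by the unit combinations `(P i ± P j) / √2`.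
lemma tendsto_contractDefect_cross {k : ℕ} {i j : κ} (hij : i ≠ j) (hi : m i = k + 1)
    (hj : m j = k + 1) {c : ℝ} (hc : c ^ 2 = ((k + 1).factorial : ℝ)⁻¹) :
    Tendsto (fun n => contractDefect k (c • P n i) (c • P n j) 0) atTop (𝓝 0) := by
  classical
  have ha : (√2)⁻¹ ^ 2 = (2 : ℝ)⁻¹ := by rw [inv_pow, Real.sq_sqrt zero_le_two]
  have hadd := tendsto_contractDefect_pair hchaos hlaw hij hi hj hc
    (a := (√2)⁻¹) (b := (√2)⁻¹) (by rw [ha]; norm_num)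
  have hsub := tendsto_contractDefect_pair hchaos hlaw hij hi hj hc
    (a := (√2)⁻¹) (b := -(√2)⁻¹) (by rw [neg_sq, ha]; norm_num)
  have h := hadd.add hsub
  rw [add_zero] at h
  exact tendsto_of_tendsto_of_tendsto_of_le_of_le tendsto_const_nhds h (fun n => zero_le)
    fun n => contractDefect_zero_le ha _ _

theorem eventually_contractDefect_le {k : ℕ} {c : ℝ} (hc : c ^ 2 = ((k + 1).factorial : ℝ)⁻¹)
    {δ : ENNReal} (hδ : 0 < δ) :
    ∀ᶠ n in atTop, ∀ s : κ → ℝ, s ⬝ᵥ s = 1 → (∀ i, m i ≠ k + 1 → s i = 0) →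
      contractDefect k (c • Fintype.linearCombination ℝ (P n) s)
        (c • Fintype.linearCombination ℝ (P n) s) 1 ≤ δ := by
  classical
  have hlim : Tendsto (fun n => ∑ l : {i // m i = k + 1}, ∑ l' : {i // m i = k + 1},
      contractDefect k (c • P n l) (c • P n l') ((1 : Matrix _ _ ℝ) l l')) atTop (𝓝 0) := by
    rw [← Finset.sum_const_zero (s := Finset.univ (α := {i // m i = k + 1}))]
    refine tendsto_finsetSum _ fun l _ => ?_
    rw [← Finset.sum_const_zero (s := Finset.univ (α := {i // m i = k + 1}))]
    refine tendsto_finsetSum _ fun l' _ => ?_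
    rcases eq_or_ne l l' with rfl | hne
    · simpa using tendsto_contractDefect_single hchaos hlaw l.2 hc
    · simpa [hne] using tendsto_contractDefect_cross hchaos hlaw
        (Subtype.coe_injective.ne hne) l.2 l'.2 hc
  filter_upwards [hlim.eventually (ge_mem_nhds hδ)] with n hn s hs hsupp
  have hsum {M : Type} [AddCommMonoid M] (f : κ → M) (hf : ∀ i, m i ≠ k + 1 → f i = 0) :
      ∑ l : {i // m i = k + 1}, f l = ∑ i, f i :=
    Fintype.sum_of_injective _ Subtype.coe_injective _ f (fun i hi => hf i (by simpa using hi))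
      fun _ => rfl
  have hunit : (fun l : {i // m i = k + 1} => s l) ⬝ᵥ (fun l => s l) = 1 :=
    (hsum (fun i => s i * s i) fun i hi => by rw [hsupp i hi, zero_mul]).trans hs
  have hcomb : c • Fintype.linearCombination ℝ (P n) s
      = ∑ l : {i // m i = k + 1}, s l • c • P n l := by
    rw [hsum (fun i => s i • c • P n i) fun i hi => by rw [hsupp i hi, zero_smul],
      Fintype.linearCombination_apply, Finset.smul_sum]
    exact Finset.sum_congr rfl fun i _ => smul_comm _ _ _
  rw [hcomb]
  exact (contractDefect_sum_smul_le hunit _).trans hn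

end UniformDefect

end NormalConvergence

section GradLaplaceBounds

variable {ι : Type} [Fintype ι]

lemma contractDeriv_eq_zero_of_totalDegree_le {j : ℕ} (w : Fin j → ι → ℝ) {P : MvPolynomial ι ℝ}
    (h : P.totalDegree ≤ j) : contractDeriv w P = 0 := by
  induction j generalizing P with
  | zero =>
    ext i
    rw [contractDeriv, polyGrad_apply, pderiv_eq_zero_of_totalDegree_eq_zero (by omega), map_zero]
    rfl
  | succ j ih => exact ih _ (totalDegree_dirDeriv_le h (w 0))

lemma contractLaplace_add_of_totalDegree_le {j : ℕ} {A : MvPolynomial ι ℝ}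
    (h : A.totalDegree ≤ j) (B : MvPolynomial ι ℝ) (l : ℝ) :
    contractLaplace j (A + B) l = contractLaplace j B l := by
  simp only [contractLaplace, map_add, contractDeriv_eq_zero_of_totalDegree_le _ h, zero_add]

lemma gradLaplace_smul (c l : ℝ) (F : MvPolynomial ι ℝ) :
    gradLaplace l (c • F) = gradLaplace (c ^ 2 * l) F := by
  simp only [gradLaplace, sqField_eq_dotProduct, map_smul, smul_dotProduct, dotProduct_smul,
    smul_eq_mul]
  ring_nf

lemma gradLaplace_le_one {l : ℝ} (hl : 0 ≤ l) (F : MvPolynomial ι ℝ) : gradLaplace l F ≤ 1 :=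
  (lintegral_mono fun x => expNeg_le_one (mul_nonneg hl (sqField_nonneg F x))).trans_eq (by simp)

lemma half_sqField_sub_le (A B : MvPolynomial ι ℝ) (x : ι → ℝ) :
    sqField A x / 2 - sqField B x ≤ sqField (A + B) x := by
  simp only [sqField, Finset.sum_div, ← Finset.sum_sub_distrib, map_add]
  exact Finset.sum_le_sum fun i _ => by
    nlinarith [sq_nonneg (eval x (pderiv i A) + 2 * eval x (pderiv i B))]

lemma expNeg_le_of_half_sub_le {a b f t : ℝ} (hf : 0 ≤ f) (ht : 0 ≤ t) (ht1 : t ≤ 1)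
    (h : a / 2 - b ≤ f) (p : ℕ) :
    expNeg f ≤ ENNReal.ofReal (Real.exp 1) * expNeg (t / 2 * a) + ENNReal.ofReal ((t * b) ^ p) := by
  rcases le_total (t * b) 1 with hb | hb
  · refine le_add_right ?_
    rw [expNeg, expNeg, ← ENNReal.ofReal_mul (Real.exp_pos _).le, ← Real.exp_add]
    gcongr
    nlinarith
  · refine le_add_left ((expNeg_le_one hf).trans ?_)
    exact ENNReal.one_le_ofReal.2 (one_le_pow₀ hb)

lemma gradLaplace_add_le (A B : MvPolynomial ι ℝ) {t : ℝ} (ht : 0 ≤ t) (ht1 : t ≤ 1) (p : ℕ) :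
    gradLaplace 1 (A + B) ≤ ENNReal.ofReal (Real.exp 1) * gradLaplace (t / 2) A
      + ENNReal.ofReal (t ^ p * gaussE (gradSq B ^ p)) := by
  have heval (x : ι → ℝ) : eval x (t ^ p • gradSq B ^ p) = (t * sqField B x) ^ p := by
    rw [smul_eval, map_pow, eval_gradSq, mul_pow]
  have hmeas : Measurable fun x => sqField A x := by
    simp only [← eval_gradSq]
    exact (continuous_eval _).measurable
  rw [← smul_eq_mul (t ^ p), ← map_smul, ofReal_gaussE fun x => by
    rw [heval]; exact pow_nonneg (mul_nonneg ht (sqField_nonneg B x)) p]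
  simp only [gradLaplace, heval, one_mul]
  rw [← lintegral_const_mul _ (by fun_prop), ← lintegral_add_left (by fun_prop)]
  exact lintegral_mono fun x =>
    expNeg_le_of_half_sub_le (sqField_nonneg _ x) ht ht1 (half_sqField_sub_le A B x) p

theorem exists_pow_mul_gradLaplace_add_smul_le (k q : ℕ) : ∃ δ C : NNReal, 0 < δ ∧
    ∀ (ι : Type) [Fintype ι] (A Q : MvPolynomial ι ℝ), A.totalDegree ≤ k →
      Q.totalDegree ≤ k + 1 → contractDefect k Q Q 1 ≤ δ →
        ∀ r : ℝ, ENNReal.ofReal (r ^ 2) ^ q * gradLaplace 1 (A + r • Q) ≤ C := by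
  obtain ⟨c, hc, hweyl⟩ := exists_gradLaplace_pow_le k
  obtain ⟨δ, C, hδ, hlaplace⟩ := exists_pow_mul_contractLaplace_le k (q * 2 ^ k)
  lift c to NNReal using hc.le
  have hc0 : c ^ (q * 2 ^ k) ≠ 0 := pow_ne_zero _ (by exact_mod_cast hc.ne')
  refine ⟨δ, max 1 (C / c ^ (q * 2 ^ k)), hδ, fun ι _ A Q hA hQ hdefect r => ?_⟩
  have hdeg : (A + r • Q).totalDegree ≤ k + 1 :=
    (totalDegree_add _ _).trans (max_le (hA.trans k.le_succ) ((totalDegree_smul_le _ _).trans hQ))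
  have hcontract : contractLaplace k (A + r • Q) (1 * c) = contractLaplace k Q (r ^ 2 * c) := by
    rw [contractLaplace_add_of_totalDegree_le hA, contractLaplace_smul, one_mul]
  set x := ENNReal.ofReal (r ^ 2) ^ q * gradLaplace 1 (A + r • Q)
  have hpow : x ^ 2 ^ k ≤ (C / c ^ (q * 2 ^ k) : NNReal) := by
    rw [ENNReal.coe_div hc0, ENNReal.le_div_iff_mul_le (.inl (by exact_mod_cast hc0))
      (.inl ENNReal.coe_ne_top)]
    calc x ^ 2 ^ k * (c ^ (q * 2 ^ k) : NNReal)
        = ENNReal.ofReal (r ^ 2 * c) ^ (q * 2 ^ k) * gradLaplace 1 (A + r • Q) ^ 2 ^ k := by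
          rw [ENNReal.ofReal_mul (sq_nonneg r), ENNReal.ofReal_coe_nnreal]
          push_cast
          ring
      _ ≤ ENNReal.ofReal (r ^ 2 * c) ^ (q * 2 ^ k) * contractLaplace k Q (r ^ 2 * c) := by
          rw [← hcontract]
          gcongr
          exact hweyl ι _ hdeg 1 zero_le_one
      _ ≤ C := hlaplace ι Q hdefect _ (by positivity)
  rcases le_total x 1 with hx | hx
  · exact hx.trans (by simp)
  · exact (le_self_pow₀ hx (by positivity)).trans (hpow.trans (by simp))

end GradLaplaceBounds

section MixedDegrees

section Splitting

variable {ι κ : Type} [Fintype κ]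

lemma linearCombination_indicator_compl_add (P : κ → MvPolynomial ι ℝ) (S : Set κ) (s : κ → ℝ) :
    Fintype.linearCombination ℝ P (Sᶜ.indicator s) + Fintype.linearCombination ℝ P (S.indicator s)
      = Fintype.linearCombination ℝ P s := by
  rw [← map_add, Set.indicator_compl_add_self]

lemma dotProduct_indicator_compl_add (S : Set κ) (s : κ → ℝ) :
    Sᶜ.indicator s ⬝ᵥ Sᶜ.indicator s + S.indicator s ⬝ᵥ S.indicator s = s ⬝ᵥ s := by
  simp only [dotProduct, ← Finset.sum_add_distrib]
  refine Finset.sum_congr rfl fun i _ => ?_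
  by_cases hi : i ∈ S <;> simp [hi]

lemma gaussE_sq_linearCombination_le [Fintype ι] (P : κ → MvPolynomial ι ℝ) (s : κ → ℝ) :
    gaussE (Fintype.linearCombination ℝ P s ^ 2) ≤ (s ⬝ᵥ s) * ∑ i, gaussE (P i ^ 2) := by
  rw [← map_sum, ← smul_eq_mul, ← map_smul]
  refine gaussE_mono fun x => ?_
  simp only [map_pow, eval_linearCombination, smul_eval, map_sum, dotProduct, ← sq]
  exact Finset.sum_mul_sq_le_sq_mul_sq _ _ _

end Splitting

lemma ofReal_pow_mul_gradLaplace_le {ι : Type} [Fintype ι] {x b : ℝ} (h : x ≤ b) (q : ℕ)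
    (F : MvPolynomial ι ℝ) :
    ENNReal.ofReal x ^ q * gradLaplace 1 F ≤ ENNReal.ofReal b ^ q := by
  rw [← mul_one (ENNReal.ofReal b ^ q)]
  gcongr
  exact gradLaplace_le_one zero_le_one F

lemma le_half_of_pow_four_le {σ τ : ℝ} (hσ : 16 ≤ σ) (hτ : τ ^ 4 ≤ σ) : τ ≤ σ / 2 := by
  nlinarith [sq_nonneg (τ ^ 2 - 1), sq_nonneg (τ - 1)]

lemma pow_mul_pow_mul_le {σ τ t x H : ℝ} {q : ℕ} (hσ : 0 < σ) (hτ : τ ^ 4 ≤ σ)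
    (ht : t ^ 2 = σ⁻¹) (hx : x ≤ H * τ ^ (4 * q)) (hH : 0 ≤ H) :
    σ ^ q * (t ^ (4 * q) * x) ≤ H := by
  have ht4 : t ^ (4 * q) = (σ⁻¹ ^ 2) ^ q := by rw [← ht]; ring
  have hone : σ * (σ⁻¹ ^ 2 * τ ^ 4) ≤ 1 := by
    calc σ * (σ⁻¹ ^ 2 * τ ^ 4) ≤ σ * (σ⁻¹ ^ 2 * σ) := by gcongr
      _ = 1 := by field_simp
  calc σ ^ q * (t ^ (4 * q) * x) ≤ σ ^ q * ((σ⁻¹ ^ 2) ^ q * (H * τ ^ (4 * q))) := by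
        rw [ht4]; gcongr
    _ = H * (σ * (σ⁻¹ ^ 2 * τ ^ 4)) ^ q := by rw [mul_pow, mul_pow, ← pow_mul τ]; ring
    _ ≤ H := mul_le_of_le_one_right hH (pow_le_one₀ (by positivity) hone)

lemma ofReal_pow_mul_gradLaplace_half_le {ι : Type} [Fintype ι] {A : MvPolynomial ι ℝ} {q : ℕ}
    {σ t a : ℝ} {C : ℝ≥0∞} (hσ : 0 < σ) (ha : σ / 2 ≤ a) (ht₀ : 0 ≤ t) (ht : t ^ 2 = σ⁻¹)
    (hA : ∀ l ≥ 0, ENNReal.ofReal (l * a) ^ (2 * q) * gradLaplace l A ≤ C) :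
    ENNReal.ofReal σ ^ q * gradLaplace (t / 2) A ≤ 16 ^ q * C := by
  have ha₀ : 0 ≤ a := by linarith
  have hscale : σ ≤ 16 * (t / 2 * a) ^ 2 := by
    calc σ = 16 * (σ⁻¹ / 2 ^ 2 * (σ / 2) ^ 2) := by field_simp; norm_num
      _ ≤ 16 * (σ⁻¹ / 2 ^ 2 * a ^ 2) := by gcongr
      _ = 16 * (t / 2 * a) ^ 2 := by rw [mul_pow, div_pow, ht]
  have hofReal : ENNReal.ofReal σ ≤ 16 * ENNReal.ofReal (t / 2 * a) ^ 2 := by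
    rw [← ENNReal.ofReal_pow (by positivity), ← ENNReal.ofReal_ofNat,
      ← ENNReal.ofReal_mul (by norm_num)]
    gcongr
  calc ENNReal.ofReal σ ^ q * gradLaplace (t / 2) A
      ≤ (16 * ENNReal.ofReal (t / 2 * a) ^ 2) ^ q * gradLaplace (t / 2) A := by gcongr
    _ = 16 ^ q * (ENNReal.ofReal (t / 2 * a) ^ (2 * q) * gradLaplace (t / 2) A) := by
        rw [mul_pow, ← pow_mul, mul_assoc]
    _ ≤ 16 ^ q * C := by gcongr; exact hA _ (by positivity)

-- `t = σ^{-1/2}` balances the two error terms of `gradLaplace_add_le`.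
lemma pow_mul_gradLaplace_add_le {ι : Type} [Fintype ι] {A B : MvPolynomial ι ℝ} {q : ℕ}
    {a τ H : ℝ} {C : ℝ≥0∞} (hσ : 16 ≤ a + τ) (hτσ : τ ^ 4 ≤ a + τ)
    (hA : ∀ l ≥ 0, ENNReal.ofReal (l * a) ^ (2 * q) * gradLaplace l A ≤ C)
    (hB : gaussE (gradSq B ^ (4 * q)) ≤ H * τ ^ (4 * q)) (hH : 0 ≤ H) :
    ENNReal.ofReal (a + τ) ^ q * gradLaplace 1 (A + B)
      ≤ ENNReal.ofReal (Real.exp 1) * (16 ^ q * C) + ENNReal.ofReal H := by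
  set σ := a + τ
  have hσ0 : 0 < σ := by linarith
  have hhalf : σ / 2 ≤ a := by linarith [le_half_of_pow_four_le hσ hτσ, show a + τ = σ from rfl]
  set t := (√σ)⁻¹
  have ht0 : 0 ≤ t := by positivity
  have ht2 : t ^ 2 = σ⁻¹ := by rw [inv_pow, Real.sq_sqrt hσ0.le]
  have ht1 : t ≤ 1 := by
    refine (sq_le_one_iff₀ ht0).1 ?_
    rw [ht2]
    exact inv_le_one_of_one_le₀ (by linarith)
  have hmain := ofReal_pow_mul_gradLaplace_half_le hσ0 hhalf ht0 ht2 hA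
  have hrest := pow_mul_pow_mul_le hσ0 hτσ ht2 hB hH
  calc ENNReal.ofReal σ ^ q * gradLaplace 1 (A + B)
      ≤ ENNReal.ofReal σ ^ q * (ENNReal.ofReal (Real.exp 1) * gradLaplace (t / 2) A
        + ENNReal.ofReal (t ^ (4 * q) * gaussE (gradSq B ^ (4 * q)))) := by
        gcongr
        exact gradLaplace_add_le A B ht0 ht1 _
    _ = ENNReal.ofReal (Real.exp 1) * (ENNReal.ofReal σ ^ q * gradLaplace (t / 2) A)
        + ENNReal.ofReal (σ ^ q * (t ^ (4 * q) * gaussE (gradSq B ^ (4 * q)))) := by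
        rw [ENNReal.ofReal_mul (p := σ ^ q) (by positivity), ENNReal.ofReal_pow hσ0.le]
        ring
    _ ≤ _ := by gcongr

variable {κ : Type} {m : κ → ℕ}

lemma indicator_compl_eq_zero {k : ℕ} {s : κ → ℝ} (hs : ∀ i, k + 1 < m i → s i = 0) {i : κ}
    (hi : k < m i) : {i | m i = k + 1}ᶜ.indicator s i = 0 := by
  by_cases h : m i = k + 1
  · simp [h]
  · exact (Set.indicator_of_mem h s).trans (hs i (lt_of_le_of_ne hi (Ne.symm h)))

variable [Fintype κ]

lemma totalDegree_linearCombination_le {K k : ℕ} {P : κ → MvPolynomial (Fin K) ℝ}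
    (hP : ∀ i, P i ∈ chaos K (m i)) {s : κ → ℝ} (hs : ∀ i, k < m i → s i = 0) :
    (Fintype.linearCombination ℝ P s).totalDegree ≤ k := by
  rw [Fintype.linearCombination_apply]
  refine totalDegree_finsetSum_le fun i _ => ?_
  rcases lt_or_ge k (m i) with hi | hi
  · simp [hs i hi]
  · exact (totalDegree_smul_le _ _).trans ((totalDegree_le_of_mem_chaos (hP i)).trans hi)

lemma pow_mul_gradLaplace_linearCombination_le {ι : Type} [Fintype ι]
    {P : κ → MvPolynomial ι ℝ} {k q : ℕ} {Clow Ctop H : NNReal}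
    (hlow : ∀ s : κ → ℝ, (∀ i, k < m i → s i = 0) →
      ENNReal.ofReal (s ⬝ᵥ s) ^ (2 * q) * gradLaplace 1 (Fintype.linearCombination ℝ P s) ≤ Clow)
    (hgrad : ∀ s : κ → ℝ, (∀ i, m i ≠ k + 1 → s i = 0) →
      gaussE (gradSq (Fintype.linearCombination ℝ P s) ^ (4 * q)) ≤ H * (s ⬝ᵥ s) ^ (4 * q))
    {s : κ → ℝ} (hs : ∀ i, k + 1 < m i → s i = 0)
    (htop : ENNReal.ofReal ({i | m i = k + 1}.indicator s ⬝ᵥ {i | m i = k + 1}.indicator s)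
      ^ (4 * q) * gradLaplace 1 (Fintype.linearCombination ℝ P s) ≤ Ctop) :
    ENNReal.ofReal (s ⬝ᵥ s) ^ q * gradLaplace 1 (Fintype.linearCombination ℝ P s)
      ≤ ENNReal.ofReal 16 ^ q + Ctop + (ENNReal.ofReal (Real.exp 1) * (16 ^ q * Clow) + H) := by
  set S := {i | m i = k + 1}
  set τ := S.indicator s ⬝ᵥ S.indicator s
  rcases le_total (s ⬝ᵥ s) 16 with hσ | hσ
  · exact (ofReal_pow_mul_gradLaplace_le hσ q _).trans (le_add_right le_self_add)
  rcases le_total (s ⬝ᵥ s) (τ ^ 4) with hτ | hτ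
  · refine le_trans ?_ (htop.trans (le_add_right le_add_self))
    rw [pow_mul, ← ENNReal.ofReal_pow (p := τ) (dotProduct_self_nonneg _)]
    gcongr
  rw [← dotProduct_indicator_compl_add S s] at hσ hτ ⊢
  rw [← linearCombination_indicator_compl_add P S s]
  refine le_add_left ((pow_mul_gradLaplace_add_le (C := Clow) hσ hτ (fun l hl => ?_)
    (hgrad _ fun i hi => by simp [S, hi]) H.2).trans_eq (by simp))
  have h := hlow (√l • Sᶜ.indicator s) fun i hi => by
    rw [Pi.smul_apply, indicator_compl_eq_zero hs hi, smul_zero]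
  rwa [smul_dotProduct, dotProduct_smul, smul_smul, Real.mul_self_sqrt hl, map_smul,
    gradLaplace_smul, Real.sq_sqrt hl, mul_one, smul_eq_mul] at h

variable {K : ℕ → ℕ} {P : (n : ℕ) → κ → MvPolynomial (Fin (K n)) ℝ}
  (hchaos : ∀ n i, P n i ∈ chaos (K n) (m i))
  (hlaw : TendstoInLaw
    (fun n => Measure.map (fun x i => eval x (P n i)) (gaussPi (Fin (K n)))) (gaussPi κ))
include hchaos hlaw

lemma eventually_sum_gaussE_sq_le :
    ∀ᶠ n in atTop, ∑ i, gaussE (P n i ^ 2) ≤ Fintype.card κ + 1 := by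
  classical
  have hlim : Tendsto (fun n => ∑ i, gaussE (P n i ^ 2)) atTop (𝓝 (∑ _i : κ, 1)) := by
    refine tendsto_finsetSum _ fun i _ => ?_
    have hmem (n : ℕ) (l : κ) (hl : (Pi.single i 1 : κ → ℝ) l ≠ 0) :
        P n l ∈ chaos (K n) (m i) := by
      obtain rfl : l = i := by_contra fun h => hl (Pi.single_eq_of_ne h _)
      exact hchaos n l
    simpa using tendsto_gaussE_linearCombination_sq hlaw hmem
  refine (hlim.eventually (gt_mem_nhds (lt_add_one _))).mono fun n hn => ?_
  simpa using hn.le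

lemma exists_eventually_gaussE_gradSq_pow_le (k p : ℕ) :
    ∃ H : NNReal, ∀ᶠ n in atTop, ∀ s : κ → ℝ, (∀ i, m i ≠ k → s i = 0) →
      gaussE (gradSq (Fintype.linearCombination ℝ (P n) s) ^ p) ≤ H * (s ⬝ᵥ s) ^ p := by
  rcases p.eq_zero_or_pos with rfl | hp
  · exact ⟨1, .of_forall fun n s _ => by simp [gaussE_apply]⟩
  obtain ⟨p, rfl⟩ := Nat.exists_eq_add_one.2 hp
  obtain ⟨A, hA, hbound⟩ := exists_gaussE_pow_le k p
  refine ⟨(A * (Fintype.card κ + 1) ^ (p + 1)).toNNReal, ?_⟩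
  filter_upwards [eventually_sum_gaussE_sq_le hchaos hlaw] with n hn s hs
  have hmem := linearCombination_mem_chaos (P := P n) (s := s) (K := K n) (m := k) fun i hi =>
    (not_ne_iff.1 (mt (hs i) hi)) ▸ hchaos n i
  refine (hbound _ _ hmem).2.trans ?_
  rw [Real.coe_toNNReal _ (by positivity), mul_assoc, ← mul_pow]
  have hsq := gaussE_sq_nonneg (Fintype.linearCombination ℝ (P n) s)
  gcongr
  refine (gaussE_sq_linearCombination_le _ _).trans ?_
  rw [mul_comm]
  have := dotProduct_self_nonneg s
  gcongr

lemma eventually_exists_linearCombination_eq_smul (k : ℕ) {δ : ℝ≥0∞} (hδ : 0 < δ) :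
    ∀ᶠ n in atTop, ∀ s : κ → ℝ, (∀ i, m i ≠ k + 1 → s i = 0) → 0 < s ⬝ᵥ s →
      ∃ (r : ℝ) (Q : MvPolynomial (Fin (K n)) ℝ), Fintype.linearCombination ℝ (P n) s = r • Q ∧
        s ⬝ᵥ s ≤ r ^ 2 ∧ Q.totalDegree ≤ k + 1 ∧ contractDefect k Q Q 1 ≤ δ := by
  set c := (√((k + 1).factorial : ℝ))⁻¹
  have hc : c ^ 2 = ((k + 1).factorial : ℝ)⁻¹ := by rw [inv_pow, Real.sq_sqrt (by positivity)]
  filter_upwards [eventually_contractDefect_le hchaos hlaw hc hδ] with n hn s hs hpos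
  set τ := s ⬝ᵥ s
  have hunit : (√τ)⁻¹ • s ⬝ᵥ (√τ)⁻¹ • s = 1 := by
    rw [smul_dotProduct, dotProduct_smul, smul_smul, ← sq, inv_pow, Real.sq_sqrt hpos.le,
      smul_eq_mul, inv_mul_cancel₀ hpos.ne']
  have hsupp (i : κ) (hi : m i ≠ k + 1) : ((√τ)⁻¹ • s) i = 0 := by simp [hs i hi]
  have hdeg := totalDegree_linearCombination_le (hchaos n) fun i (hi : k + 1 < m i) =>
    hsupp i hi.ne'
  refine ⟨√τ * c⁻¹, _, ?_, ?_, (totalDegree_smul_le c _).trans hdeg, hn _ hunit hsupp⟩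
  · have hτ : √τ ≠ 0 := (Real.sqrt_pos.2 hpos).ne'
    have hc0 : c ≠ 0 := by positivity
    rw [map_smul, smul_smul, smul_smul, inv_mul_cancel_right₀ hc0, mul_inv_cancel₀ hτ,
      one_smul]
  · rw [mul_pow, Real.sq_sqrt hpos.le, inv_pow, hc, inv_inv]
    exact le_mul_of_one_le_right hpos.le (by exact_mod_cast (k + 1).factorial_pos)

theorem exists_eventually_pow_top_mul_gradLaplace_le (k q : ℕ) :
    ∃ C : NNReal, ∀ᶠ n in atTop, ∀ s : κ → ℝ, (∀ i, k + 1 < m i → s i = 0) →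
      ENNReal.ofReal ({i | m i = k + 1}.indicator s ⬝ᵥ {i | m i = k + 1}.indicator s) ^ q
        * gradLaplace 1 (Fintype.linearCombination ℝ (P n) s) ≤ C := by
  obtain ⟨δ, C, hδ, hC⟩ := exists_pow_mul_gradLaplace_add_smul_le k q
  refine ⟨max 1 C, ?_⟩
  filter_upwards [eventually_exists_linearCombination_eq_smul hchaos hlaw k
    (ENNReal.coe_pos.2 hδ)] with n hn s hs
  set S := {i | m i = k + 1}
  rcases (dotProduct_self_nonneg (S.indicator s)).eq_or_lt with hzero | hpos
  · exact (ofReal_pow_mul_gradLaplace_le (hzero.symm.trans_le zero_le_one) q _).trans (by simp)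
  have htop (i : κ) (hi : m i ≠ k + 1) : S.indicator s i = 0 := by simp [S, hi]
  have hlow (i : κ) (hi : k < m i) := indicator_compl_eq_zero hs hi
  obtain ⟨r, Q, heq, hr, hdeg, hdefect⟩ := hn _ htop hpos
  rw [← linearCombination_indicator_compl_add (P n) S s, heq]
  calc _ ≤ ENNReal.ofReal (r ^ 2) ^ q * _ := by gcongr
    _ ≤ C := hC _ _ Q (totalDegree_linearCombination_le (hchaos n) hlow) hdeg hdefect r
    _ ≤ _ := by simp

theorem exists_eventually_pow_mul_gradLaplace_le (k : ℕ) : ∀ q : ℕ,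
    ∃ C : NNReal, ∀ᶠ n in atTop, ∀ s : κ → ℝ, (∀ i, k < m i → s i = 0) →
      ENNReal.ofReal (s ⬝ᵥ s) ^ q * gradLaplace 1 (Fintype.linearCombination ℝ (P n) s) ≤ C := by
  induction k with
  | zero =>
    refine fun q => ⟨1, .of_forall fun n s hs => ?_⟩
    have hdeg (i : κ) : m i ≠ 0 := chaos_degree_ne_zero hlaw fun n => hchaos n i
    have hzero : s = 0 := funext fun i => hs i (Nat.pos_of_ne_zero (hdeg i))
    exact (ofReal_pow_mul_gradLaplace_le (b := 1) (by simp [hzero]) q _).trans (by simp)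
  | succ k ih =>
    intro q
    obtain ⟨Clow, hlow⟩ := ih (2 * q)
    obtain ⟨Ctop, htop⟩ := exists_eventually_pow_top_mul_gradLaplace_le hchaos hlaw k (4 * q)
    obtain ⟨H, hgrad⟩ := exists_eventually_gaussE_gradSq_pow_le hchaos hlaw (k + 1) (4 * q)
    refine ⟨16 ^ q + Ctop + ((Real.exp 1).toNNReal * (16 ^ q * Clow) + H), ?_⟩
    filter_upwards [hlow, htop, hgrad] with n hlow htop hgrad s hs
    refine (pow_mul_gradLaplace_linearCombination_le hlow hgrad hs (htop s hs)).trans_eq ?_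
    push_cast
    simp [ENNReal.ofReal]

end MixedDegrees

section MalliavinMatrix

section GaussianIntegral

variable {κ : Type} [Fintype κ]

lemma lintegral_expNeg_dotProduct_self :
    ∫⁻ y : κ → ℝ, expNeg (y ⬝ᵥ y) = ENNReal.ofReal √Real.pi ^ Fintype.card κ := by
  have hprod (y : κ → ℝ) : Real.exp (-(y ⬝ᵥ y)) = ∏ i, Real.exp (-1 * y i ^ 2) := by
    rw [← Real.exp_sum, ← Finset.mul_sum, neg_one_mul]
    simp only [dotProduct, sq]
  have hint : Integrable fun y : κ → ℝ => ∏ i, Real.exp (-1 * y i ^ 2) :=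
    .fintype_prod fun _ => integrable_exp_neg_mul_sq one_pos
  simp only [expNeg, hprod]
  rw [← ofReal_integral_eq_lintegral_ofReal hint (.of_forall fun y => by positivity),
    integral_fintype_prod_volume_eq_pow (fun t => Real.exp (-1 * t ^ 2)), integral_gaussian,
    div_one, ENNReal.ofReal_pow (by positivity)]

open scoped MatrixOrder in
lemma sq_lintegral_expNeg_quadraticForm [DecidableEq κ] {A : Matrix κ κ ℝ} (hA : A.PosDef) :
    (∫⁻ s, expNeg (s ⬝ᵥ A *ᵥ s)) ^ 2
      = (ENNReal.ofReal A.det)⁻¹ * ENNReal.ofReal Real.pi ^ Fintype.card κ := by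
  obtain ⟨B, rfl⟩ := CStarAlgebra.nonneg_iff_eq_star_mul_self.1 hA.posSemidef.nonneg
  rw [Matrix.star_eq_conjTranspose, Matrix.conjTranspose_eq_transpose_of_trivial] at hA ⊢
  have hdet : (Bᵀ * B).det = B.det ^ 2 := by rw [Matrix.det_mul, Matrix.det_transpose, sq]
  have hB : B.det ≠ 0 := fun h => hA.det_pos.ne' (by rw [hdet, h, zero_pow two_ne_zero])
  have hform (s : κ → ℝ) : s ⬝ᵥ (Bᵀ * B) *ᵥ s = B.toLin' s ⬝ᵥ B.toLin' s := by
    rw [← Matrix.mulVec_mulVec, Matrix.dotProduct_mulVec, Matrix.vecMul_transpose,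
      Matrix.toLin'_apply]
  have hB_meas : Measurable B.toLin' := (LinearMap.continuous_of_finiteDimensional _).measurable
  simp only [hform]
  rw [← lintegral_map (f := fun y : κ → ℝ => expNeg (y ⬝ᵥ y)) (by fun_prop) hB_meas,
    Real.map_matrix_volume_pi_eq_smul_volume_pi hB, lintegral_smul_measure, smul_eq_mul,
    lintegral_expNeg_dotProduct_self, mul_pow, ← ENNReal.ofReal_pow (abs_nonneg _), sq_abs,
    pow_right_comm, ← ENNReal.ofReal_pow (Real.sqrt_nonneg _), Real.sq_sqrt Real.pi_pos.le, hdet,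
    inv_pow, ENNReal.ofReal_inv_of_pos (by positivity)]

lemma inv_det_le_sq_lintegral_expNeg [DecidableEq κ] {A : Matrix κ κ ℝ} (hA : A.PosSemidef) :
    (ENNReal.ofReal A.det)⁻¹ ≤ (∫⁻ s, expNeg (s ⬝ᵥ A *ᵥ s)) ^ 2 := by
  have hreg (ε : ℝ) (hε : 0 < ε) : (ENNReal.ofReal (A + ε • (1 : Matrix κ κ ℝ)).det)⁻¹
      ≤ (∫⁻ s, expNeg (s ⬝ᵥ A *ᵥ s)) ^ 2 := by
    have hpi : 1 ≤ ENNReal.ofReal Real.pi ^ Fintype.card κ :=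
      one_le_pow₀ (ENNReal.one_le_ofReal.2 (by linarith [Real.pi_gt_three]))
    refine (le_mul_of_one_le_right' hpi).trans ?_
    rw [← sq_lintegral_expNeg_quadraticForm (.posSemidef_add hA (Matrix.PosDef.one.smul hε))]
    gcongr with s
    refine antitone_expNeg ?_
    rw [Matrix.add_mulVec, dotProduct_add, Matrix.smul_mulVec, Matrix.one_mulVec, dotProduct_smul]
    exact le_add_of_nonneg_right (mul_nonneg hε.le (dotProduct_self_nonneg s))
  have hcont : Continuous fun ε : ℝ =>
      (ENNReal.ofReal (A + ε • (1 : Matrix κ κ ℝ)).det)⁻¹ :=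
    continuous_inv.comp (ENNReal.continuous_ofReal.comp (Continuous.matrix_det (by fun_prop)))
  have hlim := (hcont.tendsto 0).mono_left (nhdsWithin_le_nhds (s := Set.Ioi 0))
  rw [zero_smul, add_zero] at hlim
  exact le_of_tendsto hlim (eventually_mem_nhdsWithin.mono hreg)

end GaussianIntegral

section WeightedJensen

variable {X S : Type*} [MeasurableSpace X] [MeasurableSpace S]

lemma lintegral_lintegral_pow_succ_le (μ : Measure X) [SFinite μ] (ν : Measure S) [SFinite ν]
    {f : X → S → ℝ≥0∞} (hf : Measurable (Function.uncurry f)) (hf_le : ∀ x s, f x s ≤ 1)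
    {g : S → ℝ≥0∞} (hg : Measurable g) (hg_zero : ∀ s, g s ≠ 0) (hg_top : ∀ s, g s ≠ ⊤)
    (hg_int : ∫⁻ s, g s ∂ν ≠ ⊤) {n : ℕ} {D : ℝ≥0∞}
    (h : ∀ s, ∫⁻ x, f x s ∂μ ≤ D * g s ^ (n + 1)) :
    ∫⁻ x, (∫⁻ s, f x s ∂ν) ^ (n + 1) ∂μ ≤ (∫⁻ s, g s ∂ν) ^ (n + 1) * D := by
  set ρ := ν.withDensity g
  have : IsFiniteMeasure ρ := isFiniteMeasure_withDensity hg_int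
  have hρ : ρ Set.univ = ∫⁻ s, g s ∂ν := by simp [ρ]
  have hfx (x : X) : Measurable (f x) := hf.of_uncurry_left
  have hfg : Measurable fun p : X × S => (f p.1 p.2 / g p.2) ^ (n + 1) :=
    (hf.div (hg.comp measurable_snd)).pow_const _
  have hdensity (x : X) : ∫⁻ s, f x s ∂ν = ∫⁻ s, f x s / g s ∂ρ := by
    refine .trans (lintegral_congr fun s => ?_)
      (lintegral_withDensity_eq_lintegral_mul _ hg ((hfx x).div hg)).symm
    exact (ENNReal.mul_div_cancel (hg_zero s) (hg_top s)).symm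
  have hweight (s : S) : ∫⁻ x, (f x s / g s) ^ (n + 1) ∂μ ≤ D := calc
    _ ≤ ∫⁻ x, f x s * (g s ^ (n + 1))⁻¹ ∂μ := lintegral_mono fun x => by
        rw [div_eq_mul_inv, mul_pow, ENNReal.inv_pow]
        gcongr
        exact pow_le_of_le_one zero_le (hf_le x s) n.succ_ne_zero
    _ = (∫⁻ x, f x s ∂μ) / g s ^ (n + 1) := lintegral_mul_const _ hf.of_uncurry_right
    _ ≤ D := ENNReal.div_le_of_le_mul (h s)
  calc ∫⁻ x, (∫⁻ s, f x s ∂ν) ^ (n + 1) ∂μ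
      ≤ ∫⁻ x, ρ Set.univ ^ n * ∫⁻ s, (f x s / g s) ^ (n + 1) ∂ρ ∂μ :=
        lintegral_mono fun x => by
          rw [hdensity]
          exact lintegral_pow_succ_le ρ ((hfx x).div hg).aemeasurable n
    _ = ρ Set.univ ^ n * ∫⁻ s, ∫⁻ x, (f x s / g s) ^ (n + 1) ∂μ ∂ρ := by
        rw [lintegral_const_mul _ hfg.lintegral_prod_right',
          lintegral_lintegral_swap hfg.aemeasurable]
    _ ≤ ρ Set.univ ^ n * ∫⁻ _, D ∂ρ := by gcongr with s; exact hweight s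
    _ = (∫⁻ s, g s ∂ν) ^ (n + 1) * D := by rw [lintegral_const, hρ]; ring

variable {κ : Type*} [Fintype κ]

lemma lintegral_inv_one_add_enorm_pow_ne_top :
    ∫⁻ s : κ → ℝ, ((1 + ‖s‖ₑ) ^ (Fintype.card κ + 1))⁻¹ ≠ ⊤ := by
  have h := finite_integral_one_add_norm (E := κ → ℝ) (μ := volume)
    (r := (Fintype.card κ + 1 : ℕ)) (by simp)
  refine ((lintegral_congr fun s => ?_).trans_lt h).ne
  rw [Real.rpow_neg (by positivity), Real.rpow_natCast, ENNReal.ofReal_inv_of_pos (by positivity),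
    ENNReal.ofReal_pow (by positivity), ENNReal.ofReal_add zero_le_one (norm_nonneg s),
    ENNReal.ofReal_one, ofReal_norm]

lemma one_add_enorm_le (s : κ → ℝ) : 1 + ‖s‖ₑ ≤ 2 * max 1 (ENNReal.ofReal (s ⬝ᵥ s)) := by
  have hnorm : ‖s‖ ≤ max 1 (s ⬝ᵥ s) := by
    refine (pi_norm_le_iff_of_nonneg (by positivity)).2 fun i => ?_
    have hi : s i * s i ≤ s ⬝ᵥ s :=
      Finset.single_le_sum (f := fun j => s j * s j) (fun j _ => mul_self_nonneg _)
        (Finset.mem_univ i)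
    rcases le_total ‖s i‖ 1 with h | h
    · exact le_max_of_le_left h
    · refine le_max_of_le_right (le_trans ?_ hi)
      rw [Real.norm_eq_abs] at h ⊢
      nlinarith [abs_mul_abs_self (s i)]
  set b := max 1 (ENNReal.ofReal (s ⬝ᵥ s))
  have hb : ‖s‖ₑ ≤ b := by
    simpa only [ofReal_norm, ENNReal.ofReal_max, ENNReal.ofReal_one] using
      ENNReal.ofReal_le_ofReal hnorm
  exact (add_le_add (le_max_left _ _) hb).trans_eq (two_mul b).symm

lemma le_mul_inv_one_add_enorm_pow {s : κ → ℝ} {a C : ℝ≥0∞} {p : ℕ} (ha : a ≤ 1)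
    (h : ENNReal.ofReal (s ⬝ᵥ s) ^ p * a ≤ C) :
    a ≤ 2 ^ p * (1 + C) * ((1 + ‖s‖ₑ) ^ p)⁻¹ := by
  rw [← div_eq_mul_inv, ENNReal.le_div_iff_mul_le (.inl (by simp)) (.inl (by simp)), mul_comm]
  set b := max 1 (ENNReal.ofReal (s ⬝ᵥ s))
  have hb : b ^ p * a ≤ 1 + C := by
    rcases max_choice 1 (ENNReal.ofReal (s ⬝ᵥ s)) with hmax | hmax <;> rw [show b = _ from hmax]
    · simpa using le_add_right ha
    · exact le_add_left h
  calc (1 + ‖s‖ₑ) ^ p * a ≤ (2 * b) ^ p * a := by gcongr; exact one_add_enorm_le s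
    _ = 2 ^ p * (b ^ p * a) := by rw [mul_pow, mul_assoc]
    _ ≤ 2 ^ p * (1 + C) := by gcongr

end WeightedJensen

variable {K d : ℕ} (P : Fin d → MvPolynomial (Fin K) ℝ)

lemma malMatrix_eq_transpose_mul (x : Fin K → ℝ) :
    malMatrix P x
      = (Matrix.of fun i => polyGrad x (P i)) * (Matrix.of fun i => polyGrad x (P i))ᵀ := by
  ext i j
  simp [malMatrix, Matrix.mul_apply, polyGrad_apply]

lemma posSemidef_malMatrix (x : Fin K → ℝ) : (malMatrix P x).PosSemidef := by
  rw [malMatrix_eq_transpose_mul, ← Matrix.conjTranspose_eq_transpose_of_trivial]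
  exact Matrix.posSemidef_self_mul_conjTranspose _

lemma dotProduct_malMatrix_mulVec (x : Fin K → ℝ) (s : Fin d → ℝ) :
    s ⬝ᵥ malMatrix P x *ᵥ s = sqField (Fintype.linearCombination ℝ P s) x := by
  have hgrad : polyGrad x (Fintype.linearCombination ℝ P s)
      = s ᵥ* Matrix.of fun i => polyGrad x (P i) := by
    ext k
    simp [Fintype.linearCombination_apply, Matrix.vecMul, dotProduct]
  rw [sqField_eq_dotProduct, hgrad, malMatrix_eq_transpose_mul, ← Matrix.mulVec_mulVec,
    Matrix.mulVec_transpose, Matrix.dotProduct_mulVec]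

lemma continuous_malMatrix : Continuous (malMatrix P) :=
  continuous_matrix fun _ _ => by
    simp only [malMatrix, Matrix.of_apply]
    exact continuous_finsetSum _ fun k _ => (continuous_eval _).mul (continuous_eval _)

variable {P}

theorem lintegral_inv_det_malMatrix_pow_le {q : ℕ} (hq : 1 ≤ q) {C : ℝ≥0∞}
    (h : ∀ s, ENNReal.ofReal (s ⬝ᵥ s) ^ ((d + 1) * (2 * q)) *
      gradLaplace 1 (Fintype.linearCombination ℝ P s) ≤ C) :
    ∫⁻ x, (ENNReal.ofReal (malMatrix P x).det ^ q)⁻¹ ∂gaussPi (Fin K)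
      ≤ (∫⁻ s : Fin d → ℝ, ((1 + ‖s‖ₑ) ^ (d + 1))⁻¹) ^ (2 * q)
        * (2 ^ ((d + 1) * (2 * q)) * (1 + C)) := by
  have hdet (x : Fin K → ℝ) : (ENNReal.ofReal (malMatrix P x).det ^ q)⁻¹
      ≤ (∫⁻ s, expNeg (s ⬝ᵥ malMatrix P x *ᵥ s)) ^ (2 * q) := by
    rw [ENNReal.inv_pow, pow_mul]
    gcongr
    exact inv_det_le_sq_lintegral_expNeg (posSemidef_malMatrix P x)
  have hmeas : Measurable fun p : (Fin K → ℝ) × (Fin d → ℝ) =>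
      expNeg (p.2 ⬝ᵥ malMatrix P p.1 *ᵥ p.2) :=
    measurable_expNeg.comp (continuous_snd.dotProduct
      (((continuous_malMatrix P).comp continuous_fst).matrix_mulVec continuous_snd)).measurable
  have hform (s : Fin d → ℝ) : ∫⁻ x, expNeg (s ⬝ᵥ malMatrix P x *ᵥ s) ∂gaussPi (Fin K)
      = gradLaplace 1 (Fintype.linearCombination ℝ P s) := by
    simp only [dotProduct_malMatrix_mulVec, gradLaplace, one_mul]
  refine (lintegral_mono hdet).trans ?_
  obtain ⟨n, hn⟩ := Nat.exists_eq_add_one.2 (show 0 < 2 * q by lia)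
  rw [hn] at h ⊢
  refine lintegral_lintegral_pow_succ_le _ _ hmeas (fun x s => ?_) (by fun_prop) (by simp)
    (by simp) ?_ fun s => ?_
  · exact expNeg_le_one (dotProduct_malMatrix_mulVec P x s ▸ sqField_nonneg _ _)
  · simpa using lintegral_inv_one_add_enorm_pow_ne_top (κ := Fin d)
  · rw [hform, ← ENNReal.inv_pow, ← pow_mul]
    exact le_mul_inv_one_add_enorm_pow (gradLaplace_le_one zero_le_one _) (h s)

end MalliavinMatrix

/-- Vector version: negative moments of the determinant of the Malliavin matrix
are eventually bounded along normal convergence on Wiener chaoses. -/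
theorem negative_moments_of_chaos_clt_vector (d : ℕ) (m : Fin d → ℕ) (K : ℕ → ℕ)
    (P : (n : ℕ) → Fin d → MvPolynomial (Fin (K n)) ℝ)
    (hchaos : ∀ n i, P n i ∈ chaos (K n) (m i))
    (hlaw : TendstoInLaw
      (fun n => Measure.map (fun x i => eval x (P n i)) (gaussPi (Fin (K n))))
      (gaussPi (Fin d))) :
    ∀ q : ℕ, 1 ≤ q → ∃ (N : ℕ) (C : ℝ), 0 < C ∧ ∀ n ≥ N,
      ∫⁻ x, (ENNReal.ofReal ((malMatrix (P n) x).det) ^ q)⁻¹ ∂gaussPi (Fin (K n))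
        ≤ ENNReal.ofReal C := by
  intro q hq
  obtain ⟨C, hC⟩ :=
    exists_eventually_pow_mul_gradLaplace_le hchaos hlaw (∑ i, m i) ((d + 1) * (2 * q))
  obtain ⟨N, hN⟩ := eventually_atTop.1 hC
  set B := (∫⁻ s : Fin d → ℝ, ((1 + ‖s‖ₑ) ^ (d + 1))⁻¹) ^ (2 * q)
    * (2 ^ ((d + 1) * (2 * q)) * (1 + (C : ℝ≥0∞)))
  have hB : B ≠ ⊤ := by
    have hweight := lintegral_inv_one_add_enorm_pow_ne_top (κ := Fin d)
    rw [Fintype.card_fin] at hweight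
    finiteness
  refine ⟨N, B.toReal + 1, by positivity, fun n hn => ?_⟩
  calc ∫⁻ x, (ENNReal.ofReal ((malMatrix (P n) x).det) ^ q)⁻¹ ∂gaussPi (Fin (K n))
      ≤ B := lintegral_inv_det_malMatrix_pow_le hq fun s => hN n hn s fun i hi =>
        absurd hi (Finset.single_le_sum (f := m) (by simp) (Finset.mem_univ i)).not_gt
    _ = ENNReal.ofReal B.toReal := (ENNReal.ofReal_toReal hB).symm
    _ ≤ ENNReal.ofReal (B.toReal + 1) := ENNReal.ofReal_le_ofReal (by linarith)
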